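/- arXiv:1208.4936 — 3 statements merged into one kernel-verified Lean document; each statement's English description precedes it below -/
import Mathlib

section
/- Let 1 < p < ∞ and let f ∈ L^p([0,1]²) satisfy J_p(f) < ∞ and I_p(f) < ∞. Then f is equal almost everywhere to a continuous function, and there exists an absolute constant A > 0 (independent of p and f) such that ‖f‖_∞ ≤ A[‖f‖_p + (1/(p·p'))·J_p(f) + (1/(p·p'))²·I_p(f)]. -/
open MeasureTheory Filter Set
open scoped ENNReal

noncomputable section

/-- A function of two real variables that is 1-periodic in each variable. -/
def BiPeriodic (f : ℝ → ℝ → ℝ) : Prop :=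
  (∀ x y, f (x + 1) y = f x y) ∧ (∀ x y, f x (y + 1) = f x y)

/-- A 1-periodic function of one real variable. -/
def Periodic1 (g : ℝ → ℝ) : Prop := ∀ x, g (x + 1) = g x

/-- The `L^p` norm of a function over `[0,1]^2` (as a value in `[0,∞]`). -/
noncomputable def lpNorm2 (p : ℝ) (f : ℝ → ℝ → ℝ) : ℝ≥0∞ :=
  (∫⁻ x in Set.Icc (0:ℝ) 1, ∫⁻ y in Set.Icc (0:ℝ) 1,
      ENNReal.ofReal (|f x y| ^ p)) ^ (1 / p)

/-- The `L^p` norm of a function over `[0,1]` (as a value in `[0,∞]`). -/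
noncomputable def lpNorm1 (p : ℝ) (g : ℝ → ℝ) : ℝ≥0∞ :=
  (∫⁻ x in Set.Icc (0:ℝ) 1, ENNReal.ofReal (|g x| ^ p)) ^ (1 / p)

/-- Membership in `L^p([0,1]^2)`: measurable, 1-periodic in each variable,
finite `L^p` norm. -/
def MemLp2 (p : ℝ) (f : ℝ → ℝ → ℝ) : Prop :=
  Measurable (Function.uncurry f) ∧ BiPeriodic f ∧ lpNorm2 p f < ⊤

/-- Membership in `L^p([0,1])` for 1-periodic functions of one variable. -/
def MemLp1 (p : ℝ) (g : ℝ → ℝ) : Prop :=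
  Measurable g ∧ Periodic1 g ∧ lpNorm1 p g < ⊤

/-- The (total) `L^p` modulus of continuity `ω(f;δ)_p` of a bivariate function. -/
noncomputable def modulus2 (p : ℝ) (f : ℝ → ℝ → ℝ) (δ : ℝ) : ℝ≥0∞ :=
  ⨆ (h : ℝ × ℝ) (_ : Real.sqrt (h.1 ^ 2 + h.2 ^ 2) ≤ δ),
    lpNorm2 p (fun x y => f (x + h.1) (y + h.2) - f x y)

/-- The `L^p` modulus of continuity `ω(g;δ)_p` of a univariate function. -/
noncomputable def modulus1 (p : ℝ) (g : ℝ → ℝ) (δ : ℝ) : ℝ≥0∞ :=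
  ⨆ (h : ℝ) (_ : h ∈ Set.Icc 0 δ), lpNorm1 p (fun x => g (x + h) - g x)

/-- The mixed `L^p` modulus of continuity `ω(f;u,v)_p`. -/
noncomputable def mixedModulus (p : ℝ) (f : ℝ → ℝ → ℝ) (u v : ℝ) : ℝ≥0∞ :=
  ⨆ (s : ℝ) (_ : s ∈ Set.Icc 0 u) (t : ℝ) (_ : t ∈ Set.Icc 0 v),
    lpNorm2 p (fun x y => f (x + s) (y + t) - f (x + s) y - f x (y + t) + f x y)

/-- `J_p(f) = ∫₀¹ t^{-1/p} ω(f;t)_p dt/t`. -/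
noncomputable def Jp (p : ℝ) (f : ℝ → ℝ → ℝ) : ℝ≥0∞ :=
  ∫⁻ t in Set.Ioc (0:ℝ) 1, ENNReal.ofReal (t ^ (-(1/p)) / t) * modulus2 p f t

/-- `K_p(f) = ∫₀¹ t^{-1/p} [ω(f;t,1)_p + ω(f;1,t)_p] dt/t`. -/
noncomputable def Kp (p : ℝ) (f : ℝ → ℝ → ℝ) : ℝ≥0∞ :=
  ∫⁻ t in Set.Ioc (0:ℝ) 1,
    ENNReal.ofReal (t ^ (-(1/p)) / t) * (mixedModulus p f t 1 + mixedModulus p f 1 t)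

/-- `I_p(f) = ∫₀¹∫₀¹ (uv)^{-1/p} ω(f;u,v)_p (du/u)(dv/v)`. -/
noncomputable def Ip (p : ℝ) (f : ℝ → ℝ → ℝ) : ℝ≥0∞ :=
  ∫⁻ u in Set.Ioc (0:ℝ) 1, ∫⁻ v in Set.Ioc (0:ℝ) 1,
    ENNReal.ofReal ((u * v) ^ (-(1/p)) / (u * v)) * mixedModulus p f u v

/-- The essential supremum norm of `f` over `[0,1]^2`. -/
noncomputable def supNorm2 (f : ℝ → ℝ → ℝ) : ℝ≥0∞ :=
  essSup (fun z : ℝ × ℝ => ENNReal.ofReal |f z.1 z.2|)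
    (volume.restrict ((Set.Icc (0:ℝ) 1) ×ˢ (Set.Icc (0:ℝ) 1)))

/-- The Wiener `p`-variation of a 1-periodic function `g`, as a value in `[0,∞]`:
the supremum over partitions `x₀ < x₁ < ... < xₙ = x₀ + 1` of
`(∑ |g(x_{k+1}) - g(x_k)|^p)^{1/p}`. -/
noncomputable def vp (p : ℝ) (g : ℝ → ℝ) : ℝ≥0∞ :=
  ⨆ (n : ℕ) (x : ℕ → ℝ) (_ : ∀ i < n, x i < x (i + 1)) (_ : x n = x 0 + 1),
    ENNReal.ofReal ((∑ k ∈ Finset.range n, |g (x (k + 1)) - g (x k)| ^ p) ^ (1 / p))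

/-- The Hardy–Vitali type total `p`-variation of a bivariate function,
as a value in `[0,∞]`: the supremum over nets of
`(∑∑ |Δf(x_i,y_j)|^p)^{1/p}`. -/
noncomputable def vp2 (p : ℝ) (f : ℝ → ℝ → ℝ) : ℝ≥0∞ :=
  ⨆ (m : ℕ) (n : ℕ) (x : ℕ → ℝ) (y : ℕ → ℝ)
    (_ : ∀ i < m, x i < x (i + 1)) (_ : x m = x 0 + 1)
    (_ : ∀ j < n, y j < y (j + 1)) (_ : y n = y 0 + 1),
    ENNReal.ofReal ((∑ i ∈ Finset.range m, ∑ j ∈ Finset.range n,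
      |f (x (i + 1)) (y (j + 1)) - f (x (i + 1)) (y j)
        - f (x i) (y (j + 1)) + f (x i) (y j)| ^ p) ^ (1 / p))

/-- Membership in the Hardy class `H_p^{(2)}`: finite Vitali `p`-variation and
all linear sections of bounded `p`-variation. -/
def MemHp2 (p : ℝ) (f : ℝ → ℝ → ℝ) : Prop :=
  vp2 p f < ⊤ ∧ (∀ x, vp p (fun y => f x y) < ⊤) ∧ (∀ y, vp p (fun x => f x y) < ⊤)

/-- Membership in the mixed norm class `V_p[V_p]`: all sections have bounded
`p`-variation and the functions `x ↦ v_p(f_x)`, `y ↦ v_p(f_y)` are themselves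
of bounded `p`-variation. -/
def MemVpVp (p : ℝ) (f : ℝ → ℝ → ℝ) : Prop :=
  (∀ x, vp p (fun y => f x y) < ⊤) ∧ (∀ y, vp p (fun x => f x y) < ⊤) ∧
  vp p (fun x => (vp p (fun y => f x y)).toReal) < ⊤ ∧
  vp p (fun y => (vp p (fun x => f x y)).toReal) < ⊤

/-- `W_p(f) = v_p(φ_p[f]) + v_p(ψ_p[f])`, where `φ_p[f](x) = v_p(f_x)` and
`ψ_p[f](y) = v_p(f_y)`. -/
noncomputable def Wp (p : ℝ) (f : ℝ → ℝ → ℝ) : ℝ≥0∞ :=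
  vp p (fun x => (vp p (fun y => f x y)).toReal)
    + vp p (fun y => (vp p (fun x => f x y)).toReal)

/-- Membership in `L^p_0([0,1]^2)`: membership in `L^p([0,1]^2)` together with
vanishing of the linear mean values `∫₀¹ f(x,t) dt` and `∫₀¹ f(t,y) dt` for a.e.
`x` resp. `y`. -/
def MemLp20 (p : ℝ) (f : ℝ → ℝ → ℝ) : Prop :=
  MemLp2 p f ∧ (∀ᵐ x : ℝ ∂volume, ∫ t in (0:ℝ)..1, f x t = 0) ∧
    (∀ᵐ y : ℝ ∂volume, ∫ t in (0:ℝ)..1, f t y = 0)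

/-- `T` is a trigonometric polynomial of degree `(n,m)` in two variables. -/
def IsTrigPoly2 (n m : ℕ) (T : ℝ → ℝ → ℝ) : Prop :=
  ∃ a b c d : ℕ → ℕ → ℝ, ∀ x y : ℝ,
    T x y = ∑ j ∈ Finset.range (n + 1), ∑ k ∈ Finset.range (m + 1),
      (a j k * Real.cos (2 * Real.pi * j * x) * Real.cos (2 * Real.pi * k * y)
        + b j k * Real.cos (2 * Real.pi * j * x) * Real.sin (2 * Real.pi * k * y)
        + c j k * Real.sin (2 * Real.pi * j * x) * Real.cos (2 * Real.pi * k * y)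
        + d j k * Real.sin (2 * Real.pi * j * x) * Real.sin (2 * Real.pi * k * y))

end

section Helpers

lemma aux_lint_shift (g : ℝ → ℝ≥0∞) (hg : ∀ x, g (x + 1) = g x) (a : ℝ) :
    ∫⁻ x in Icc (0:ℝ) 1, g (a + x) = ∫⁻ x in Icc (0:ℝ) 1, g x := by
  have h0 : ∀ b : ℝ, ∫⁻ x in Ioc b (b+1), g x = ∫⁻ x in Ioc (0:ℝ) (0+1), g x := by
    intro b
    refine (isAddFundamentalDomain_Ioc (T := (1:ℝ)) one_pos b volume).setLIntegral_eq
      (isAddFundamentalDomain_Ioc (T := (1:ℝ)) one_pos 0 volume) g ?_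
    rintro ⟨c, hc⟩ x
    obtain ⟨n, rfl⟩ := AddSubgroup.mem_zmultiples_iff.1 hc
    have hp : Function.Periodic g 1 := hg
    have := hp.zsmul n x
    simpa [AddSubgroup.vadd_def, add_comm] using this
  have h1 : ∫⁻ x in Icc (0:ℝ) 1, g (a + x) = ∫⁻ x in Ioc a (a+1), g x := by
    rw [setLIntegral_congr (Ioc_ae_eq_Icc (a := (0:ℝ)) (b := 1)).symm]
    have := (measurePreserving_add_left (volume : Measure ℝ) a).setLIntegral_comp_preimage_emb
      (measurableEmbedding_addLeft a) g (Ioc a (a+1))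
    rw [← this]
    simp
  rw [h1, h0, setLIntegral_congr (Ioc_ae_eq_Icc (a := (0:ℝ)) (b := 1)).symm]
  simp

lemma aux_norm_shift (p : ℝ) (F : ℝ → ℝ → ℝ) (hF : BiPeriodic F) (a b : ℝ) :
    lpNorm2 p (fun x y => F (a + x) (b + y)) = lpNorm2 p F := by
  unfold lpNorm2
  congr 1
  have : ∀ x, ∫⁻ y in Icc (0:ℝ) 1, ENNReal.ofReal (|F (a + x) (b + y)| ^ p)
      = ∫⁻ y in Icc (0:ℝ) 1, ENNReal.ofReal (|F (a + x) y| ^ p) := fun x =>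
    aux_lint_shift (fun y => ENNReal.ofReal (|F (a + x) y| ^ p)) (fun y => by simp [hF.2]) b
  simp_rw [this]
  exact aux_lint_shift (fun x => ∫⁻ y in Icc (0:ℝ) 1, ENNReal.ofReal (|F x y| ^ p))
    (fun y => by simp [hF.1]) a

/-- unit square measure -/
noncomputable def sqm : Measure (ℝ × ℝ) := volume.restrict (Icc (0:ℝ) 1 ×ˢ Icc (0:ℝ) 1)

lemma aux_norm_eq (p : ℝ) (hp : 1 < p) (F : ℝ → ℝ → ℝ) (hF : Measurable (Function.uncurry F)) :
    lpNorm2 p F = eLpNorm (Function.uncurry F) (ENNReal.ofReal p) sqm := by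
  have hp0 : 0 < p := by linarith
  rw [eLpNorm_eq_lintegral_rpow_enorm_toReal (by simpa using hp0) (by simp),
    ENNReal.toReal_ofReal hp0.le]
  unfold lpNorm2 sqm
  congr 1
  rw [Measure.volume_eq_prod, ← Measure.prod_restrict, lintegral_prod _ (by fun_prop)]
  refine lintegral_congr fun x => lintegral_congr fun y => ?_
  rw [← ENNReal.ofReal_rpow_of_nonneg (abs_nonneg _) hp0.le]
  simp [Function.uncurry, Real.enorm_eq_ofReal_abs]

lemma aux_norm_add (p : ℝ) (hp : 1 < p) (F G : ℝ → ℝ → ℝ) (hF : Measurable (Function.uncurry F))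
    (hG : Measurable (Function.uncurry G)) :
    lpNorm2 p (fun x y => F x y + G x y) ≤ lpNorm2 p F + lpNorm2 p G := by
  rw [aux_norm_eq p hp F hF, aux_norm_eq p hp G hG, aux_norm_eq p hp _ (by
    exact hF.add hG)]
  exact eLpNorm_add_le hF.aestronglyMeasurable hG.aestronglyMeasurable (by
    simpa using hp.le)

lemma aux_norm_neg (p : ℝ) (F : ℝ → ℝ → ℝ) :
    lpNorm2 p (fun x y => - F x y) = lpNorm2 p F := by
  simp [lpNorm2]

/-- shift difference -/
def Dsh (a b : ℝ) (F : ℝ → ℝ → ℝ) : ℝ → ℝ → ℝ := fun x y => F (x + a) (y + b) - F x y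

lemma meas_shift {F : ℝ → ℝ → ℝ} (hF : Measurable (Function.uncurry F)) (a b : ℝ) :
    Measurable (Function.uncurry (fun x y => F (x + a) (y + b))) :=
  hF.comp (g := Function.uncurry F) (f := fun z : ℝ × ℝ => (z.1 + a, z.2 + b)) (by fun_prop)

lemma meas_shift' {F : ℝ → ℝ → ℝ} (hF : Measurable (Function.uncurry F)) (a b : ℝ) :
    Measurable (Function.uncurry (fun x y => F (a + x) (b + y))) :=
  hF.comp (g := Function.uncurry F) (f := fun z : ℝ × ℝ => (a + z.1, b + z.2)) (by fun_prop)

lemma Dsh_meas {F : ℝ → ℝ → ℝ} (hF : Measurable (Function.uncurry F)) (a b : ℝ) :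
    Measurable (Function.uncurry (Dsh a b F)) := (meas_shift hF a b).sub hF

lemma shift_per {F : ℝ → ℝ → ℝ} (hF : BiPeriodic F) (a b : ℝ) :
    BiPeriodic (fun x y => F (x + a) (y + b)) := by
  refine ⟨fun x y => ?_, fun x y => ?_⟩
  · simp only [add_right_comm x 1 a, hF.1]
  · simp only [add_right_comm y 1 b, hF.2]

lemma Dsh_per {F : ℝ → ℝ → ℝ} (hF : BiPeriodic F) (a b : ℝ) : BiPeriodic (Dsh a b F) := by
  have := shift_per hF a b
  refine ⟨fun x y => ?_, fun x y => ?_⟩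
  · simp only [Dsh, this.1 x y, hF.1]
  · simp only [Dsh, this.2 x y, hF.2]

lemma aux_norm_shift2 (p : ℝ) (F : ℝ → ℝ → ℝ) (hF : BiPeriodic F) (a b : ℝ) :
    lpNorm2 p (fun x y => F (x + a) (y + b)) = lpNorm2 p F := by
  rw [← aux_norm_shift p F hF a b]; simp only [add_comm]

lemma Dsh_le (p : ℝ) (hp : 1 < p) (F : ℝ → ℝ → ℝ) (hF : Measurable (Function.uncurry F))
    (hP : BiPeriodic F) (a b : ℝ) : lpNorm2 p (Dsh a b F) ≤ 2 * lpNorm2 p F := by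
  have := aux_norm_add p hp _ (fun x y => - F x y) (meas_shift hF a b) hF.neg
  rw [aux_norm_neg, aux_norm_shift2 p F hP] at this
  rw [two_mul]
  have e : Dsh a b F = fun x y => F (x + a) (y + b) + - F x y := by
    funext x y; simp [Dsh, sub_eq_add_neg]
  rw [e]; exact this

lemma Dsh_nsmul (p : ℝ) (hp : 1 < p) (F : ℝ → ℝ → ℝ) (hF : Measurable (Function.uncurry F))
    (hP : BiPeriodic F) (a b : ℝ) (n : ℕ) :
    lpNorm2 p (Dsh (n * a) (n * b) F) ≤ n * lpNorm2 p (Dsh a b F) := by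
  induction n with
  | zero =>
    have : lpNorm2 p (fun _ _ => (0:ℝ)) = 0 := by
      rw [aux_norm_eq p hp _ (by exact measurable_const)]
      exact eLpNorm_zero
    have e : Dsh 0 0 F = fun _ _ => (0:ℝ) := by funext x y; simp [Dsh]
    simp [e, this]
  | succ n ih =>
    have h := aux_norm_add p hp (fun x y => Dsh a b F (x + n * a) (y + n * b))
      (Dsh (n * a) (n * b) F) (meas_shift (Dsh_meas hF a b) _ _) (Dsh_meas hF _ _)
    rw [aux_norm_shift2 p _ (Dsh_per hP a b)] at h
    have e : (fun x y => Dsh a b F (x + n * a) (y + n * b) + Dsh (n * a) (n * b) F x y)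
        = Dsh ((n+1 : ℕ) * a) ((n+1 : ℕ) * b) F := by
      funext x y
      simp only [Dsh]
      push_cast
      rw [show x + n * a + a = x + (n+1) * a by ring, show y + n * b + b = y + (n+1) * b by ring]
      ring
    rw [e] at h
    refine h.trans ?_
    push_cast
    rw [add_mul, one_mul, add_comm]
    gcongr

/-- mixed difference -/
def Mix (s t : ℝ) (f : ℝ → ℝ → ℝ) : ℝ → ℝ → ℝ :=
  fun x y => f (x + s) (y + t) - f (x + s) y - f x (y + t) + f x y

lemma Mix_eq1 (s t : ℝ) (f : ℝ → ℝ → ℝ) : Mix s t f = Dsh s 0 (Dsh 0 t f) := by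
  funext x y; simp only [Mix, Dsh, add_zero]; ring

lemma Mix_eq2 (s t : ℝ) (f : ℝ → ℝ → ℝ) : Mix s t f = Dsh 0 t (Dsh s 0 f) := by
  funext x y; simp only [Mix, Dsh, add_zero]; ring

/-- admissible moduli -/
def Adm (φ : ℝ → ℝ≥0∞) : Prop :=
  (∀ s t, 0 < s → s ≤ t → φ s ≤ φ t) ∧ ∀ n : ℕ, 0 < n → ∀ t, 0 < t → φ (n * t) ≤ n * φ t

lemma le_modulus2 (p : ℝ) (f : ℝ → ℝ → ℝ) (a b δ : ℝ) (h : Real.sqrt (a^2+b^2) ≤ δ) :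
    lpNorm2 p (Dsh a b f) ≤ modulus2 p f δ :=
  le_iSup₂_of_le (f := fun (h : ℝ × ℝ) (_ : Real.sqrt (h.1 ^ 2 + h.2 ^ 2) ≤ δ) =>
    lpNorm2 p (fun x y => f (x + h.1) (y + h.2) - f x y)) (a, b) h le_rfl

lemma le_mixed (p : ℝ) (f : ℝ → ℝ → ℝ) (s t u v : ℝ) (hs : 0 ≤ s) (hs' : s ≤ u) (ht : 0 ≤ t)
    (ht' : t ≤ v) : lpNorm2 p (Mix s t f) ≤ mixedModulus p f u v := by
  unfold mixedModulus
  exact le_iSup₂_of_le s ⟨hs, hs'⟩ (le_iSup₂_of_le t ⟨ht, ht'⟩ le_rfl)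

lemma mixed_le (p : ℝ) (f : ℝ → ℝ → ℝ) (u v : ℝ) (B : ℝ≥0∞)
    (h : ∀ s t, 0 ≤ s → s ≤ u → 0 ≤ t → t ≤ v → lpNorm2 p (Mix s t f) ≤ B) :
    mixedModulus p f u v ≤ B := by
  unfold mixedModulus
  exact iSup₂_le fun s hs => iSup₂_le fun t ht => h s t hs.1 hs.2 ht.1 ht.2

lemma modulus2_le (p : ℝ) (f : ℝ → ℝ → ℝ) (δ : ℝ) (B : ℝ≥0∞)
    (h : ∀ a b, Real.sqrt (a^2+b^2) ≤ δ → lpNorm2 p (Dsh a b f) ≤ B) :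
    modulus2 p f δ ≤ B := iSup₂_le fun z hz => h z.1 z.2 hz

variable {p : ℝ} {f : ℝ → ℝ → ℝ}

lemma adm_modulus2 (hp : 1 < p) (hF : Measurable (Function.uncurry f)) (hP : BiPeriodic f) :
    Adm (modulus2 p f) := by
  refine ⟨fun s t _ hst => modulus2_le _ _ _ _ fun a b h => le_modulus2 _ _ _ _ _ (h.trans hst),
    fun n hn t ht => modulus2_le _ _ _ _ fun a b h => ?_⟩
  have hn' : (0:ℝ) < n := by exact_mod_cast hn
  have := Dsh_nsmul p hp f hF hP (a / n) (b / n) n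
  rw [mul_div_cancel₀ _ hn'.ne', mul_div_cancel₀ _ hn'.ne'] at this
  refine this.trans ?_
  gcongr
  apply le_modulus2
  have : (a / n)^2 + (b / n)^2 = (a^2+b^2) / n^2 := by ring
  rw [this, Real.sqrt_div' _ (by positivity), Real.sqrt_sq hn'.le, div_le_iff₀ hn']
  linarith

lemma adm_mixed1 (hp : 1 < p) (hF : Measurable (Function.uncurry f)) (hP : BiPeriodic f) (v : ℝ) :
    Adm (fun u => mixedModulus p f u v) := by
  refine ⟨fun s t _ hst => mixed_le _ _ _ _ _ fun a b h1 h2 h3 h4 =>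
    le_mixed _ _ _ _ _ _ h1 (h2.trans hst) h3 h4,
    fun n hn t ht => mixed_le _ _ _ _ _ fun a b h1 h2 h3 h4 => ?_⟩
  have hn' : (0:ℝ) < n := by exact_mod_cast hn
  have := Dsh_nsmul p hp (Dsh 0 b f) (Dsh_meas hF _ _) (Dsh_per hP _ _) (a / n) 0 n
  rw [mul_div_cancel₀ _ hn'.ne', mul_zero, ← Mix_eq1, ← Mix_eq1] at this
  refine this.trans ?_
  gcongr
  apply le_mixed _ _ _ _ _ _ (by positivity) _ h3 h4
  rw [div_le_iff₀ hn']; linarith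

lemma adm_mixed2 (hp : 1 < p) (hF : Measurable (Function.uncurry f)) (hP : BiPeriodic f) (u : ℝ) :
    Adm (fun v => mixedModulus p f u v) := by
  refine ⟨fun s t _ hst => mixed_le _ _ _ _ _ fun a b h1 h2 h3 h4 =>
    le_mixed _ _ _ _ _ _ h1 h2 h3 (h4.trans hst),
    fun n hn t ht => mixed_le _ _ _ _ _ fun a b h1 h2 h3 h4 => ?_⟩
  have hn' : (0:ℝ) < n := by exact_mod_cast hn
  have := Dsh_nsmul p hp (Dsh a 0 f) (Dsh_meas hF _ _) (Dsh_per hP _ _) 0 (b / n) n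
  rw [mul_div_cancel₀ _ hn'.ne', mul_zero, ← Mix_eq2, ← Mix_eq2] at this
  refine this.trans ?_
  gcongr
  apply le_mixed _ _ _ _ _ _ h1 h2 (by positivity) _
  rw [div_le_iff₀ hn']; linarith

lemma mixed_le_mod1 (hp : 1 < p) (hF : Measurable (Function.uncurry f)) (hP : BiPeriodic f)
    (u v : ℝ) : mixedModulus p f u v ≤ 2 * modulus2 p f v := by
  refine mixed_le _ _ _ _ _ fun s t h1 h2 h3 h4 => ?_
  rw [Mix_eq1]
  refine (Dsh_le p hp _ (Dsh_meas hF _ _) (Dsh_per hP _ _) _ _).trans ?_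
  gcongr
  apply le_modulus2
  simpa [Real.sqrt_sq h3] using h4

lemma mixed_le_mod2 (hp : 1 < p) (hF : Measurable (Function.uncurry f)) (hP : BiPeriodic f)
    (u v : ℝ) : mixedModulus p f u v ≤ 2 * modulus2 p f u := by
  refine mixed_le _ _ _ _ _ fun s t h1 h2 h3 h4 => ?_
  rw [Mix_eq2]
  refine (Dsh_le p hp _ (Dsh_meas hF _ _) (Dsh_per hP _ _) _ _).trans ?_
  gcongr
  apply le_modulus2
  simpa [Real.sqrt_sq h1] using h2

lemma mod_le_norm (hp : 1 < p) (hF : Measurable (Function.uncurry f)) (hP : BiPeriodic f)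
    (u : ℝ) : modulus2 p f u ≤ 2 * lpNorm2 p f :=
  modulus2_le _ _ _ _ fun _ _ _ => Dsh_le p hp _ hF hP _ _

lemma exists_N (r : ℝ) (hr : 1 ≤ r) : ∃ N : ℕ, 2 ≤ N ∧ (2:ℝ) ≤ (N:ℝ) ^ (1/r) ∧ (N:ℝ) ^ (1/r) ≤ 4 := by
  have hr0 : 0 < r := by linarith
  have h2 : (2:ℝ) ≤ 2 ^ r := by
    simpa using Real.rpow_le_rpow_of_exponent_le (one_le_two (α := ℝ)) hr
  have hN : (2:ℝ)^r ≤ ⌈(2:ℝ)^r⌉₊ := Nat.le_ceil _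
  refine ⟨⌈(2:ℝ)^r⌉₊, by exact_mod_cast h2.trans hN, ?_, ?_⟩
  · calc (2:ℝ) = ((2:ℝ)^r)^(1/r) := by
          rw [← Real.rpow_mul (by norm_num), mul_one_div_cancel hr0.ne', Real.rpow_one]
      _ ≤ _ := Real.rpow_le_rpow (by positivity) hN (by positivity)
  · have h3 : (⌈(2:ℝ)^r⌉₊:ℝ) ≤ 4 ^ r := by
      have h4 := (Nat.ceil_lt_add_one (a := (2:ℝ)^r) (by positivity)).le
      have h5 : (4:ℝ)^r = 2^r * 2^r := by
        rw [← Real.mul_rpow (by norm_num) (by norm_num)]; norm_num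
      rw [h5]; nlinarith
    calc _ ≤ ((4:ℝ)^r)^(1/r) := Real.rpow_le_rpow (by positivity) h3 (by positivity)
      _ = 4 := by rw [← Real.rpow_mul (by norm_num), mul_one_div_cancel hr0.ne', Real.rpow_one]

lemma lint_rpow (a b r : ℝ) (ha : 0 < a) (hab : a ≤ b) (hr : r ≠ -1) :
    ∫⁻ t in Ioc a b, ENNReal.ofReal (t ^ r) = ENNReal.ofReal ((b^(r+1) - a^(r+1))/(r+1)) := by
  have h0 : (0:ℝ) ∉ uIcc a b := by rw [uIcc_of_le hab]; intro h; linarith [h.1]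
  rw [← integral_rpow (Or.inr ⟨hr, h0⟩), intervalIntegral.integral_of_le hab,
    ofReal_integral_eq_lintegral_ofReal]
  · exact (intervalIntegrable_iff_integrableOn_Ioc_of_le hab).1
      (intervalIntegral.intervalIntegrable_rpow (Or.inr h0))
  · refine (ae_restrict_iff' measurableSet_Ioc).2 (ae_of_all _ fun t ht => ?_)
    exact Real.rpow_nonneg (ha.le.trans ht.1.le) _

lemma sum_pieces (N : ℕ) (hN : 2 ≤ N) (g : ℝ → ℝ≥0∞) :
    ∑' k : ℕ, ∫⁻ t in Ioc (((N:ℝ)^(k+1))⁻¹) (((N:ℝ)^k)⁻¹), g t ≤ ∫⁻ t in Ioc (0:ℝ) 1, g t := by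
  have hN1 : (1:ℝ) ≤ N := by exact_mod_cast (by omega : 1 ≤ N)
  have hN0 : (0:ℝ) < N := by linarith
  have hanti : Antitone (fun k : ℕ => ((N:ℝ)^k)⁻¹) := by
    intro a b hab
    simp only
    gcongr
  rw [← lintegral_iUnion (fun k => measurableSet_Ioc)]
  · apply lintegral_mono_set
    apply iUnion_subset
    intro k t ht
    refine ⟨lt_trans (by positivity) ht.1, ht.2.trans ?_⟩
    exact inv_le_one_of_one_le₀ (one_le_pow₀ hN1)
  · exact hanti.pairwise_disjoint_on_Ioc_succ

lemma adm_le {φ : ℝ → ℝ≥0∞} (hφ : Adm φ) (t T : ℝ) (ht : 0 < t) (htT : t ≤ T) :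
    ENNReal.ofReal (t / (2 * T)) * φ T ≤ φ t := by
  have hT : 0 < T := ht.trans_le htT
  set n := ⌈T / t⌉₊ with hn
  have h1 : T / t ≤ n := Nat.le_ceil _
  have h2 : (n:ℝ) ≤ T / t + 1 := (Nat.ceil_lt_add_one (by positivity)).le
  have h3 : 1 ≤ T / t := (one_le_div ht).2 htT
  have hn0 : 0 < n := by
    have : (0:ℝ) < n := by linarith
    exact_mod_cast this
  have h4 : φ T ≤ n * φ t := (hφ.1 T (n * t) hT ((div_le_iff₀ ht).1 h1)).trans (hφ.2 n hn0 t ht)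
  calc ENNReal.ofReal (t / (2 * T)) * φ T ≤ ENNReal.ofReal (t / (2 * T)) * (n * φ t) := by gcongr
    _ = ENNReal.ofReal (t / (2 * T) * n) * φ t := by
        rw [ENNReal.ofReal_mul (by positivity), ENNReal.ofReal_natCast, mul_assoc]
    _ ≤ 1 * φ t := by
        gcongr
        rw [ENNReal.ofReal_le_one]
        calc t / (2 * T) * n ≤ t / (2*T) * (2 * (T / t)) := by gcongr; linarith
          _ = 1 := by field_simp
    _ = φ t := one_mul _

/-- the weighted integral -/
noncomputable def WInt (p : ℝ) (φ : ℝ → ℝ≥0∞) : ℝ≥0∞ :=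
  ∫⁻ t in Set.Ioc (0:ℝ) 1, ENNReal.ofReal (t ^ (-(1/p)) / t) * φ t

lemma schemeA (hp : 2 ≤ p) : ∃ N : ℕ, 2 ≤ N ∧ 2 ≤ (N:ℝ)^(1/p) ∧ ∀ φ, Adm φ →
    ∑' k : ℕ, ENNReal.ofReal (((N:ℝ)^(1/p))^(k+1)) * φ (((N:ℝ)^k)⁻¹) ≤
      32 * φ 1 + 32 * ENNReal.ofReal (1 / (p * (p / (p - 1)))) * WInt p φ := by
  obtain ⟨N, hN, hX2, hX4⟩ := exists_N p (by linarith)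
  refine ⟨N, hN, hX2, fun φ hφ => ?_⟩
  have hN0 : (0:ℝ) < N := by exact_mod_cast (by omega : 0 < N)
  have hN1 : (1:ℝ) ≤ N := by exact_mod_cast (by omega : 1 ≤ N)
  set X := (N:ℝ)^(1/p) with hX
  have hp0 : 0 < p := by linarith
  have hp1 : 0 < p - 1 := by linarith
  have hpow : ∀ k : ℕ, (((N:ℝ)^k)⁻¹) ^ (-(1/p)) = X ^ k := by
    intro k
    rw [Real.inv_rpow (by positivity), Real.rpow_neg (by positivity), inv_inv, hX,
      ← Real.rpow_natCast, ← Real.rpow_natCast, ← Real.rpow_mul hN0.le, ← Real.rpow_mul hN0.le,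
      mul_comm]
  have hpiece : ∀ k : ℕ, ENNReal.ofReal (X^(k+1+1)) * φ (((N:ℝ)^(k+1))⁻¹) ≤
      32 * ENNReal.ofReal (1 / (p * (p / (p - 1)))) *
        ∫⁻ t in Ioc (((N:ℝ)^(k+1))⁻¹) (((N:ℝ)^k)⁻¹), ENNReal.ofReal (t ^ (-(1/p)) / t) * φ t := by
    intro k
    have hpos : 0 < ((N:ℝ)^(k+1))⁻¹ := by positivity
    have hle : ((N:ℝ)^(k+1))⁻¹ ≤ ((N:ℝ)^k)⁻¹ := by gcongr; omega
    have h1 : ∫⁻ t in Ioc (((N:ℝ)^(k+1))⁻¹) (((N:ℝ)^k)⁻¹),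
        ENNReal.ofReal (t ^ (-(1/p) - 1)) * φ (((N:ℝ)^(k+1))⁻¹) ≤
        ∫⁻ t in Ioc (((N:ℝ)^(k+1))⁻¹) (((N:ℝ)^k)⁻¹), ENNReal.ofReal (t ^ (-(1/p)) / t) * φ t := by
      refine setLIntegral_mono' measurableSet_Ioc fun t ht => ?_
      have ht0 : 0 < t := hpos.trans ht.1
      rw [Real.rpow_sub_one ht0.ne']
      gcongr
      exact hφ.1 _ _ hpos ht.1.le
    rw [lintegral_mul_const _ (by fun_prop), lint_rpow _ _ _ hpos hle (by
      have : 0 < 1/p := by positivity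
      linarith), sub_add_cancel, hpow, hpow] at h1
    refine le_trans ?_ (mul_le_mul_right h1 _)
    rw [← mul_assoc, show (32:ℝ≥0∞) = ENNReal.ofReal 32 by simp,
      ← ENNReal.ofReal_mul (by norm_num), ← ENNReal.ofReal_mul (by positivity)]
    gcongr
    have hXk : 0 < X ^ k := by positivity
    have e : 32 * (1 / (p * (p / (p-1)))) * ((X^k - X^(k+1)) / -(1/p)) =
        (32 * (1 - 1/p)) * (X^k * (X - 1)) := by
      rw [pow_succ]; field_simp; ring
    rw [e]
    have h5 : 1/p ≤ 1/2 := by gcongr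
    calc X^(k+1+1) = X^k * X^2 := by ring
      _ ≤ X^k * (16 * (X-1)) := by gcongr; nlinarith
      _ = 16 * (X^k * (X-1)) := by ring
      _ ≤ _ := by
        have : 0 ≤ X^k * (X-1) := mul_nonneg hXk.le (by linarith)
        gcongr; linarith
  rw [tsum_eq_zero_add' ENNReal.summable]
  refine add_le_add ?_ ?_
  · simp only [zero_add, pow_one, pow_zero, inv_one]
    refine mul_le_mul_left ?_ _
    rw [show (32:ℝ≥0∞) = ENNReal.ofReal 32 by simp]
    gcongr
    linarith
  · refine (ENNReal.tsum_le_tsum hpiece).trans ?_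
    rw [ENNReal.tsum_mul_left]
    gcongr
    exact sum_pieces N hN _

lemma schemeB (hp : 1 < p) (hp2 : p ≤ 2) : ∃ N : ℕ, 2 ≤ N ∧ 2 ≤ (N:ℝ)^(1-1/p) ∧ ∀ φ, Adm φ →
    ∑' k : ℕ, ENNReal.ofReal ((((N:ℝ)^(1-1/p))^k)⁻¹ * (N:ℝ)^(k+1)) * φ (((N:ℝ)^(k+1))⁻¹) ≤
      32 * φ 1 + 32 * ENNReal.ofReal (1 / (p * (p / (p - 1)))) * WInt p φ := by
  have hp0 : 0 < p := by linarith
  have hp1 : 0 < p - 1 := by linarith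
  obtain ⟨N, hN, hX2, hX4⟩ := exists_N (p/(p-1)) (by rw [le_div_iff₀ hp1]; linarith)
  have e1 : 1 / (p/(p-1)) = 1 - 1/p := by field_simp
  rw [e1] at hX2 hX4
  refine ⟨N, hN, hX2, fun φ hφ => ?_⟩
  have hN0 : (0:ℝ) < N := by exact_mod_cast (by omega : 0 < N)
  have hN1 : (1:ℝ) ≤ N := by exact_mod_cast (by omega : 1 ≤ N)
  set X := (N:ℝ)^(1-1/p) with hX
  have hpow : ∀ k : ℕ, (((N:ℝ)^k)⁻¹) ^ (1-1/p) = (X ^ k)⁻¹ := by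
    intro k
    rw [Real.inv_rpow (by positivity), hX,
      ← Real.rpow_natCast, ← Real.rpow_natCast, ← Real.rpow_mul hN0.le, ← Real.rpow_mul hN0.le,
      mul_comm]
  have hpiece : ∀ k : ℕ, ENNReal.ofReal ((X^k)⁻¹ * (N:ℝ)^(k+1)) * φ (((N:ℝ)^(k+1))⁻¹) ≤
      32 * ENNReal.ofReal (1 / (p * (p / (p - 1)))) *
        ∫⁻ t in Ioc (((N:ℝ)^(k+1+1))⁻¹) (((N:ℝ)^(k+1))⁻¹),
          ENNReal.ofReal (t ^ (-(1/p)) / t) * φ t := by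
    intro k
    have hpos : 0 < ((N:ℝ)^(k+1+1))⁻¹ := by positivity
    have hle : ((N:ℝ)^(k+1+1))⁻¹ ≤ ((N:ℝ)^(k+1))⁻¹ := by gcongr; omega
    have h1 : ∫⁻ t in Ioc (((N:ℝ)^(k+1+1))⁻¹) (((N:ℝ)^(k+1))⁻¹),
        ENNReal.ofReal (t ^ (-(1/p))) * (ENNReal.ofReal ((N:ℝ)^(k+1) / 2) * φ (((N:ℝ)^(k+1))⁻¹)) ≤
        ∫⁻ t in Ioc (((N:ℝ)^(k+1+1))⁻¹) (((N:ℝ)^(k+1))⁻¹),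
          ENNReal.ofReal (t ^ (-(1/p)) / t) * φ t := by
      refine setLIntegral_mono' measurableSet_Ioc fun t ht => ?_
      have ht0 : 0 < t := hpos.trans ht.1
      refine le_trans ?_ (mul_le_mul_right (adm_le hφ t _ ht0 ht.2) _)
      rw [← mul_assoc, ← mul_assoc, ← ENNReal.ofReal_mul (by positivity),
        ← ENNReal.ofReal_mul (by positivity)]
      refine mul_le_mul_left (ENNReal.ofReal_le_ofReal (le_of_eq ?_)) _
      field_simp
    have hne : -(1/p) ≠ -1 := by
      intro h
      have : 1/p = 1 := by linarith
      rw [div_eq_iff hp0.ne'] at this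
      linarith
    rw [lintegral_mul_const _ (by fun_prop), lint_rpow _ _ _ hpos hle hne,
      show -(1/p) + 1 = 1 - 1/p by ring, hpow, hpow] at h1
    refine le_trans ?_ (mul_le_mul_right h1 _)
    have hi : 0 < 1 - 1/p := by rw [← e1]; positivity
    have hmono : (X^(k+1+1))⁻¹ ≤ (X^(k+1))⁻¹ := by gcongr; exacts [by linarith, by omega]
    have hpos2 : 0 ≤ ((X ^ (k+1))⁻¹ - (X^(k+1+1))⁻¹) / (1 - 1/p) :=
      div_nonneg (by linarith) hi.le
    rw [← mul_assoc, ← mul_assoc, show (32:ℝ≥0∞) = ENNReal.ofReal 32 by simp,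
      ← ENNReal.ofReal_mul (by norm_num), ← ENNReal.ofReal_mul (by positivity),
      ← ENNReal.ofReal_mul (by positivity)]
    refine mul_le_mul_left (ENNReal.ofReal_le_ofReal ?_) _
    have e : 32 * (1 / (p * (p / (p-1)))) * (((X^(k+1))⁻¹ - (X^(k+1+1))⁻¹) / (1-1/p)) *
        ((N:ℝ)^(k+1)/2) = (16 * (1/p) * (X^(k+1+1))⁻¹ * (X-1)) * (N:ℝ)^(k+1) := by
      have : (1 - 1/p) ≠ 0 := hi.ne'
      have h7 : (X^(k+1))⁻¹ = (X^(k+1+1))⁻¹ * X := by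
        rw [pow_succ X (k+1)]; field_simp
      have h8 : (1 / (p * (p / (p-1)))) = (1/p) * (1-1/p) := by field_simp
      rw [h7, h8]; field_simp; ring
    rw [e]
    gcongr
    have h5 : 1/2 ≤ 1/p := by gcongr
    have h7 : (X^k)⁻¹ = (X^(k+1+1))⁻¹ * X^2 := by
      rw [show k+1+1 = k+2 by ring, pow_add]; field_simp
    rw [h7]
    have : 0 < (X^(k+1+1))⁻¹ := by positivity
    calc (X^(k+1+1))⁻¹ * X^2 ≤ (X^(k+1+1))⁻¹ * (16 * (1/2) * (X-1)) := by gcongr; nlinarith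
      _ ≤ (X^(k+1+1))⁻¹ * (16 * (1/p) * (X-1)) := by
        have : 0 ≤ X - 1 := by linarith
        gcongr
      _ = _ := by ring
  refine le_add_left ?_
  refine (ENNReal.tsum_le_tsum hpiece).trans ?_
  rw [ENNReal.tsum_mul_left]
  gcongr
  refine le_trans ?_ (sum_pieces N hN _)
  exact ENNReal.tsum_comp_le_tsum_of_injective (f := fun k : ℕ => k + 1)
    (add_left_injective 1) (fun k => ∫⁻ t in Ioc (((N:ℝ)^(k+1))⁻¹) (((N:ℝ)^k)⁻¹),
          ENNReal.ofReal (t ^ (-(1/p)) / t) * φ t)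

lemma map_Ioc (c s : ℝ) : (volume.restrict (Ioc 0 s)).map (fun x : ℝ => c + x)
    = volume.restrict (Ioc c (c + s)) := by
  have := (measurePreserving_add_left (volume : Measure ℝ) c).restrict_preimage_emb
    (measurableEmbedding_addLeft c) (Ioc c (c+s))
  rw [← this.map_eq]
  simp

lemma restrict_split (n : ℕ) (s : ℝ) (hs : 0 ≤ s) :
    (volume.restrict (Ioc 0 (n * s)) : Measure ℝ) =
      Measure.sum (fun i : Fin n => (volume.restrict (Ioc 0 s)).map (fun x : ℝ => i * s + x)) := by
  have hm : Monotone (fun i : ℕ => (i:ℝ) * s) := by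
    intro a b hab
    simp only
    gcongr
  have hu : Ioc (0:ℝ) (n * s) = ⋃ i : Fin n, Ioc ((i:ℝ) * s) (i * s + s) := by
    have := hm.biUnion_Ico_Ioc_map_succ 0 n
    simp only [Nat.cast_zero, zero_mul] at this
    rw [← this]
    ext x
    simp only [mem_iUnion, Order.succ_eq_add_one, Nat.cast_add, Nat.cast_one, add_mul, one_mul]
    constructor
    · rintro ⟨i, hi, hx⟩
      exact ⟨⟨i, hi.2⟩, hx⟩
    · rintro ⟨i, hx⟩
      exact ⟨i, ⟨Nat.zero_le _, i.2⟩, hx⟩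
  simp_rw [map_Ioc]
  rw [hu, Measure.restrict_iUnion _ (fun i => measurableSet_Ioc)]
  have hd := hm.pairwise_disjoint_on_Ioc_succ
  intro i j hij
  have := hd (fun h => hij (Fin.ext h))
  simpa [Function.onFun, add_mul] using this

/-- box measure -/
noncomputable def bxm (s t : ℝ) : Measure (ℝ × ℝ) := volume.restrict (Ioc 0 s ×ˢ Ioc 0 t)

lemma bxm_prod (s t : ℝ) : bxm s t = (volume.restrict (Ioc 0 s)).prod (volume.restrict (Ioc 0 t)) := by
  rw [bxm, Measure.volume_eq_prod, Measure.prod_restrict]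

lemma bxm_split (n m : ℕ) (s t : ℝ) (hs : 0 ≤ s) (ht : 0 ≤ t) :
    bxm (n * s) (m * t) = ∑ i : Fin n × Fin m,
      (bxm s t).map (fun z => ((i.1:ℝ) * s + z.1, (i.2:ℝ) * t + z.2)) := by
  rw [bxm_prod, restrict_split n s hs, restrict_split m t ht, Measure.prod_sum, Measure.sum_fintype]
  refine Finset.sum_congr rfl fun i _ => ?_
  rw [Measure.map_prod_map _ _ (by fun_prop) (by fun_prop), ← bxm_prod]
  rfl

lemma emb_sh (a b : ℝ) : MeasurableEmbedding (fun z : ℝ × ℝ => (a + z.1, b + z.2)) :=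
  (measurableEmbedding_addLeft a).prodMap (measurableEmbedding_addLeft b)

lemma lint_split (n m : ℕ) (s t : ℝ) (hs : 0 ≤ s) (ht : 0 ≤ t) (G : ℝ × ℝ → ℝ≥0∞) :
    ∫⁻ z, G z ∂(bxm (n * s) (m * t)) = ∑ i ∈ Finset.range n, ∑ j ∈ Finset.range m,
      ∫⁻ z, G (i * s + z.1, j * t + z.2) ∂(bxm s t) := by
  rw [bxm_split n m s t hs ht, lintegral_finsetSum_measure, Fintype.sum_prod_type,
    Finset.sum_range]
  refine Finset.sum_congr rfl fun i _ => ?_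
  rw [Finset.sum_range]
  refine Finset.sum_congr rfl fun j _ => ?_
  rw [(emb_sh _ _).lintegral_map]

lemma int_split (n m : ℕ) (s t : ℝ) (hs : 0 ≤ s) (ht : 0 ≤ t) (G : ℝ × ℝ → ℝ)
    (hG : Integrable G (bxm (n * s) (m * t))) :
    ∫ z, G z ∂(bxm (n * s) (m * t)) = ∑ i ∈ Finset.range n, ∑ j ∈ Finset.range m,
      ∫ z, G (i * s + z.1, j * t + z.2) ∂(bxm s t) := by
  rw [bxm_split n m s t hs ht] at hG ⊢
  rw [integral_finsetSum_measure, Fintype.sum_prod_type,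
    Finset.sum_range]
  · refine Finset.sum_congr rfl fun i _ => ?_
    rw [Finset.sum_range]
    refine Finset.sum_congr rfl fun j _ => ?_
    rw [(emb_sh _ _).integral_map]
  · intro i hi
    exact (integrable_finsetSum_measure.1 hG) i hi

lemma holder (hp : 1 < p) (F : ℝ → ℝ → ℝ) (hF : Measurable (Function.uncurry F))
    (hP : BiPeriodic F) (s t x y : ℝ) (hs : 0 < s) (hs1 : s ≤ 1) (ht : 0 < t) (ht1 : t ≤ 1) :
    ∫⁻ z, ‖F (x + z.1) (y + z.2)‖ₑ ∂(bxm s t) ≤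
      ENNReal.ofReal ((s * t) ^ (1 - 1/p)) * lpNorm2 p F := by
  have hp0 : 0 < p := by linarith
  have h1 := eLpNorm_le_eLpNorm_mul_rpow_measure_univ (μ := bxm s t)
    (f := Function.uncurry (fun u v => F (x + u) (y + v)))
    (p := 1) (q := ENNReal.ofReal p) (by simpa using hp.le)
    (meas_shift' hF x y).aestronglyMeasurable
  rw [eLpNorm_one_eq_lintegral_enorm] at h1
  refine h1.trans ?_
  rw [mul_comm]
  gcongr
  · have : bxm s t univ = ENNReal.ofReal (s * t) := by
      rw [bxm, Measure.restrict_apply_univ, Measure.volume_eq_prod, Measure.prod_prod]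
      simp [ENNReal.ofReal_mul hs.le]
    rw [this, ENNReal.toReal_ofReal hp0.le, ENNReal.toReal_one, div_one,
      ENNReal.ofReal_rpow_of_pos (by positivity)]
  · rw [← aux_norm_shift p F hP x y, aux_norm_eq p hp _ (meas_shift' hF x y)]
    apply eLpNorm_mono_measure
    apply Measure.restrict_mono _ le_rfl
    exact prod_mono (fun u hu => ⟨hu.1.le, hu.2.trans hs1⟩) (fun u hu => ⟨hu.1.le, hu.2.trans ht1⟩)

lemma intg (hp : 1 < p) (hf : MemLp2 p f) (s t x y : ℝ) (hs : 0 < s) (hs1 : s ≤ 1) (ht : 0 < t)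
    (ht1 : t ≤ 1) : Integrable (fun z : ℝ × ℝ => f (x + z.1) (y + z.2)) (bxm s t) := by
  refine ⟨(meas_shift' hf.1 x y).aestronglyMeasurable, ?_⟩
  exact (holder hp f hf.1 hf.2.1 s t x y hs hs1 ht ht1).trans_lt
    (ENNReal.mul_lt_top ENNReal.ofReal_lt_top hf.2.2)

/-- Steklov means -/
noncomputable def av (f : ℝ → ℝ → ℝ) (s t x y : ℝ) : ℝ :=
  (s * t)⁻¹ * ∫ z, f (x + z.1) (y + z.2) ∂(bxm s t)

lemma av_split (hp : 1 < p) (hf : MemLp2 p f) (n m : ℕ) (hn : 0 < n) (hm : 0 < m) (s t x y : ℝ)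
    (hs : 0 < s) (ht : 0 < t) (hs1 : n * s ≤ 1) (ht1 : m * t ≤ 1) :
    av f (n * s) (m * t) x y = (n:ℝ)⁻¹ * ∑ i ∈ Finset.range n, (m:ℝ)⁻¹ * ∑ j ∈ Finset.range m,
      av f s t (x + i * s) (y + j * t) := by
  have hn' : (0:ℝ) < n := by exact_mod_cast hn
  have hm' : (0:ℝ) < m := by exact_mod_cast hm
  unfold av
  rw [int_split n m s t hs.le ht.le _ (intg hp hf _ _ x y (by positivity) hs1 (by positivity) ht1)]
  simp_rw [← Finset.mul_sum, ← mul_assoc, ← add_assoc]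
  congr 1
  field_simp

lemma br1 (hp : 1 < p) (hf : MemLp2 p f) (s t x y a b : ℝ) (hs : 0 < s) (hs1 : s ≤ 1) (ht : 0 < t)
    (ht1 : t ≤ 1) : ‖av f s t (x + a) (y + b) - av f s t x y‖ₑ ≤
      ENNReal.ofReal (s*t)⁻¹ * ∫⁻ z, ‖Dsh a b f (x + z.1) (y + z.2)‖ₑ ∂(bxm s t) := by
  have i1 := intg hp hf s t (x+a) (y+b) hs hs1 ht ht1
  have i2 := intg hp hf s t x y hs hs1 ht ht1
  unfold av
  rw [← mul_sub, ← integral_sub i1 i2, enorm_mul, Real.enorm_of_nonneg (by positivity)]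
  gcongr
  refine (enorm_integral_le_lintegral_enorm _).trans (le_of_eq ?_)
  refine lintegral_congr fun z => ?_
  rw [Dsh, add_right_comm x, add_right_comm y]

lemma br2 (hp : 1 < p) (hf : MemLp2 p f) (s t x y a b : ℝ) (hs : 0 < s) (hs1 : s ≤ 1) (ht : 0 < t)
    (ht1 : t ≤ 1) :
    ‖av f s t (x + a) (y + b) - av f s t x (y + b) - (av f s t (x + a) y - av f s t x y)‖ₑ ≤
      ENNReal.ofReal (s*t)⁻¹ * ∫⁻ z, ‖Mix a b f (x + z.1) (y + z.2)‖ₑ ∂(bxm s t) := by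
  have i1 := intg hp hf s t (x+a) (y+b) hs hs1 ht ht1
  have i2 := intg hp hf s t x (y+b) hs hs1 ht ht1
  have i3 := intg hp hf s t (x+a) y hs hs1 ht ht1
  have i4 := intg hp hf s t x y hs hs1 ht ht1
  have i12 : Integrable (fun z : ℝ × ℝ => f (x + a + z.1) (y + b + z.2) - f (x + z.1) (y + b + z.2))
    (bxm s t) := i1.sub i2
  have i34 : Integrable (fun z : ℝ × ℝ => f (x + a + z.1) (y + z.2) - f (x + z.1) (y + z.2))
    (bxm s t) := i3.sub i4
  unfold av
  rw [← mul_sub, ← mul_sub, ← mul_sub, ← integral_sub i1 i2, ← integral_sub i3 i4,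
    ← integral_sub i12 i34, enorm_mul, Real.enorm_of_nonneg (by positivity)]
  gcongr
  refine (enorm_integral_le_lintegral_enorm _).trans (le_of_eq ?_)
  refine lintegral_congr fun z => ?_
  rw [Mix, add_right_comm x, add_right_comm y]
  congr 1; ring

lemma eA (N : ℕ) (hN : 0 < N) (A : ℕ → ℝ) (B : ℝ≥0∞) (h : ∀ i < N, ‖A i - A 0‖ₑ ≤ B) :
    ‖(N:ℝ)⁻¹ * ∑ i ∈ Finset.range N, A i - A 0‖ₑ ≤ B := by
  have hN' : (0:ℝ) < N := by exact_mod_cast hN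
  have e : (N:ℝ)⁻¹ * ∑ i ∈ Finset.range N, A i - A 0 = (N:ℝ)⁻¹ * ∑ i ∈ Finset.range N, (A i - A 0) := by
    rw [Finset.sum_sub_distrib]; simp; field_simp
  rw [e, enorm_mul, Real.enorm_of_nonneg (by positivity)]
  calc _ ≤ ENNReal.ofReal (N:ℝ)⁻¹ * ∑ i ∈ Finset.range N, B := by
        gcongr
        refine (enorm_sum_le _ _).trans (Finset.sum_le_sum fun i hi => h i (Finset.mem_range.1 hi))
    _ = ENNReal.ofReal ((N:ℝ)⁻¹ * N) * B := by
        rw [ENNReal.ofReal_mul (by positivity)]; simp [mul_assoc]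
    _ = B := by rw [inv_mul_cancel₀ hN'.ne']; simp

lemma eB (N : ℕ) (hN : 0 < N) (A : ℕ → ℝ) :
    ‖(N:ℝ)⁻¹ * ∑ i ∈ Finset.range N, A i - A 0‖ₑ ≤ ∑ i ∈ Finset.range N, ‖A (i+1) - A i‖ₑ := by
  refine eA N hN A _ fun i hi => ?_
  rw [← Finset.sum_range_sub]
  refine (enorm_sum_le _ _).trans ?_
  exact Finset.sum_le_sum_of_subset (Finset.range_mono hi.le)

lemma eA2 (N M : ℕ) (hN : 0 < N) (hM : 0 < M) (A : ℕ → ℕ → ℝ) (B : ℝ≥0∞)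
    (h : ∀ i < N, ∀ j < M, ‖A i j - A 0 j - (A i 0 - A 0 0)‖ₑ ≤ B) :
    ‖(N:ℝ)⁻¹ * ∑ i ∈ Finset.range N, ((M:ℝ)⁻¹ * ∑ j ∈ Finset.range M, A i j - A i 0)
      - ((M:ℝ)⁻¹ * ∑ j ∈ Finset.range M, A 0 j - A 0 0)‖ₑ ≤ B := by
  refine eA N hN (fun i => (M:ℝ)⁻¹ * ∑ j ∈ Finset.range M, A i j - A i 0) B fun i hi => ?_
  have := eA M hM (fun j => A i j - A 0 j) B (fun j hj => h i hi j hj)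
  refine le_trans (le_of_eq ?_) this
  rw [Finset.sum_sub_distrib]
  congr 1; ring

lemma eB2 (N M : ℕ) (hN : 0 < N) (hM : 0 < M) (A : ℕ → ℕ → ℝ) :
    ‖(N:ℝ)⁻¹ * ∑ i ∈ Finset.range N, ((M:ℝ)⁻¹ * ∑ j ∈ Finset.range M, A i j - A i 0)
      - ((M:ℝ)⁻¹ * ∑ j ∈ Finset.range M, A 0 j - A 0 0)‖ₑ ≤
      ∑ i ∈ Finset.range N, ∑ j ∈ Finset.range M,
        ‖A (i+1) (j+1) - A i (j+1) - (A (i+1) j - A i j)‖ₑ := by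
  refine (eB N hN (fun i => (M:ℝ)⁻¹ * ∑ j ∈ Finset.range M, A i j - A i 0)).trans ?_
  refine Finset.sum_le_sum fun i _ => ?_
  have := eB M hM (fun j => A (i+1) j - A i j)
  refine le_trans (le_of_eq ?_) this
  rw [Finset.sum_sub_distrib]
  congr 1; ring

lemma av_split_x (hp : 1 < p) (hf : MemLp2 p f) (n : ℕ) (hn : 0 < n) (s t x y : ℝ)
    (hs : 0 < s) (ht : 0 < t) (hs1 : n * s ≤ 1) (ht1 : t ≤ 1) :
    av f (n * s) t x y = (n:ℝ)⁻¹ * ∑ i ∈ Finset.range n, av f s t (x + i * s) y := by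
  simpa using av_split hp hf n 1 hn one_pos s t x y hs ht hs1 (by simpa using ht1)

lemma av_split_y (hp : 1 < p) (hf : MemLp2 p f) (m : ℕ) (hm : 0 < m) (s t x y : ℝ)
    (hs : 0 < s) (ht : 0 < t) (hs1 : s ≤ 1) (ht1 : m * t ≤ 1) :
    av f s (m * t) x y = (m:ℝ)⁻¹ * ∑ j ∈ Finset.range m, av f s t x (y + j * t) := by
  simpa using av_split hp hf 1 m one_pos hm s t x y hs ht (by simpa using hs1) ht1

lemma coefA (a : ℝ) (ha : 0 < a) (L : ℝ≥0∞) :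
    ENNReal.ofReal a⁻¹ * (ENNReal.ofReal (a ^ (1 - 1/p)) * L) = ENNReal.ofReal (a ^ (-(1/p))) * L := by
  rw [← mul_assoc, ← ENNReal.ofReal_mul (by positivity)]
  congr 2
  rw [sub_eq_add_neg, Real.rpow_add ha, Real.rpow_one]
  field_simp

lemma le1 {n : ℕ} (hn : 0 < n) {s : ℝ} (hs : 0 < s) : s ≤ n * s := by
  have : (1:ℝ) ≤ n := by exact_mod_cast hn
  nlinarith

lemma br1A (hp : 1 < p) (hf : MemLp2 p f) (s t x y a b : ℝ) (hs : 0 < s) (hs1 : s ≤ 1) (ht : 0 < t)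
    (ht1 : t ≤ 1) : ‖av f s t (x + a) (y + b) - av f s t x y‖ₑ ≤
      ENNReal.ofReal ((s * t) ^ (-(1/p))) * lpNorm2 p (Dsh a b f) := by
  refine (br1 hp hf s t x y a b hs hs1 ht ht1).trans ?_
  rw [← coefA (s*t) (by positivity)]
  gcongr
  exact holder hp _ (Dsh_meas hf.1 _ _) (Dsh_per hf.2.1 _ _) s t x y hs hs1 ht ht1

lemma Mix_meas {F : ℝ → ℝ → ℝ} (hF : Measurable (Function.uncurry F)) (a b : ℝ) :
    Measurable (Function.uncurry (Mix a b F)) := by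
  rw [Mix_eq1]; exact Dsh_meas (Dsh_meas hF _ _) _ _

lemma Mix_per {F : ℝ → ℝ → ℝ} (hF : BiPeriodic F) (a b : ℝ) : BiPeriodic (Mix a b F) := by
  rw [Mix_eq1]; exact Dsh_per (Dsh_per hF _ _) _ _

lemma br2A (hp : 1 < p) (hf : MemLp2 p f) (s t x y a b : ℝ) (hs : 0 < s) (hs1 : s ≤ 1) (ht : 0 < t)
    (ht1 : t ≤ 1) :
    ‖av f s t (x + a) (y + b) - av f s t x (y + b) - (av f s t (x + a) y - av f s t x y)‖ₑ ≤
      ENNReal.ofReal ((s * t) ^ (-(1/p))) * lpNorm2 p (Mix a b f) := by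
  refine (br2 hp hf s t x y a b hs hs1 ht ht1).trans ?_
  rw [← coefA (s*t) (by positivity)]
  gcongr
  exact holder hp _ (Mix_meas hf.1 _ _) (Mix_per hf.2.1 _ _) s t x y hs hs1 ht ht1

lemma PA (hp : 1 < p) (hf : MemLp2 p f) (N : ℕ) (hN : 0 < N) (s x y : ℝ) (hs : 0 < s)
    (hs1 : N * s ≤ 1) : ‖av f (N * s) 1 x y - av f s 1 x y‖ₑ ≤
      ENNReal.ofReal (s ^ (-(1/p))) * modulus2 p f (N * s) := by
  rw [av_split_x hp hf N hN s 1 x y hs one_pos hs1 le_rfl]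
  have := eA N hN (fun i => av f s 1 (x + i * s) y)
    (ENNReal.ofReal (s ^ (-(1/p))) * modulus2 p f (N * s)) ?_
  · simpa using this
  intro i hi
  have hi' : (i:ℝ) ≤ N := by exact_mod_cast hi.le
  have := br1A hp hf s 1 x y (i * s) 0 hs ((le1 hN hs).trans hs1) one_pos le_rfl
  simp only [add_zero, mul_one, Nat.cast_zero, zero_mul] at this ⊢
  refine this.trans ?_
  gcongr
  apply le_modulus2
  rw [zero_pow two_ne_zero, add_zero, Real.sqrt_sq (by positivity)]
  gcongr

lemma QA (hp : 1 < p) (hf : MemLp2 p f) (N : ℕ) (hN : 0 < N) (s x y : ℝ) (hs : 0 < s)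
    (hs1 : N * s ≤ 1) : ‖av f 1 (N * s) x y - av f 1 s x y‖ₑ ≤
      ENNReal.ofReal (s ^ (-(1/p))) * modulus2 p f (N * s) := by
  rw [av_split_y hp hf N hN 1 s x y one_pos hs le_rfl hs1]
  have := eA N hN (fun i => av f 1 s x (y + i * s))
    (ENNReal.ofReal (s ^ (-(1/p))) * modulus2 p f (N * s)) ?_
  · simpa using this
  intro i hi
  have hi' : (i:ℝ) ≤ N := by exact_mod_cast hi.le
  have := br1A hp hf 1 s x y 0 (i * s) one_pos le_rfl hs ((le1 hN hs).trans hs1)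
  simp only [add_zero, one_mul, Nat.cast_zero, zero_mul] at this ⊢
  refine this.trans ?_
  gcongr
  apply le_modulus2
  rw [zero_pow two_ne_zero, zero_add, Real.sqrt_sq (by positivity)]
  gcongr

lemma PB (hp : 1 < p) (hf : MemLp2 p f) (N : ℕ) (hN : 0 < N) (s x y : ℝ) (hs : 0 < s)
    (hs1 : N * s ≤ 1) : ‖av f (N * s) 1 x y - av f s 1 x y‖ₑ ≤
      ENNReal.ofReal (s⁻¹ * (N * s) ^ (1 - 1/p)) * modulus2 p f s := by
  have hN' : (0:ℝ) < N := by exact_mod_cast hN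
  rw [av_split_x hp hf N hN s 1 x y hs one_pos hs1 le_rfl]
  have h := eB N hN (fun i => av f s 1 (x + i * s) y)
  simp only [Nat.cast_zero, zero_mul, add_zero] at h
  refine h.trans ?_
  have hb : ∀ i ∈ Finset.range N, ‖av f s 1 (x + ((i+1:ℕ):ℝ) * s) y - av f s 1 (x + i * s) y‖ₑ ≤
      ENNReal.ofReal s⁻¹ * ∫⁻ z, ‖Dsh s 0 f (x + (i * s + z.1)) (y + z.2)‖ₑ ∂(bxm s 1) := by
    intro i _
    have := br1 hp hf s 1 (x + i * s) y s 0 hs ((le1 hN hs).trans hs1) one_pos le_rfl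
    rw [add_zero, mul_one] at this
    push_cast
    rw [add_mul, one_mul, ← add_assoc]
    simpa only [add_assoc] using this
  refine (Finset.sum_le_sum hb).trans ?_
  rw [← Finset.mul_sum]
  have hsp := lint_split N 1 s 1 hs.le zero_le_one (fun z => ‖Dsh s 0 f (x + z.1) (y + z.2)‖ₑ)
  simp only [Finset.sum_range_one, Nat.cast_zero, zero_mul, zero_add, Nat.cast_one, mul_one] at hsp
  rw [← hsp, ENNReal.ofReal_mul (by positivity), mul_assoc]
  gcongr
  refine (holder hp _ (Dsh_meas hf.1 _ _) (Dsh_per hf.2.1 _ _) _ _ x y (by positivity) hs1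
    one_pos le_rfl).trans ?_
  rw [mul_one]
  gcongr
  apply le_modulus2
  rw [zero_pow two_ne_zero, add_zero, Real.sqrt_sq (by positivity)]

lemma QB (hp : 1 < p) (hf : MemLp2 p f) (N : ℕ) (hN : 0 < N) (s x y : ℝ) (hs : 0 < s)
    (hs1 : N * s ≤ 1) : ‖av f 1 (N * s) x y - av f 1 s x y‖ₑ ≤
      ENNReal.ofReal (s⁻¹ * (N * s) ^ (1 - 1/p)) * modulus2 p f s := by
  have hN' : (0:ℝ) < N := by exact_mod_cast hN
  rw [av_split_y hp hf N hN 1 s x y one_pos hs le_rfl hs1]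
  have h := eB N hN (fun i => av f 1 s x (y + i * s))
  simp only [Nat.cast_zero, zero_mul, add_zero] at h
  refine h.trans ?_
  have hb : ∀ i ∈ Finset.range N, ‖av f 1 s x (y + ((i+1:ℕ):ℝ) * s) - av f 1 s x (y + i * s)‖ₑ ≤
      ENNReal.ofReal s⁻¹ * ∫⁻ z, ‖Dsh 0 s f (x + z.1) (y + (i * s + z.2))‖ₑ ∂(bxm 1 s) := by
    intro i _
    have := br1 hp hf 1 s x (y + i * s) 0 s one_pos le_rfl hs ((le1 hN hs).trans hs1)
    rw [add_zero, one_mul] at this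
    push_cast
    rw [add_mul, one_mul, ← add_assoc]
    simpa only [add_assoc] using this
  refine (Finset.sum_le_sum hb).trans ?_
  rw [← Finset.mul_sum]
  have hsp := lint_split 1 N 1 s zero_le_one hs.le (fun z => ‖Dsh 0 s f (x + z.1) (y + z.2)‖ₑ)
  simp only [Finset.sum_range_one, Nat.cast_zero, zero_mul, zero_add, Nat.cast_one, mul_one] at hsp
  rw [← hsp, ENNReal.ofReal_mul (by positivity), mul_assoc]
  gcongr
  refine (holder hp _ (Dsh_meas hf.1 _ _) (Dsh_per hf.2.1 _ _) _ _ x y one_pos le_rfl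
    (by positivity) hs1).trans ?_
  rw [one_mul]
  gcongr
  apply le_modulus2
  rw [zero_pow two_ne_zero, zero_add, Real.sqrt_sq (by positivity)]

/-- second difference of the Steklov means -/
noncomputable def RR (f : ℝ → ℝ → ℝ) (N : ℕ) (s t x y : ℝ) : ℝ :=
  av f s t x y - av f (N * s) t x y - av f s (N * t) x y + av f (N * s) (N * t) x y

lemma RR_eq (hp : 1 < p) (hf : MemLp2 p f) (N : ℕ) (hN : 0 < N) (s t x y : ℝ) (hs : 0 < s)
    (hs1 : N * s ≤ 1) (ht : 0 < t) (ht1 : N * t ≤ 1) :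
    RR f N s t x y = (N:ℝ)⁻¹ * ∑ i ∈ Finset.range N, ((N:ℝ)⁻¹ * ∑ j ∈ Finset.range N,
      av f s t (x + i * s) (y + j * t) - av f s t (x + i * s) (y + (0:ℕ) * t))
      - ((N:ℝ)⁻¹ * ∑ j ∈ Finset.range N, av f s t (x + (0:ℕ) * s) (y + j * t)
        - av f s t (x + (0:ℕ) * s) (y + (0:ℕ) * t)) := by
  unfold RR
  rw [av_split hp hf N N hN hN s t x y hs ht hs1 ht1,
    av_split_x hp hf N hN s t x y hs ht hs1 ((le1 hN ht).trans ht1),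
    av_split_y hp hf N hN s t x y hs ht ((le1 hN hs).trans hs1) ht1, Finset.sum_sub_distrib]
  simp only [Nat.cast_zero, zero_mul, add_zero]
  ring

lemma RA (hp : 1 < p) (hf : MemLp2 p f) (N : ℕ) (hN : 0 < N) (s t x y : ℝ) (hs : 0 < s)
    (hs1 : N * s ≤ 1) (ht : 0 < t) (ht1 : N * t ≤ 1) : ‖RR f N s t x y‖ₑ ≤
      ENNReal.ofReal (s ^ (-(1/p))) * (ENNReal.ofReal (t ^ (-(1/p))) *
        mixedModulus p f (N * s) (N * t)) := by
  rw [RR_eq hp hf N hN s t x y hs hs1 ht ht1]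
  refine eA2 N N hN hN (fun i j => av f s t (x + i * s) (y + j * t)) _ ?_
  intro i hi j hj
  have hi' : (i:ℝ) ≤ N := by exact_mod_cast hi.le
  have hj' : (j:ℝ) ≤ N := by exact_mod_cast hj.le
  have := br2A hp hf s t x y (i * s) (j * t) hs ((le1 hN hs).trans hs1) ht ((le1 hN ht).trans ht1)
  simp only [Nat.cast_zero, zero_mul, add_zero]
  refine this.trans ?_
  rw [← mul_assoc, ← ENNReal.ofReal_mul (by positivity), Real.mul_rpow hs.le ht.le]
  gcongr
  apply le_mixed <;> first | positivity | gcongr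

lemma RB (hp : 1 < p) (hf : MemLp2 p f) (N : ℕ) (hN : 0 < N) (s t x y : ℝ) (hs : 0 < s)
    (hs1 : N * s ≤ 1) (ht : 0 < t) (ht1 : N * t ≤ 1) : ‖RR f N s t x y‖ₑ ≤
      ENNReal.ofReal (s⁻¹ * (N * s) ^ (1 - 1/p)) * (ENNReal.ofReal (t⁻¹ * (N * t) ^ (1 - 1/p)) *
        mixedModulus p f s t) := by
  have hN' : (0:ℝ) < N := by exact_mod_cast hN
  rw [RR_eq hp hf N hN s t x y hs hs1 ht ht1]
  refine (eB2 N N hN hN (fun i j => av f s t (x + i * s) (y + j * t))).trans ?_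
  have hb : ∀ i ∈ Finset.range N, ∀ j ∈ Finset.range N,
      ‖av f s t (x + ((i+1:ℕ):ℝ) * s) (y + ((j+1:ℕ):ℝ) * t)
        - av f s t (x + i * s) (y + ((j+1:ℕ):ℝ) * t)
        - (av f s t (x + ((i+1:ℕ):ℝ) * s) (y + j * t) - av f s t (x + i * s) (y + j * t))‖ₑ ≤
      ENNReal.ofReal (s*t)⁻¹ *
        ∫⁻ z, ‖Mix s t f (x + (i * s + z.1)) (y + (j * t + z.2))‖ₑ ∂(bxm s t) := by
    intro i _ j _
    have := br2 hp hf s t (x + i * s) (y + j * t) s t hs ((le1 hN hs).trans hs1) ht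
      ((le1 hN ht).trans ht1)
    push_cast
    rw [add_mul, one_mul, ← add_assoc, add_mul, one_mul, ← add_assoc]
    simpa only [add_assoc] using this
  refine (Finset.sum_le_sum fun i hi => Finset.sum_le_sum fun j hj => hb i hi j hj).trans ?_
  simp_rw [← Finset.mul_sum]
  have hsp := lint_split N N s t hs.le ht.le (fun z => ‖Mix s t f (x + z.1) (y + z.2)‖ₑ)
  simp only at hsp
  rw [← hsp]
  have h2 := holder hp _ (Mix_meas hf.1 s t) (Mix_per hf.2.1 _ _) _ _ x y
    (by positivity : 0 < N * s) hs1 (by positivity : 0 < N * t) ht1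
  calc _ ≤ ENNReal.ofReal (s*t)⁻¹ * (ENNReal.ofReal ((N * s * (N * t)) ^ (1 - 1/p)) *
        mixedModulus p f s t) := by
        gcongr
        refine h2.trans ?_
        gcongr
        exact le_mixed _ _ _ _ _ _ hs.le le_rfl ht.le le_rfl
    _ = _ := by
        rw [Real.mul_rpow (x := (N:ℝ)*s) (y := (N:ℝ)*t) (by positivity) (by positivity),
          ← mul_assoc (ENNReal.ofReal (s*t)⁻¹), ← mul_assoc (ENNReal.ofReal (s⁻¹ * _)),
          ← ENNReal.ofReal_mul (by positivity), ← ENNReal.ofReal_mul (by positivity)]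
        congr 2
        rw [mul_inv]; ring

lemma scheme (hp : 1 < p) : ∃ (N : ℕ) (c : ℕ → ℝ≥0∞) (τ : ℕ → ℝ), 2 ≤ N ∧ (∀ k, 1 ≤ c k) ∧
    (∀ k, 0 < τ k) ∧ (∀ φ, Adm φ → ∑' k, c k * φ (τ k) ≤
      32 * φ 1 + 32 * ENNReal.ofReal (1 / (p * (p / (p - 1)))) * WInt p φ) ∧
    ∀ f, MemLp2 p f → ∀ x y,
      (∀ k, ‖av f (((N:ℝ)^k)⁻¹) 1 x y - av f (((N:ℝ)^(k+1))⁻¹) 1 x y‖ₑ ≤ c k * modulus2 p f (τ k)) ∧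
      (∀ k, ‖av f 1 (((N:ℝ)^k)⁻¹) x y - av f 1 (((N:ℝ)^(k+1))⁻¹) x y‖ₑ ≤ c k * modulus2 p f (τ k)) ∧
      (∀ j k, ‖RR f N (((N:ℝ)^(j+1))⁻¹) (((N:ℝ)^(k+1))⁻¹) x y‖ₑ ≤
        c j * (c k * mixedModulus p f (τ j) (τ k))) := by
  have key : ∀ N : ℕ, 2 ≤ N → ∀ k : ℕ, (N:ℝ) * ((N:ℝ)^(k+1))⁻¹ = ((N:ℝ)^k)⁻¹ := by
    intro N hN k
    have hN0 : (0:ℝ) < N := by exact_mod_cast (by omega : 0 < N)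
    rw [pow_succ]; field_simp
  have keyle : ∀ N : ℕ, 2 ≤ N → ∀ k : ℕ, (N:ℝ) * ((N:ℝ)^(k+1))⁻¹ ≤ 1 := by
    intro N hN k
    rw [key N hN k]
    have hN1 : (1:ℝ) ≤ N := by exact_mod_cast (by omega : 1 ≤ N)
    exact inv_le_one_of_one_le₀ (one_le_pow₀ hN1)
  rcases le_total 2 p with h2 | h2
  · obtain ⟨N, hN, hX, hS⟩ := schemeA h2
    have hN0 : (0:ℝ) < N := by exact_mod_cast (by omega : 0 < N)
    have hpow : ∀ k : ℕ, (((N:ℝ)^k)⁻¹) ^ (-(1/p)) = ((N:ℝ)^(1/p)) ^ k := by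
      intro k
      rw [Real.inv_rpow (by positivity), Real.rpow_neg (by positivity), inv_inv,
        ← Real.rpow_natCast, ← Real.rpow_natCast, ← Real.rpow_mul hN0.le, ← Real.rpow_mul hN0.le,
        mul_comm]
    refine ⟨N, _, _, hN, fun k => ?_, fun k => ?_, hS, fun f hf x y => ⟨fun k => ?_, fun k => ?_,
      fun j k => ?_⟩⟩
    · rw [ENNReal.one_le_ofReal]
      exact one_le_pow₀ (by linarith)
    · positivity
    · have := PA hp hf N (by omega) (((N:ℝ)^(k+1))⁻¹) x y (by positivity) (keyle N hN k)
      rwa [key N hN, hpow] at this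
    · have := QA hp hf N (by omega) (((N:ℝ)^(k+1))⁻¹) x y (by positivity) (keyle N hN k)
      rwa [key N hN, hpow] at this
    · have := RA hp hf N (by omega) (((N:ℝ)^(j+1))⁻¹) (((N:ℝ)^(k+1))⁻¹) x y (by positivity)
        (keyle N hN j) (by positivity) (keyle N hN k)
      rwa [key N hN, key N hN, hpow, hpow] at this
  · obtain ⟨N, hN, hX, hS⟩ := schemeB hp h2
    have hN0 : (0:ℝ) < N := by exact_mod_cast (by omega : 0 < N)
    have hN1 : (1:ℝ) ≤ N := by exact_mod_cast (by omega : 1 ≤ N)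
    have hpow : ∀ k : ℕ, (((N:ℝ)^k)⁻¹) ^ (1-1/p) = (((N:ℝ)^(1-1/p)) ^ k)⁻¹ := by
      intro k
      rw [Real.inv_rpow (by positivity),
        ← Real.rpow_natCast, ← Real.rpow_natCast, ← Real.rpow_mul hN0.le, ← Real.rpow_mul hN0.le,
        mul_comm]
    have hXN : (N:ℝ)^(1-1/p) ≤ N := by
      have : 0 < 1/p := by positivity
      simpa using Real.rpow_le_rpow_of_exponent_le hN1 (show 1-1/p ≤ 1 by linarith)
    refine ⟨N, _, _, hN, fun k => ?_, fun k => ?_, hS, fun f hf x y => ⟨fun k => ?_, fun k => ?_,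
      fun j k => ?_⟩⟩
    · rw [ENNReal.one_le_ofReal, inv_mul_eq_div, one_le_div (by positivity)]
      calc ((N:ℝ)^(1-1/p))^k ≤ (N:ℝ)^k := by gcongr
        _ ≤ (N:ℝ)^(k+1) := by gcongr; omega
    · positivity
    · have := PB hp hf N (by omega) (((N:ℝ)^(k+1))⁻¹) x y (by positivity) (keyle N hN k)
      rwa [key N hN, hpow, inv_inv, mul_comm ((N:ℝ)^(k+1))] at this
    · have := QB hp hf N (by omega) (((N:ℝ)^(k+1))⁻¹) x y (by positivity) (keyle N hN k)
      rwa [key N hN, hpow, inv_inv, mul_comm ((N:ℝ)^(k+1))] at this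
    · have := RB hp hf N (by omega) (((N:ℝ)^(j+1))⁻¹) (((N:ℝ)^(k+1))⁻¹) x y (by positivity)
        (keyle N hN j) (by positivity) (keyle N hN k)
      rwa [key N hN, key N hN, hpow, hpow, inv_inv, inv_inv, mul_comm ((N:ℝ)^(k+1)),
        mul_comm ((N:ℝ)^(j+1))] at this

lemma adm_Phi (hp : 1 < p) (hf : MemLp2 p f) :
    Adm (fun u => WInt p (fun v => mixedModulus p f u v)) := by
  refine ⟨fun s t hs hst => ?_, fun n hn t ht => ?_⟩
  · refine lintegral_mono fun v => ?_
    refine mul_le_mul_right ?_ _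
    exact (adm_mixed1 hp hf.1 hf.2.1 v).1 s t hs hst
  · simp only [WInt]
    rw [← lintegral_const_mul' _ _ (by simp)]
    refine lintegral_mono fun v => ?_
    simp only
    rw [mul_left_comm]
    refine mul_le_mul_right ?_ _
    exact (adm_mixed1 hp hf.1 hf.2.1 v).2 n hn t ht

lemma WInt_mono {φ ψ : ℝ → ℝ≥0∞} (h : ∀ t, φ t ≤ ψ t) : WInt p φ ≤ WInt p ψ :=
  lintegral_mono fun t => mul_le_mul_right (h t) _

lemma WInt_two (φ : ℝ → ℝ≥0∞) : WInt p (fun t => 2 * φ t) = 2 * WInt p φ := by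
  simp only [WInt]
  rw [← lintegral_const_mul' _ _ (by simp)]
  refine lintegral_congr fun t => ?_
  rw [mul_left_comm]

lemma WInt_Phi : WInt p (fun u => WInt p (fun v => mixedModulus p f u v)) = Ip p f := by
  simp only [WInt, Ip]
  refine setLIntegral_congr_fun measurableSet_Ioc fun u hu => ?_
  rw [← lintegral_const_mul' _ _ (by simp)]
  refine setLIntegral_congr_fun measurableSet_Ioc fun v hv => ?_
  have hu0 := hu.1
  have hv0 := hv.1
  rw [← mul_assoc, ← ENNReal.ofReal_mul (by positivity), Real.mul_rpow hu0.le hv0.le]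
  congr 2
  field_simp

lemma sum1 (hp : 1 < p) (hf : MemLp2 p f) (c : ℕ → ℝ≥0∞) (τ : ℕ → ℝ)
    (hS : ∀ φ, Adm φ → ∑' k, c k * φ (τ k) ≤
      32 * φ 1 + 32 * ENNReal.ofReal (1 / (p * (p / (p - 1)))) * WInt p φ) :
    ∑' k, c k * modulus2 p f (τ k) ≤
      64 * lpNorm2 p f + 32 * (ENNReal.ofReal (1 / (p * (p / (p - 1)))) * Jp p f) := by
  refine (hS _ (adm_modulus2 hp hf.1 hf.2.1)).trans ?_
  rw [mul_assoc]
  refine add_le_add ?_ le_rfl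
  refine (mul_le_mul_right (mod_le_norm hp hf.1 hf.2.1 1) _).trans (le_of_eq ?_)
  rw [← mul_assoc]; norm_num

lemma sum2 (hp : 1 < p) (hf : MemLp2 p f) (c : ℕ → ℝ≥0∞) (τ : ℕ → ℝ)
    (hS : ∀ φ, Adm φ → ∑' k, c k * φ (τ k) ≤
      32 * φ 1 + 32 * ENNReal.ofReal (1 / (p * (p / (p - 1)))) * WInt p φ) :
    ∑' j, ∑' k, c j * (c k * mixedModulus p f (τ j) (τ k)) ≤
      4096 * lpNorm2 p f + 4096 * (ENNReal.ofReal (1 / (p * (p / (p - 1)))) * Jp p f)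
      + 1024 * (ENNReal.ofReal ((1 / (p * (p / (p - 1))))^2) * Ip p f) := by
  have hp1 : 0 < p - 1 := by linarith
  have hq0 : 0 ≤ 1 / (p * (p / (p - 1))) := by positivity
  rw [ENNReal.ofReal_pow hq0]
  generalize ENNReal.ofReal (1 / (p * (p / (p - 1)))) = q at *
  have h1 : ∀ j, ∑' k, c j * (c k * mixedModulus p f (τ j) (τ k)) ≤
      32 * (c j * mixedModulus p f (τ j) 1) +
        32 * q * (c j * WInt p (fun v => mixedModulus p f (τ j) v)) := by
    intro j
    rw [ENNReal.tsum_mul_left]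
    refine (mul_le_mul_right (hS _ (adm_mixed2 hp hf.1 hf.2.1 (τ j))) _).trans (le_of_eq ?_)
    ring
  refine (ENNReal.tsum_le_tsum h1).trans ?_
  rw [ENNReal.tsum_add, ENNReal.tsum_mul_left, ENNReal.tsum_mul_left]
  have h2 := hS _ (adm_mixed1 hp hf.1 hf.2.1 1)
  have h3 := hS _ (adm_Phi hp hf)
  rw [WInt_Phi] at h3
  have h4 : WInt p (fun u => mixedModulus p f u 1) ≤ 2 * Jp p f :=
    (WInt_mono fun t => mixed_le_mod2 hp hf.1 hf.2.1 t 1).trans (WInt_two _).le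
  have h5 : WInt p (fun v => mixedModulus p f 1 v) ≤ 2 * Jp p f :=
    (WInt_mono fun t => mixed_le_mod1 hp hf.1 hf.2.1 1 t).trans (WInt_two _).le
  have h6 : mixedModulus p f 1 1 ≤ 2 * (2 * lpNorm2 p f) :=
    (mixed_le_mod1 hp hf.1 hf.2.1 1 1).trans (mul_le_mul_right (mod_le_norm hp hf.1 hf.2.1 1) _)
  calc _ ≤ 32 * (32 * (2 * (2 * lpNorm2 p f)) + 32 * q * (2 * Jp p f)) +
        32 * q * (32 * (2 * Jp p f) + 32 * q * Ip p f) := by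
        refine add_le_add (mul_le_mul_right (h2.trans ?_) _) (mul_le_mul_right (h3.trans ?_) _)
        · exact add_le_add (mul_le_mul_right h6 _) (mul_le_mul_right h4 _)
        · exact add_le_add (mul_le_mul_right h5 _) le_rfl
    _ = _ := by ring

lemma av_cont (hp : 1 < p) (hf : MemLp2 p f) (hτ : ∀ ε : ℝ≥0∞, 0 < ε → ∃ δ, 0 < δ ∧ modulus2 p f δ < ε)
    (s t : ℝ) (hs : 0 < s) (hs1 : s ≤ 1) (ht : 0 < t)
    (ht1 : t ≤ 1) : Continuous (fun z : ℝ × ℝ => av f s t z.1 z.2) := by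
  rw [continuous_iff_continuousAt]
  rintro ⟨x, y⟩
  rw [ContinuousAt, EMetric.tendsto_nhds]
  intro ε hε
  set C := ENNReal.ofReal ((s * t) ^ (-(1/p))) with hC
  have hC0 : C ≠ 0 := by
    rw [hC]; simp only [ne_eq, ENNReal.ofReal_eq_zero, not_le]; positivity
  obtain ⟨δ, hδ, hm⟩ := hτ (ε / C) (ENNReal.div_pos hε.ne' (by simp [hC]))
  have hc : Continuous (fun z : ℝ × ℝ => Real.sqrt ((z.1 - x)^2 + (z.2-y)^2)) := by fun_prop
  have := hc.continuousAt.eventually_lt (x₀ := (x,y)) (g := fun _ => δ) continuousAt_const (by simpa using hδ)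
  filter_upwards [this] with z hz
  rw [edist_eq_enorm_sub]
  have h1 := br1A hp hf s t x y (z.1 - x) (z.2 - y) hs hs1 ht ht1
  rw [add_sub_cancel, add_sub_cancel] at h1
  refine h1.trans_lt ?_
  have h2 := le_modulus2 p f (z.1 - x) (z.2 - y) δ hz.le
  rw [mul_comm]
  exact ENNReal.mul_lt_of_lt_div (h2.trans_lt hm)

lemma mp_sh (x y : ℝ) : MeasurePreserving (fun z : ℝ × ℝ => (x + z.1, y + z.2)) volume volume :=
  measurePreserving_add_left (volume : Measure (ℝ × ℝ)) (x, y)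

lemma pre_sh (x y s t : ℝ) : (fun z : ℝ × ℝ => (x + z.1, y + z.2)) ⁻¹'
    (Ioc x (x + s) ×ˢ Ioc y (y + t)) = Ioc 0 s ×ˢ Ioc 0 t := by
  ext z; simp

lemma box_int (f : ℝ → ℝ → ℝ) (x y s t : ℝ) : ∫ z in Ioc x (x + s) ×ˢ Ioc y (y + t), Function.uncurry f z =
    ∫ z, f (x + z.1) (y + z.2) ∂(bxm s t) := by
  rw [← (mp_sh x y).setIntegral_preimage_emb (emb_sh x y), pre_sh]
  rfl

lemma loc_int (hp : 1 < p) (hf : MemLp2 p f) :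
    LocallyIntegrable (Function.uncurry f) (volume : Measure (ℝ × ℝ)) := by
  rintro ⟨x, y⟩
  refine ⟨Ioc (x - 1/2) (x - 1/2 + 1) ×ˢ Ioc (y - 1/2) (y - 1/2 + 1), ?_, ?_⟩
  · exact prod_mem_nhds (Ioc_mem_nhds (by linarith) (by linarith))
      (Ioc_mem_nhds (by linarith) (by linarith))
  · rw [← (mp_sh (x-1/2) (y-1/2)).integrableOn_comp_preimage (emb_sh _ _), pre_sh]
    exact intg hp hf 1 1 _ _ one_pos le_rfl one_pos le_rfl

lemma av_eq (f : ℝ → ℝ → ℝ) (t x y : ℝ) (ht : 0 < t) : av f t t x y =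
    ⨍ z in Metric.closedBall ((x + t/2, y + t/2) : ℝ × ℝ) (t/2), Function.uncurry f z := by
  rw [← closedBall_prod_same, Real.closedBall_eq_Icc, Real.closedBall_eq_Icc,
    setAverage_eq]
  have e : ∀ x : ℝ, Icc (x + t/2 - t/2) (x + t/2 + t/2) = Icc x (x + t) := by
    intro x; congr 1 <;> ring
  rw [e, e]
  have hv : (volume : Measure (ℝ × ℝ)).real (Icc x (x + t) ×ˢ Icc y (y + t)) = t * t := by
    rw [Measure.volume_eq_prod, measureReal_prod_prod]
    simp [ht.le]
  have hi : ∫ z in Icc x (x + t) ×ˢ Icc y (y + t), Function.uncurry f z =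
      ∫ z in Ioc x (x + t) ×ˢ Ioc y (y + t), Function.uncurry f z := by
    refine setIntegral_congr_set ?_
    rw [Measure.volume_eq_prod]
    exact (Measure.set_prod_ae_eq Ioc_ae_eq_Icc Ioc_ae_eq_Icc).symm
  rw [hv, hi, box_int, smul_eq_mul]
  rfl

lemma ae_conv (hp : 1 < p) (hf : MemLp2 p f) (T : ℕ → ℝ) (hT : ∀ n, 0 < T n)
    (hT0 : Tendsto T atTop (nhds 0)) : ∀ᵐ z : ℝ × ℝ ∂volume,
      Tendsto (fun n => av f (T n) (T n) z.1 z.2) atTop (nhds (f z.1 z.2)) := by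
  have : (volume : Measure (ℝ × ℝ)).IsAddHaarMeasure := by
    rw [Measure.volume_eq_prod]; infer_instance
  filter_upwards [IsUnifLocDoublingMeasure.ae_tendsto_average _ (loc_int hp hf) 1] with z hz
  have h := hz (ι := ℕ) (l := atTop) (fun n => (z.1 + T n / 2, z.2 + T n / 2)) (fun n => T n / 2) ?_ ?_
  · simp_rw [← av_eq f _ _ _ (hT _)] at h
    exact h
  · rw [tendsto_nhdsWithin_iff]
    refine ⟨by simpa using hT0.div_const 2, Eventually.of_forall fun n => ?_⟩
    have := hT n
    simp [this]
  · refine Eventually.of_forall fun n => ?_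
    have := hT n
    rw [one_mul, ← closedBall_prod_same, Real.closedBall_eq_Icc, Real.closedBall_eq_Icc]
    refine ⟨⟨?_, ?_⟩, ⟨?_, ?_⟩⟩ <;> linarith

lemma av_one (hp : 1 < p) (hf : MemLp2 p f) (x y : ℝ) : ‖av f 1 1 x y‖ₑ ≤ lpNorm2 p f := by
  have h := holder hp f hf.1 hf.2.1 1 1 x y one_pos le_rfl one_pos le_rfl
  simp only [mul_one, Real.one_rpow, ENNReal.ofReal_one, one_mul] at h
  simp only [av, mul_one, inv_one, one_mul]
  exact (enorm_integral_le_lintegral_enorm _).trans h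

lemma tele (f : ℝ → ℝ → ℝ) (N : ℕ) (hN : 2 ≤ N) (n : ℕ) (x y : ℝ) :
    av f (((N:ℝ)^n)⁻¹) (((N:ℝ)^n)⁻¹) x y = av f 1 1 x y
      - ∑ k ∈ Finset.range n, (av f (((N:ℝ)^k)⁻¹) 1 x y - av f (((N:ℝ)^(k+1))⁻¹) 1 x y)
      - ∑ k ∈ Finset.range n, (av f 1 (((N:ℝ)^k)⁻¹) x y - av f 1 (((N:ℝ)^(k+1))⁻¹) x y)
      + ∑ z ∈ Finset.range n ×ˢ Finset.range n,
        RR f N (((N:ℝ)^(z.1+1))⁻¹) (((N:ℝ)^(z.2+1))⁻¹) x y := by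
  have key : ∀ k : ℕ, (N:ℝ) * ((N:ℝ)^(k+1))⁻¹ = ((N:ℝ)^k)⁻¹ := by
    intro k
    have hN0 : (0:ℝ) < N := by exact_mod_cast (by omega : 0 < N)
    rw [pow_succ]; field_simp
  set A : ℕ → ℕ → ℝ := fun j k => av f (((N:ℝ)^j)⁻¹) (((N:ℝ)^k)⁻¹) x y with hA
  have e1 : ∀ j k, RR f N (((N:ℝ)^(j+1))⁻¹) (((N:ℝ)^(k+1))⁻¹) x y =
      (A (j+1) (k+1) - A j (k+1)) - (A (j+1) k - A j k) := by
    intro j k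
    simp only [RR, key, hA]; ring
  have e2 : ∀ j, av f (((N:ℝ)^j)⁻¹) 1 x y = A j 0 := by intro j; simp [hA]
  have e3 : ∀ j, av f 1 (((N:ℝ)^j)⁻¹) x y = A 0 j := by intro j; simp [hA]
  have e4 : av f 1 1 x y = A 0 0 := by simp [hA]
  rw [Finset.sum_product_right]
  simp only [e1, e2, e3, e4]
  have hk : ∀ k, ∑ j ∈ Finset.range n, ((A (j+1) (k+1) - A j (k+1)) - (A (j+1) k - A j k)) =
      (A n (k+1) - A 0 (k+1)) - (A n k - A 0 k) := by
    intro k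
    rw [Finset.sum_sub_distrib, Finset.sum_range_sub (fun j => A j (k+1)),
      Finset.sum_range_sub (fun j => A j k)]
  rw [Finset.sum_congr rfl fun k _ => hk k, Finset.sum_range_sub' (fun k => A k 0),
    Finset.sum_range_sub' (fun k => A 0 k)]
  rw [Finset.sum_range_sub (fun k => A n k - A 0 k)]
  simp only [hA]
  ring

lemma main_aux (hp : 1 < p) (hf : MemLp2 p f) (hJ : Jp p f < ⊤) (hI : Ip p f < ⊤) :
    (∃ g : ℝ → ℝ → ℝ, Continuous (Function.uncurry g) ∧
      ∀ᵐ z : ℝ × ℝ ∂volume, f z.1 z.2 = g z.1 z.2) ∧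
    ∀ᵐ z : ℝ × ℝ ∂volume, ‖f z.1 z.2‖ₑ ≤ ENNReal.ofReal 10000 * (lpNorm2 p f
              + ENNReal.ofReal (1 / (p * (p / (p - 1)))) * Jp p f
              + ENNReal.ofReal ((1 / (p * (p / (p - 1)))) ^ 2) * Ip p f) := by
  obtain ⟨N, c, τ, hN, hc, hτ, hS, hB⟩ := scheme hp
  have hB := hB f hf
  have hN1 : (1:ℝ) < N := by exact_mod_cast (by omega : 1 < N)
  have hN0 : (0:ℝ) < N := by linarith
  have s1 := sum1 hp hf c τ hS
  have s2 := sum2 hp hf c τ hS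
  set q := ENNReal.ofReal (1 / (p * (p / (p - 1)))) with hq
  set q2 := ENNReal.ofReal ((1 / (p * (p / (p - 1))))^2) with hq2
  set L := lpNorm2 p f with hL
  have hL' : L < ⊤ := hf.2.2
  have f1 : ∑' k, c k * modulus2 p f (τ k) ≠ ⊤ := by
    refine (s1.trans_lt ?_).ne
    refine ENNReal.add_lt_top.2 ⟨ENNReal.mul_lt_top (by simp) hL',
      ENNReal.mul_lt_top (by simp) (ENNReal.mul_lt_top (by simp [hq]) hJ)⟩
  have f2' : ∑' j, ∑' k, c j * (c k * mixedModulus p f (τ j) (τ k)) ≠ ⊤ := by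
    refine (s2.trans_lt ?_).ne
    refine ENNReal.add_lt_top.2 ⟨ENNReal.add_lt_top.2 ⟨ENNReal.mul_lt_top (by simp) hL',
      ENNReal.mul_lt_top (by simp) (ENNReal.mul_lt_top (by simp [hq]) hJ)⟩,
      ENNReal.mul_lt_top (by simp) (ENNReal.mul_lt_top (by simp [hq2]) hI)⟩
  rw [← ENNReal.tsum_prod (f := fun j k => c j * (c k * mixedModulus p f (τ j) (τ k)))] at s2 f2'
  set bP : ℕ → ℝ≥0∞ := fun k => c k * modulus2 p f (τ k) with hbP
  set bR : ℕ × ℕ → ℝ≥0∞ := fun z => c z.1 * (c z.2 * mixedModulus p f (τ z.1) (τ z.2)) with hbR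
  have hmod : ∀ ε : ℝ≥0∞, 0 < ε → ∃ δ, 0 < δ ∧ modulus2 p f δ < ε := by
    intro ε hε
    have h1 := ENNReal.tendsto_atTop_zero_of_tsum_ne_top f1
    obtain ⟨k, hk⟩ := (h1.eventually_lt_const hε).exists
    refine ⟨τ k, hτ k, lt_of_le_of_lt ?_ hk⟩
    simpa using mul_le_mul_left (hc k) (modulus2 p f (τ k))
  set T : ℕ → ℝ := fun n => ((N:ℝ)^n)⁻¹ with hT
  have hTpos : ∀ n, 0 < T n := fun n => by simp only [hT]; positivity
  have hT1 : ∀ n, T n ≤ 1 := fun n => inv_le_one_of_one_le₀ (one_le_pow₀ hN1.le)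
  have hT0 : Tendsto T atTop (nhds 0) :=
    (tendsto_pow_atTop_atTop_of_one_lt hN1).inv_tendsto_atTop
  have hcont : ∀ j k, Continuous (fun z : ℝ × ℝ => av f (T j) (T k) z.1 z.2) := fun j k =>
    av_cont hp hf hmod _ _ (hTpos j) (hT1 j) (hTpos k) (hT1 k)
  have hcx : ∀ j, Continuous (fun z : ℝ × ℝ => av f (T j) 1 z.1 z.2) := fun j =>
    av_cont hp hf hmod _ _ (hTpos j) (hT1 j) one_pos le_rfl
  have hcy : ∀ j, Continuous (fun z : ℝ × ℝ => av f 1 (T j) z.1 z.2) := fun j =>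
    av_cont hp hf hmod _ _ one_pos le_rfl (hTpos j) (hT1 j)
  have hc1 : Continuous (fun z : ℝ × ℝ => av f 1 1 z.1 z.2) :=
    av_cont hp hf hmod _ _ one_pos le_rfl one_pos le_rfl
  have key : ∀ k : ℕ, (N:ℝ) * T (k+1) = T k := by
    intro k
    simp only [hT]
    rw [pow_succ]; field_simp
  set P : ℕ → ℝ × ℝ → ℝ := fun k z => av f (T k) 1 z.1 z.2 - av f (T (k+1)) 1 z.1 z.2 with hP
  set Q : ℕ → ℝ × ℝ → ℝ := fun k z => av f 1 (T k) z.1 z.2 - av f 1 (T (k+1)) z.1 z.2 with hQ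
  set R : ℕ × ℕ → ℝ × ℝ → ℝ := fun i z => RR f N (T (i.1+1)) (T (i.2+1)) z.1 z.2 with hR
  have bdP : ∀ k z, ‖P k z‖ₑ ≤ bP k := fun k z => (hB z.1 z.2).1 k
  have bdQ : ∀ k z, ‖Q k z‖ₑ ≤ bP k := fun k z => (hB z.1 z.2).2.1 k
  have bdR : ∀ i z, ‖R i z‖ₑ ≤ bR i := fun i z => (hB z.1 z.2).2.2 i.1 i.2
  have cP : ∀ k, Continuous (P k) := fun k => (hcx k).sub (hcx (k+1))
  have cQ : ∀ k, Continuous (Q k) := fun k => (hcy k).sub (hcy (k+1))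
  have cR : ∀ i, Continuous (R i) := by
    intro i
    simp only [hR, RR, key]
    exact (((hcont _ _).sub (hcont _ _)).sub (hcont _ _)).add (hcont _ _)
  have real_bd : ∀ (b : ℝ≥0∞) (r : ℝ), b ≠ ⊤ → ‖r‖ₑ ≤ b → ‖r‖ ≤ b.toReal := by
    intro b r hb h
    rw [← toReal_enorm]
    exact ENNReal.toReal_mono hb h
  have nP : ∀ k, bP k ≠ ⊤ := ENNReal.ne_top_of_tsum_ne_top f1
  have nR : ∀ k, bR k ≠ ⊤ := ENNReal.ne_top_of_tsum_ne_top f2'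
  have sP := ENNReal.summable_toReal f1
  have sR := ENNReal.summable_toReal f2'
  have gP : Continuous (fun z => ∑' k, P k z) :=
    continuous_tsum cP sP fun k z => real_bd _ _ (nP k) (bdP k z)
  have gQ : Continuous (fun z => ∑' k, Q k z) :=
    continuous_tsum cQ sP fun k z => real_bd _ _ (nP k) (bdQ k z)
  have gR : Continuous (fun z => ∑' k, R k z) :=
    continuous_tsum cR sR fun k z => real_bd _ _ (nR k) (bdR k z)
  have htele : ∀ n (z : ℝ × ℝ), av f (T n) (T n) z.1 z.2 = av f 1 1 z.1 z.2
      - ∑ k ∈ Finset.range n, P k z - ∑ k ∈ Finset.range n, Q k z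
      + ∑ i ∈ Finset.range n ×ˢ Finset.range n, R i z := fun n z => tele f N hN n z.1 z.2
  set G : ℝ × ℝ → ℝ := fun z => av f 1 1 z.1 z.2 - ∑' k, P k z - ∑' k, Q k z + ∑' i, R i z with hG
  have hsq : Tendsto (fun n : ℕ => Finset.range n ×ˢ Finset.range n) atTop atTop := by
    refine tendsto_atTop_finset_of_monotone (fun a b hab => ?_) fun i => ?_
    · exact Finset.product_subset_product (Finset.range_mono hab) (Finset.range_mono hab)
    · refine ⟨max i.1 i.2 + 1, ?_⟩
      simp only [Finset.mem_product, Finset.mem_range]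
      omega
  have hlim : ∀ z : ℝ × ℝ, Tendsto (fun n => av f (T n) (T n) z.1 z.2) atTop (nhds (G z)) := by
    intro z
    simp_rw [htele]
    have hp1 : Summable (fun k => P k z) :=
      Summable.of_norm_bounded sP fun k => real_bd _ _ (nP k) (bdP k z)
    have hq1 : Summable (fun k => Q k z) :=
      Summable.of_norm_bounded sP fun k => real_bd _ _ (nP k) (bdQ k z)
    have hr1 : Summable (fun k => R k z) :=
      Summable.of_norm_bounded sR fun k => real_bd _ _ (nR k) (bdR k z)
    exact ((tendsto_const_nhds.sub hp1.hasSum.tendsto_sum_nat).sub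
      hq1.hasSum.tendsto_sum_nat).add (hr1.hasSum.comp hsq)
  have hbd : ∀ n (z : ℝ × ℝ), ‖av f (T n) (T n) z.1 z.2‖ₑ ≤
      ENNReal.ofReal 10000 * (L + q * Jp p f + q2 * Ip p f) := by
    intro n z
    have a1 : ‖∑ k ∈ Finset.range n, P k z‖ₑ ≤ 64 * L + 32 * (q * Jp p f) :=
      (enorm_sum_le _ _).trans ((Finset.sum_le_sum fun k _ => bdP k z).trans
        ((ENNReal.sum_le_tsum _).trans s1))
    have a2 : ‖∑ k ∈ Finset.range n, Q k z‖ₑ ≤ 64 * L + 32 * (q * Jp p f) :=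
      (enorm_sum_le _ _).trans ((Finset.sum_le_sum fun k _ => bdQ k z).trans
        ((ENNReal.sum_le_tsum _).trans s1))
    have a3 := (enorm_sum_le (Finset.range n ×ˢ Finset.range n) (fun i => R i z)).trans
      ((Finset.sum_le_sum fun k _ => bdR k z).trans ((ENNReal.sum_le_tsum _).trans s2))
    have a0 := av_one hp hf z.1 z.2
    rw [htele]
    refine (enorm_add_le _ _).trans ((add_le_add (enorm_sub_le.trans
      (add_le_add (enorm_sub_le.trans (add_le_add a0 a1)) a2)) a3).trans ?_)
    generalize q * Jp p f = b
    generalize q2 * Ip p f = d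
    rw [← hL]
    calc _ = 4225 * L + 4160 * b + 1024 * d := by ring
      _ ≤ 10000 * L + 10000 * b + 10000 * d := by gcongr <;> norm_num
      _ = _ := by rw [show ENNReal.ofReal 10000 = 10000 by simp]; ring
  have hae := ae_conv hp hf T hTpos hT0
  refine ⟨⟨fun x y => G (x, y), ?_, ?_⟩, ?_⟩
  · exact ((hc1.sub gP).sub gQ).add gR
  · filter_upwards [hae] with z hz
    exact tendsto_nhds_unique hz (hlim z)
  · filter_upwards [hae] with z hz
    exact le_of_tendsto hz.enorm (Eventually.of_forall fun n => hbd n z)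

end Helpers

/-- If `1 < p < ∞`, `f ∈ L^p([0,1]²)`, `J_p(f) < ∞` and `I_p(f) < ∞`,
then `f` agrees a.e. with a continuous function and
`‖f‖_∞ ≤ A [‖f‖_p + (1/(pp')) J_p(f) + (1/(pp'))² I_p(f)]` for an absolute constant `A`. -/
theorem statement0 :
    ∃ A : ℝ, 0 < A ∧
      ∀ (p : ℝ), 1 < p → ∀ f : ℝ → ℝ → ℝ,
        MemLp2 p f → Jp p f < ⊤ → Ip p f < ⊤ →
          (∃ g : ℝ → ℝ → ℝ, Continuous (Function.uncurry g) ∧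
              ∀ᵐ z : ℝ × ℝ ∂volume, f z.1 z.2 = g z.1 z.2) ∧
          supNorm2 f ≤ ENNReal.ofReal A *
            (lpNorm2 p f
              + ENNReal.ofReal (1 / (p * (p / (p - 1)))) * Jp p f
              + ENNReal.ofReal ((1 / (p * (p / (p - 1)))) ^ 2) * Ip p f) := by
  refine ⟨10000, by norm_num, fun p hp f hf hJ hI => ?_⟩
  obtain ⟨h1, h2⟩ := main_aux hp hf hJ hI
  refine ⟨h1, ?_⟩
  refine essSup_le_of_ae_le _ ?_
  filter_upwards [ae_restrict_of_ae h2] with z hz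
  rwa [Real.enorm_eq_ofReal_abs] at hz
end

section
/- Let 1 < p < ∞ and let f ∈ L^p([0,1]²) satisfy I_p(f) < ∞. Then there exist a continuous function g ∈ L^p_0([0,1]²) and univariate functions φ₁, φ₂ such that f(x,y) = g(x,y) + φ₁(x) + φ₂(y) for almost every (x,y) ∈ ℝ². -/
open MeasureTheory Filter Set
open scoped ENNReal

lemma aux_per1 (G : ℝ → ℝ≥0∞) (hG : ∀ x, G (x+1) = G x) (a : ℝ) :
    ∫⁻ x in Ioc a (a+1), G x = ∫⁻ x in Icc (0:ℝ) 1, G x := by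
  have h1 : ∫⁻ x in Icc (0:ℝ) 1, G x = ∫⁻ x in Ioc (0:ℝ) (0+1), G x := by
    rw [zero_add]; exact setLIntegral_congr Ioc_ae_eq_Icc.symm
  rw [h1]
  have hp : Function.Periodic G 1 := hG
  have : VAddInvariantMeasure (AddSubgroup.zmultiples (1:ℝ)) ℝ volume :=
    ⟨fun c s _ => measure_preimage_add _ _ _⟩
  exact (isAddFundamentalDomain_Ioc (T := (1:ℝ)) one_pos a).setLIntegral_eq
    (isAddFundamentalDomain_Ioc one_pos 0) G
    (fun g x => hp.map_vadd_zmultiples g x)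

lemma aux_per2 (G : ℝ → ℝ → ℝ≥0∞) (h1 : ∀ x y, G (x+1) y = G x y)
    (h2 : ∀ x y, G x (y+1) = G x y) (a b : ℝ) :
    ∫⁻ x in Ioc a (a+1), ∫⁻ y in Ioc b (b+1), G x y =
      ∫⁻ x in Icc (0:ℝ) 1, ∫⁻ y in Icc (0:ℝ) 1, G x y := by
  rw [← aux_per1 (fun x => ∫⁻ y in Icc (0:ℝ) 1, G x y) (by intro x; simp [h1]) a]
  refine lintegral_congr fun x => ?_
  exact aux_per1 (G x) (h2 x) b

/-- Hölder bound on a small rectangle -/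
lemma aux_holder (p : ℝ) (hp : 1 < p) (D : ℝ → ℝ → ℝ) (hD : Measurable (Function.uncurry D))
    (h1 : ∀ x y, D (x+1) y = D x y) (h2 : ∀ x y, D x (y+1) = D x y)
    (x y h k : ℝ) (hh : 0 ≤ h) (hk : 0 ≤ k) (hh1 : h ≤ 1) (hk1 : k ≤ 1) :
    ∫⁻ z in Ioc x (x+h) ×ˢ Ioc y (y+k), ‖Function.uncurry D z‖ₑ ≤
      (∫⁻ x in Set.Icc (0:ℝ) 1, ∫⁻ y in Set.Icc (0:ℝ) 1,
      ENNReal.ofReal (|D x y| ^ p)) ^ (1 / p) * ENNReal.ofReal ((h*k)^(1-1/p)) := by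
  have hpq : p.HolderConjugate p.conjExponent := Real.HolderConjugate.conjExponent hp
  have := ENNReal.lintegral_mul_le_Lp_mul_Lq (volume.restrict (Ioc x (x+h) ×ˢ Ioc y (y+k))) hpq
    (f := fun z => ‖Function.uncurry D z‖ₑ) (g := fun _ => 1) hD.enorm.aemeasurable aemeasurable_const
  simp only [Pi.mul_apply, mul_one] at this
  refine this.trans ?_
  gcongr ?_ * ?_
  · gcongr
    rw [← aux_per2 _ (by simp [h1]) (by simp [h2]) x y]
    have hle : Ioc x (x+h) ×ˢ Ioc y (y+k) ⊆ Ioc x (x+1) ×ˢ Ioc y (y+1) := by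
      apply Set.prod_mono <;> exact Ioc_subset_Ioc_right (by linarith)
    refine (lintegral_mono_set hle).trans ?_
    rw [Measure.volume_eq_prod, setLIntegral_prod _ (hD.enorm.pow_const p).aemeasurable]
    refine lintegral_mono fun a => lintegral_mono fun b => ?_
    simp only [Function.uncurry]
    rw [Real.enorm_eq_ofReal_abs, ENNReal.ofReal_rpow_of_nonneg (abs_nonneg _) (by linarith)]
  · rw [← ENNReal.ofReal_rpow_of_nonneg (by positivity) (by simpa using inv_le_one_of_one_le₀ hp.le)]
    simp only [ENNReal.one_rpow, lintegral_one, Measure.restrict_apply_univ]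
    rw [Measure.volume_eq_prod, Measure.prod_prod]
    simp only [Real.volume_Ioc, add_sub_cancel_left]
    rw [ENNReal.ofReal_mul hh, one_div, ← hpq.one_sub_inv, one_div]

lemma aux_locint (p : ℝ) (hp : 1 < p) (D : ℝ → ℝ → ℝ) (hD : Measurable (Function.uncurry D))
    (h1 : ∀ x y, D (x+1) y = D x y) (h2 : ∀ x y, D x (y+1) = D x y)
    (hfin : (∫⁻ x in Set.Icc (0:ℝ) 1, ∫⁻ y in Set.Icc (0:ℝ) 1,
      ENNReal.ofReal (|D x y| ^ p)) ^ (1 / p) < ⊤) :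
    LocallyIntegrable (Function.uncurry D) := by
  rintro ⟨x, y⟩
  refine ⟨Ioc (x-1/2) (x-1/2+1) ×ˢ Ioc (y-1/2) (y-1/2+1), ?_, ?_⟩
  · exact prod_mem_nhds (Ioc_mem_nhds (by linarith) (by linarith))
      (Ioc_mem_nhds (by linarith) (by linarith))
  · refine ⟨hD.aestronglyMeasurable, ?_⟩
    refine (aux_holder p hp D hD h1 h2 (x-1/2) (y-1/2) 1 1 zero_le_one zero_le_one le_rfl le_rfl).trans_lt ?_
    exact ENNReal.mul_lt_top hfin ENNReal.ofReal_lt_top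

lemma aux_intOn {F : ℝ × ℝ → ℝ} (hF : LocallyIntegrable F) (a b c d : ℝ) :
    IntegrableOn F (Ioc a b ×ˢ Ioc c d) :=
  (hF.integrableOn_isCompact (isCompact_Icc.prod isCompact_Icc)).mono_set
    (Set.prod_mono (Ioc_subset_Icc_self) (Ioc_subset_Icc_self) : _ ⊆ Icc a b ×ˢ Icc c d)

noncomputable def auxR (F : ℝ × ℝ → ℝ) (a b c d : ℝ) : ℝ := ∫ z in Ioc a b ×ˢ Ioc c d, F z

lemma auxR_add1 {F : ℝ × ℝ → ℝ} (hF : LocallyIntegrable F) {a b e c d : ℝ} (h : a ≤ b) (h' : b ≤ e) :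
    auxR F a e c d = auxR F a b c d + auxR F b e c d := by
  unfold auxR
  rw [← setIntegral_union _ (measurableSet_Ioc.prod measurableSet_Ioc) (aux_intOn hF _ _ _ _)
    (aux_intOn hF _ _ _ _), ← union_prod, Ioc_union_Ioc_eq_Ioc h h']
  rw [Set.disjoint_prod]; left
  exact Set.Ioc_disjoint_Ioc_of_le le_rfl

lemma auxR_add2 {F : ℝ × ℝ → ℝ} (hF : LocallyIntegrable F) {a b e c d : ℝ} (h : a ≤ b) (h' : b ≤ e) :
    auxR F c d a e = auxR F c d a b + auxR F c d b e := by
  unfold auxR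
  rw [← setIntegral_union _ (measurableSet_Ioc.prod measurableSet_Ioc) (aux_intOn hF _ _ _ _)
    (aux_intOn hF _ _ _ _), ← prod_union, Ioc_union_Ioc_eq_Ioc h h']
  rw [Set.disjoint_prod]; right
  exact Set.Ioc_disjoint_Ioc_of_le le_rfl

lemma auxR_shift (F : ℝ × ℝ → ℝ) (a b c d s t : ℝ) :
    auxR F (a+s) (b+s) (c+t) (d+t) = auxR (fun z => F (z + (s,t))) a b c d := by
  unfold auxR
  have := (measurePreserving_add_right (volume : Measure (ℝ×ℝ)) (s,t)).setIntegral_preimage_emb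
    (MeasurableEquiv.addRight (s,t)).measurableEmbedding F (Ioc (a+s) (b+s) ×ˢ Ioc (c+t) (d+t))
  rw [← this]
  congr 2
  ext ⟨x,y⟩
  simp

lemma auxR_cont {F : ℝ × ℝ → ℝ} (hF : LocallyIntegrable F) (h k : ℝ) :
    Continuous (fun w : ℝ × ℝ => auxR F w.1 (w.1+h) w.2 (w.2+k)) := by
  have e : ∀ w : ℝ × ℝ, auxR F w.1 (w.1+h) w.2 (w.2+k) =
      ∫ z, (Ioc 0 h ×ˢ Ioc 0 k : Set (ℝ×ℝ)).indicator (fun _ => (1:ℝ)) (z - w) * F z := by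
    intro w
    unfold auxR
    rw [← integral_indicator (measurableSet_Ioc.prod measurableSet_Ioc)]
    congr 1
    ext z
    simp only [indicator, mem_prod, mem_Ioc, Prod.fst_sub, Prod.snd_sub, sub_pos, ite_mul, one_mul, zero_mul, sub_le_iff_le_add, add_comm]
  simp_rw [e]
  set S : Set (ℝ×ℝ) := Ioc 0 h ×ˢ Ioc 0 k with hS
  have hSm : MeasurableSet S := measurableSet_Ioc.prod measurableSet_Ioc
  rw [continuous_iff_continuousAt]
  intro w
  set B : Set (ℝ×ℝ) := Icc (w.1-1) (w.1+1+h) ×ˢ Icc (w.2-1) (w.2+1+k) with hB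
  have hBm : MeasurableSet B := measurableSet_Icc.prod measurableSet_Icc
  refine continuousAt_of_dominated (bound := B.indicator (fun z => ‖F z‖)) ?_ ?_ ?_ ?_
  · refine Eventually.of_forall fun x => ?_
    refine AEStronglyMeasurable.mul ?_ hF.aestronglyMeasurable
    exact ((measurable_const.indicator hSm).comp (measurable_id.sub_const x)).aestronglyMeasurable
  · filter_upwards [Metric.ball_mem_nhds w one_pos] with x hx
    refine Eventually.of_forall fun z => ?_
    have hx1 : |x.1 - w.1| < 1 ∧ |x.2 - w.2| < 1 := by
      simpa [Prod.dist_eq, Real.dist_eq] using hx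
    rw [abs_lt, abs_lt] at hx1
    by_cases hz : z - x ∈ S
    · have : z ∈ B := by
        simp only [hS, hB, mem_prod, mem_Ioc, mem_Icc, Prod.fst_sub, Prod.snd_sub] at hz ⊢
        refine ⟨⟨?_, ?_⟩, ?_, ?_⟩ <;> linarith [hx1.1.1, hx1.1.2, hx1.2.1, hx1.2.2, hz.1.1, hz.1.2, hz.2.1, hz.2.2]
      simp [hz, this]
    · simp only [indicator_of_notMem hz, zero_mul, norm_zero]
      exact indicator_nonneg (fun _ _ => norm_nonneg _) _
  · rw [integrable_indicator_iff hBm]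
    exact (hF.integrableOn_isCompact (isCompact_Icc.prod isCompact_Icc)).norm
  · have hfr : volume (frontier S) = 0 :=
      ((convex_Ioc _ _).prod (convex_Ioc _ _)).addHaar_frontier _
    have h0 : ∀ᵐ z ∂(volume : Measure (ℝ×ℝ)), z - w ∉ frontier S := by
      have := (measurePreserving_sub_right (volume : Measure (ℝ×ℝ)) w).quasiMeasurePreserving.ae
        (measure_eq_zero_iff_ae_notMem.mp hfr)
      exact this
    filter_upwards [h0] with z hz
    refine ContinuousAt.mul ?_ continuousAt_const
    have : ContinuousAt (S.indicator (fun _ => (1:ℝ))) (z - w) := by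
      rcases (em (z - w ∈ interior S)) with hi | hi
      · refine (continuousAt_const (y := (1:ℝ))).congr ?_
        filter_upwards [isOpen_interior.mem_nhds hi] with q hq
        simp [interior_subset hq]
      · have hc : z - w ∈ (closure S)ᶜ := fun h => hz ⟨h, hi⟩
        refine (continuousAt_const (y := (0:ℝ))).congr ?_
        filter_upwards [isClosed_closure.isOpen_compl.mem_nhds hc] with q hq
        have : q ∉ S := fun h => hq (subset_closure h)
        simp [this]
    exact ContinuousAt.comp (f := fun x => z - x) (x := w) this (by fun_prop)

noncomputable def auxP (F : ℝ × ℝ → ℝ) (j k : ℕ) (w : ℝ × ℝ) : ℝ :=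
  auxR F w.1 (w.1 + (1/2)^j) w.2 (w.2 + (1/2)^k) / ((1/2)^j * (1/2)^k)

noncomputable def auxA (F : ℝ × ℝ → ℝ) (j k : ℕ) (w : ℝ × ℝ) : ℝ :=
  auxP F (j+1) (k+1) w - auxP F j (k+1) w - auxP F (j+1) k w + auxP F j k w

lemma auxP_cont {F : ℝ × ℝ → ℝ} (hF : LocallyIntegrable F) (j k : ℕ) :
    Continuous (auxP F j k) := (auxR_cont hF _ _).div_const _

lemma auxA_cont {F : ℝ × ℝ → ℝ} (hF : LocallyIntegrable F) (j k : ℕ) :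
    Continuous (auxA F j k) :=
  (((auxP_cont hF _ _).sub (auxP_cont hF _ _)).sub (auxP_cont hF _ _)).add (auxP_cont hF _ _)

lemma aux_locint_shift {F : ℝ × ℝ → ℝ} (hF : LocallyIntegrable F) (s : ℝ × ℝ) :
    LocallyIntegrable (fun z => F (z + s)) := by
  intro z
  obtain ⟨U, hU, hi⟩ := hF (z + s)
  refine ⟨(fun z => z + s) ⁻¹' U, (continuous_add_const s).continuousAt hU, ?_⟩
  exact ((measurePreserving_add_right (volume : Measure (ℝ×ℝ)) s).integrableOn_comp_preimage
    (MeasurableEquiv.addRight s).measurableEmbedding).2 hi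

lemma auxA_eq {F : ℝ × ℝ → ℝ} (hF : LocallyIntegrable F) (j k : ℕ) (w : ℝ × ℝ) :
    auxA F j k w = auxR (fun z => F (z + ((1/2)^(j+1), (1/2)^(k+1))) - F (z + ((1/2)^(j+1), 0))
      - F (z + (0, (1/2)^(k+1))) + F z) w.1 (w.1 + (1/2)^(j+1)) w.2 (w.2 + (1/2)^(k+1))
      / (4 * ((1/2)^(j+1) * (1/2)^(k+1))) := by
  have hj : (1/2:ℝ)^j = 2 * (1/2)^(j+1) := by rw [pow_succ]; ring
  have hk : (1/2:ℝ)^k = 2 * (1/2)^(k+1) := by rw [pow_succ]; ring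
  unfold auxA auxP
  rw [hj, hk]
  have h0 : (0:ℝ) < (1/2)^(j+1) := by positivity
  have k0 : (0:ℝ) < (1/2)^(k+1) := by positivity
  generalize (1/2:ℝ)^(j+1) = h at *
  generalize (1/2:ℝ)^(k+1) = l at *
  obtain ⟨x, y⟩ := w
  simp only
  have e : auxR (fun z => F (z + (h, l)) - F (z + (h, 0)) - F (z + (0, l)) + F z)
      x (x+h) y (y+l) = auxR F (x+h) (x+h+h) (y+l) (y+l+l) - auxR F (x+h) (x+h+h) y (y+l)
        - auxR F x (x+h) (y+l) (y+l+l) + auxR F x (x+h) y (y+l) := by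
    have e1 := auxR_shift F x (x+h) y (y+l) h l
    have e2 := auxR_shift F x (x+h) y (y+l) h 0
    have e3 := auxR_shift F x (x+h) y (y+l) 0 l
    simp only [add_zero] at e2 e3
    rw [e1, e2, e3]
    unfold auxR
    have i1 := aux_intOn (aux_locint_shift hF (h,l)) x (x+h) y (y+l)
    have i2 := aux_intOn (aux_locint_shift hF (h,0)) x (x+h) y (y+l)
    have i3 := aux_intOn (aux_locint_shift hF (0,l)) x (x+h) y (y+l)
    have i4 := aux_intOn hF x (x+h) y (y+l)
    refine (integral_add ((i1.sub i2).sub i3) i4).trans ?_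
    congr 1
    refine (integral_sub (i1.sub i2) i3).trans ?_
    congr 1
    exact integral_sub i1 i2
  rw [e]
  have a1 : ∀ c d, auxR F x (x + 2*h) c d = auxR F x (x+h) c d + auxR F (x+h) (x+h+h) c d := by
    intro c d
    rw [show x + 2*h = x+h+h by ring]
    exact auxR_add1 hF (by linarith) (by linarith)
  have a2 : ∀ c d, auxR F c d y (y + 2*l) = auxR F c d y (y+l) + auxR F c d (y+l) (y+l+l) := by
    intro c d
    rw [show y + 2*l = y+l+l by ring]
    exact auxR_add2 hF (by linarith) (by linarith)
  simp only [a1, a2]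
  field_simp
  ring

noncomputable def auxB (p : ℝ) (f : ℝ → ℝ → ℝ) (j k : ℕ) : ℝ≥0∞ :=
  ENNReal.ofReal (((1/2)^j * (1/2)^k) ^ (-(1/p)) / ((1/2)^j * (1/2)^k)) *
    mixedModulus p f ((1/2)^(j+1)) ((1/2)^(k+1)) *
    ENNReal.ofReal ((1/2)^(k+1)) * ENNReal.ofReal ((1/2)^(j+1))

lemma auxA_bound (p : ℝ) (hp : 1 < p) (f : ℝ → ℝ → ℝ) (hf : MemLp2 p f)
    (hF : LocallyIntegrable (Function.uncurry f)) (j k : ℕ) (w : ℝ × ℝ) :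
    ‖auxA (Function.uncurry f) j k w‖ₑ ≤ 4 * auxB p f j k := by
  rw [auxA_eq hF]
  unfold auxB
  have hj : (1/2:ℝ)^j = 2 * (1/2)^(j+1) := by rw [pow_succ]; ring
  have hk : (1/2:ℝ)^k = 2 * (1/2)^(k+1) := by rw [pow_succ]; ring
  rw [hj, hk]
  have h0 : (0:ℝ) < (1/2)^(j+1) := by positivity
  have k0 : (0:ℝ) < (1/2)^(k+1) := by positivity
  have h1 : (1/2:ℝ)^(j+1) ≤ 1 := pow_le_one₀ (by norm_num) (by norm_num)
  have k1 : (1/2:ℝ)^(k+1) ≤ 1 := pow_le_one₀ (by norm_num) (by norm_num)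
  generalize (1/2:ℝ)^(j+1) = h at *
  generalize (1/2:ℝ)^(k+1) = l at *
  obtain ⟨hm, ⟨p1, p2⟩, -⟩ := hf
  set D : ℝ → ℝ → ℝ := fun x y => f (x + h) (y + l) - f (x + h) y - f x (y + l) + f x y with hD
  have hDm : Measurable (Function.uncurry D) := by
    have m : ∀ s t : ℝ, Measurable (fun z : ℝ × ℝ => f (z.1 + s) (z.2 + t)) := fun s t =>
      hm.comp (by fun_prop : Measurable fun z : ℝ × ℝ => (z.1 + s, z.2 + t))
    have m1 := m h l
    have m2 := m h 0
    have m3 := m 0 l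
    have m4 := m 0 0
    simp only [add_zero] at m2 m3 m4
    exact ((m1.sub m2).sub m3).add m4
  have d1 : ∀ x y, D (x+1) y = D x y := by
    intro x y; simp only [hD, add_right_comm x 1 h, p1]
  have d2 : ∀ x y, D x (y+1) = D x y := by
    intro x y; simp only [hD, add_right_comm y 1 l, p2]
  have eD : (fun z : ℝ × ℝ => Function.uncurry f (z + (h, l)) - Function.uncurry f (z + (h, 0))
      - Function.uncurry f (z + (0, l)) + Function.uncurry f z) = Function.uncurry D := by
    ext ⟨x, y⟩; simp [hD]
  rw [eD]
  have key : ‖auxR (Function.uncurry D) w.1 (w.1 + h) w.2 (w.2 + l)‖ₑ ≤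
      mixedModulus p f h l * ENNReal.ofReal ((h*l)^(1-1/p)) := by
    refine (enorm_integral_le_lintegral_enorm _).trans ?_
    refine (aux_holder p hp D hDm d1 d2 w.1 w.2 h l h0.le k0.le h1 k1).trans ?_
    gcongr
    unfold mixedModulus
    exact le_iSup₂_of_le h ⟨h0.le, le_rfl⟩ (le_iSup₂_of_le l ⟨k0.le, le_rfl⟩ le_rfl)
  rw [div_eq_mul_inv, enorm_mul]
  have hinv : ‖(4 * (h*l))⁻¹‖ₑ = ENNReal.ofReal ((4 * (h*l))⁻¹) :=
    Real.enorm_eq_ofReal (by positivity)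
  rw [hinv]
  calc _ ≤ mixedModulus p f h l * ENNReal.ofReal ((h*l)^(1-1/p)) * ENNReal.ofReal ((4 * (h*l))⁻¹) := by
        gcongr
    _ = mixedModulus p f h l * ENNReal.ofReal ((h*l)^(1-1/p) * (4 * (h*l))⁻¹) := by
        rw [mul_assoc, ENNReal.ofReal_mul (by positivity)]
    _ ≤ mixedModulus p f h l *
        ENNReal.ofReal (4 * ((2*h * (2*l)) ^ (-(1/p)) / (2*h * (2*l)) * l * h)) := by
        gcongr mixedModulus p f h l * ENNReal.ofReal ?_
        have hx : 0 < h * l := by positivity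
        rw [show 2*h*(2*l) = 4*(h*l) by ring, Real.mul_rpow (by norm_num) hx.le,
          sub_eq_add_neg, Real.rpow_add hx, Real.rpow_one]
        have h4 : (1/4:ℝ) ≤ 4 ^ (-(1/p)) := by
          have : (4:ℝ)^(-1:ℝ) ≤ 4 ^ (-(1/p)) := by
            apply Real.rpow_le_rpow_of_exponent_le (by norm_num)
            have : 1/p ≤ 1 := by rw [div_le_one (by linarith)]; exact hp.le
            linarith
          rw [Real.rpow_neg_one] at this
          linarith
        have hr : 0 < (h*l) ^ (-(1/p)) := by positivity
        have e1 : h * l * (h*l) ^ (-(1/p)) * (4 * (h*l))⁻¹ = 1/4 * (h*l) ^ (-(1/p)) := by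
          field_simp
        have e2 : 4 * (4 ^ (-(1/p)) * (h*l) ^ (-(1/p)) / (4 * (h*l)) * l * h) =
          4 ^ (-(1/p)) * (h*l) ^ (-(1/p)) := by
          field_simp
        rw [e1, e2]
        gcongr
    _ = _ := by
        rw [ENNReal.ofReal_mul (by norm_num), ENNReal.ofReal_mul (by positivity),
          ENNReal.ofReal_mul (by positivity)]
        simp only [ENNReal.ofReal_ofNat]
        ring

lemma mixedModulus_mono (p : ℝ) (f : ℝ → ℝ → ℝ) {u v u' v' : ℝ} (hu : u ≤ u') (hv : v ≤ v') :
    mixedModulus p f u v ≤ mixedModulus p f u' v' := by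
  unfold mixedModulus
  refine iSup₂_le fun s hs => iSup₂_le fun t ht => ?_
  exact le_iSup₂_of_le s ⟨hs.1, hs.2.trans hu⟩ (le_iSup₂_of_le t ⟨ht.1, ht.2.trans hv⟩ le_rfl)

lemma aux_dyadic (G : ℝ → ℝ≥0∞) (c : ℕ → ℝ≥0∞)
    (h : ∀ k, ∀ v ∈ Ioc ((1/2:ℝ)^(k+1)) ((1/2)^k), c k ≤ G v) :
    ∑' k, c k * ENNReal.ofReal ((1/2)^(k+1)) ≤ ∫⁻ v in Ioc (0:ℝ) 1, G v := by
  have hd : Pairwise (Function.onFun Disjoint (fun k : ℕ => Ioc ((1/2:ℝ)^(k+1)) ((1/2)^k))) := by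
    have : Antitone (fun k : ℕ => (1/2:ℝ)^k) := pow_right_anti₀ (by norm_num) (by norm_num)
    have := this.pairwise_disjoint_on_Ioc_succ
    exact this
  calc _ ≤ ∑' k, ∫⁻ v in Ioc ((1/2:ℝ)^(k+1)) ((1/2)^k), G v := by
        refine ENNReal.tsum_le_tsum fun k => ?_
        have e : ENNReal.ofReal ((1/2)^(k+1)) = volume (Ioc ((1/2:ℝ)^(k+1)) ((1/2)^k)) := by
          rw [Real.volume_Ioc]; congr 1; rw [pow_succ]; ring
        rw [e, ← setLIntegral_const]
        exact setLIntegral_mono' measurableSet_Ioc (h k)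
    _ = ∫⁻ v in ⋃ k : ℕ, Ioc ((1/2:ℝ)^(k+1)) ((1/2)^k), G v :=
        (lintegral_iUnion (fun _ => measurableSet_Ioc) hd _).symm
    _ ≤ _ := by
        refine lintegral_mono_set (iUnion_subset fun k => ?_)
        exact Ioc_subset_Ioc (by positivity) (pow_le_one₀ (by norm_num) (by norm_num))

lemma auxB_sum (p : ℝ) (hp : 1 < p) (f : ℝ → ℝ → ℝ) :
    ∑' j, ∑' k, auxB p f j k ≤ Ip p f := by
  unfold Ip auxB
  simp_rw [ENNReal.tsum_mul_right]
  refine aux_dyadic _ _ fun j u hu => ?_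
  refine aux_dyadic _ _ fun k v hv => ?_
  have h0 : (0:ℝ) < (1/2)^(j+1) := by positivity
  have k0 : (0:ℝ) < (1/2)^(k+1) := by positivity
  have hu0 := h0.trans hu.1
  have hv0 := k0.trans hv.1
  gcongr ENNReal.ofReal ?_ * ?_
  · have hle : u * v ≤ (1/2)^j * (1/2)^k := by
      have := hu.2
      have := hv.2
      gcongr
    have hpos : 0 < u * v := by positivity
    refine div_le_div₀ (by positivity) ?_ hpos hle
    refine Real.rpow_le_rpow_of_nonpos hpos hle ?_
    have : 0 < 1/p := by positivity
    linarith
  · exact mixedModulus_mono p f hu.1.le hv.1.le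

lemma auxA_tele (F : ℝ × ℝ → ℝ) (J : ℕ) (w : ℝ × ℝ) :
    ∑ q ∈ Finset.range J ×ˢ Finset.range J, auxA F q.1 q.2 w =
      auxP F J J w - auxP F 0 J w - auxP F J 0 w + auxP F 0 0 w := by
  rw [Finset.sum_product]
  have e : ∀ j, ∑ k ∈ Finset.range J, auxA F j k w =
      (auxP F (j+1) J w - auxP F j J w) - (auxP F (j+1) 0 w - auxP F j 0 w) := by
    intro j
    have := Finset.sum_range_sub (fun k => auxP F (j+1) k w - auxP F j k w) J
    refine Eq.trans (Eq.trans ?_ this) (by ring)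
    refine Finset.sum_congr rfl fun k _ => ?_
    unfold auxA; ring
  simp_rw [e]
  rw [Finset.sum_sub_distrib, Finset.sum_range_sub (fun j => auxP F j J w),
    Finset.sum_range_sub (fun j => auxP F j 0 w)]
  ring

lemma aux_half_tendsto : Tendsto (fun J : ℕ => (1/2:ℝ)^J / 2) atTop (nhdsWithin 0 (Ioi 0)) := by
  refine tendsto_nhdsWithin_iff.2 ⟨?_, Eventually.of_forall fun J => ?_⟩
  · simpa using (tendsto_pow_atTop_nhds_zero_of_lt_one (r := (1/2:ℝ)) (by norm_num) (by norm_num)).div_const 2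
  · simp only [mem_Ioi]; positivity

lemma aux_leb1 {m : ℝ → ℝ} (hm : LocallyIntegrable m) :
    ∀ᵐ x, Tendsto (fun J : ℕ => (∫ t in Ioc x (x + (1/2)^J), m t) / (1/2)^J) atTop (nhds (m x)) := by
  filter_upwards [IsUnifLocDoublingMeasure.ae_tendsto_average (μ := volume) hm 1] with x hx
  have := hx (fun J : ℕ => x + (1/2)^J / 2) (fun J : ℕ => (1/2)^J / 2) aux_half_tendsto
    (Eventually.of_forall fun J => by
      simp [Real.dist_eq, abs_of_nonneg])
  refine this.congr fun J => ?_
  have hJ : (0:ℝ) < (1/2)^J := by positivity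
  rw [setAverage_eq, Real.closedBall_eq_Icc, show x + (1/2:ℝ)^J/2 - (1/2)^J/2 = x by ring,
    show x + (1/2:ℝ)^J/2 + (1/2)^J/2 = x + (1/2)^J by ring, integral_Icc_eq_integral_Ioc,
    measureReal_def, Real.volume_Icc, add_sub_cancel_left, ENNReal.toReal_ofReal hJ.le, smul_eq_mul,
    inv_mul_eq_div]

lemma aux_leb2 {F : ℝ × ℝ → ℝ} (hF : LocallyIntegrable F) :
    ∀ᵐ z, Tendsto (fun J : ℕ => auxP F J J z) atTop (nhds (F z)) := by
  filter_upwards [IsUnifLocDoublingMeasure.ae_tendsto_average (μ := volume) hF 1] with z hx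
  obtain ⟨x, y⟩ := z
  have := hx (fun J : ℕ => (x + (1/2)^J / 2, y + (1/2)^J / 2)) (fun J : ℕ => (1/2)^J / 2)
    aux_half_tendsto
    (Eventually.of_forall fun J => by
      simp [Prod.dist_eq, Real.dist_eq, abs_of_nonneg])
  refine this.congr fun J => ?_
  have hJ : (0:ℝ) < (1/2)^J := by positivity
  rw [setAverage_eq, ← closedBall_prod_same, Real.closedBall_eq_Icc, Real.closedBall_eq_Icc,
    show x + (1/2:ℝ)^J/2 - (1/2)^J/2 = x by ring,
    show x + (1/2:ℝ)^J/2 + (1/2)^J/2 = x + (1/2)^J by ring,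
    show y + (1/2:ℝ)^J/2 - (1/2)^J/2 = y by ring,
    show y + (1/2:ℝ)^J/2 + (1/2)^J/2 = y + (1/2)^J by ring]
  unfold auxP auxR
  have hae : (Icc x (x + (1/2)^J) ×ˢ Icc y (y + (1/2)^J) : Set (ℝ×ℝ)) =ᵐ[volume]
      (Ioc x (x + (1/2)^J) ×ˢ Ioc y (y + (1/2)^J) : Set (ℝ×ℝ)) := by
    rw [Measure.volume_eq_prod]
    exact Measure.set_prod_ae_eq Ioc_ae_eq_Icc.symm Ioc_ae_eq_Icc.symm
  rw [setIntegral_congr_set hae, measureReal_def, Measure.volume_eq_prod, Measure.prod_prod,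
    Real.volume_Icc, Real.volume_Icc, add_sub_cancel_left, add_sub_cancel_left, ENNReal.toReal_mul,
    ENNReal.toReal_ofReal hJ.le, smul_eq_mul, inv_mul_eq_div]

noncomputable def auxM (f : ℝ → ℝ → ℝ) (s : ℝ) : ℝ := ∫ t in Ioc (0:ℝ) 1, f s t

lemma aux_intOn' {f : ℝ → ℝ → ℝ} (hF : LocallyIntegrable (Function.uncurry f)) (a b c d : ℝ) :
    Integrable (Function.uncurry f) ((volume.restrict (Ioc a b)).prod (volume.restrict (Ioc c d))) := by
  rw [Measure.prod_restrict, ← Measure.volume_eq_prod]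
  exact aux_intOn hF a b c d

lemma auxM_loc {f : ℝ → ℝ → ℝ} (hF : LocallyIntegrable (Function.uncurry f)) :
    LocallyIntegrable (auxM f) := by
  intro x
  refine ⟨Ioc (x-1) (x+1), Ioc_mem_nhds (by linarith) (by linarith), ?_⟩
  exact (aux_intOn' hF (x-1) (x+1) 0 1).integral_prod_left

lemma aux_perint (g : ℝ → ℝ) (hg : ∀ x, g (x+1) = g x) (a : ℝ) :
    ∫ x in Ioc a (a+1), g x = ∫ x in Ioc (0:ℝ) 1, g x := by
  have := Function.Periodic.intervalIntegral_add_eq (f := g) (T := 1) hg a 0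
  rw [intervalIntegral.integral_of_le (by linarith), intervalIntegral.integral_of_le (by linarith),
    zero_add] at this
  exact this

lemma auxP_zero {f : ℝ → ℝ → ℝ} (hF : LocallyIntegrable (Function.uncurry f))
    (h2 : ∀ x y, f x (y+1) = f x y) (J : ℕ) (w : ℝ × ℝ) :
    auxP (Function.uncurry f) J 0 w = (∫ s in Ioc w.1 (w.1 + (1/2)^J), auxM f s) / (1/2)^J := by
  unfold auxP auxR
  rw [pow_zero, mul_one, Measure.volume_eq_prod, setIntegral_prod]
  · congr 1
    refine integral_congr_ae (Eventually.of_forall fun s => ?_)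
    exact aux_perint (f s) (h2 s) w.2
  · have := aux_intOn hF w.1 (w.1 + (1/2)^J) w.2 (w.2 + 1)
    rwa [Measure.volume_eq_prod] at this

lemma auxP_zero_zero {f : ℝ → ℝ → ℝ} (hF : LocallyIntegrable (Function.uncurry f))
    (h1 : ∀ x y, f (x+1) y = f x y)
    (h2 : ∀ x y, f x (y+1) = f x y) (w : ℝ × ℝ) :
    auxP (Function.uncurry f) 0 0 w = ∫ s in Ioc (0:ℝ) 1, auxM f s := by
  rw [auxP_zero hF h2, pow_zero, div_one]
  exact aux_perint (auxM f) (fun x => by simp only [auxM, h1]) w.1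

lemma auxR_swap (f : ℝ → ℝ → ℝ) (a b c d : ℝ) :
    auxR (Function.uncurry f) a b c d = auxR (Function.uncurry (flip f)) c d a b := by
  unfold auxR
  rw [Measure.volume_eq_prod, ← setIntegral_prod_swap]
  rfl

lemma auxP_swap (f : ℝ → ℝ → ℝ) (j k : ℕ) (w : ℝ × ℝ) :
    auxP (Function.uncurry f) j k w = auxP (Function.uncurry (flip f)) k j w.swap := by
  unfold auxP
  rw [auxR_swap, mul_comm]
  rfl

lemma aux_swap_mp : MeasurePreserving (Prod.swap : ℝ × ℝ → ℝ × ℝ) volume volume :=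
  Measure.measurePreserving_swap

lemma aux_loc_flip {f : ℝ → ℝ → ℝ} (hF : LocallyIntegrable (Function.uncurry f)) :
    LocallyIntegrable (Function.uncurry (flip f)) := by
  intro z
  obtain ⟨U, hU, hi⟩ := hF z.swap
  refine ⟨Prod.swap ⁻¹' U, continuous_swap.continuousAt hU, ?_⟩
  exact (aux_swap_mp.integrableOn_comp_preimage
    (MeasurableEquiv.prodComm (α := ℝ) (β := ℝ)).measurableEmbedding).2 hi

lemma aux_sec {f : ℝ → ℝ → ℝ} (hF : LocallyIntegrable (Function.uncurry f)) :
    ∀ᵐ x, IntegrableOn (f x) (Ioc (0:ℝ) 1) := by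
  have h : ∀ n : ℤ, ∀ᵐ x ∂(volume.restrict (Ioc (n:ℝ) (n+1))), IntegrableOn (f x) (Ioc (0:ℝ) 1) :=
    fun n => (aux_intOn' hF n (n+1) 0 1).prod_right_ae
  have := (ae_restrict_iUnion_iff _ _).2 h
  rwa [iUnion_Ioc_intCast, Measure.restrict_univ] at this

lemma aux_mean {f g : ℝ → ℝ → ℝ} (hF : LocallyIntegrable (Function.uncurry f))
    (c : ℝ) (hc : ∫ s in Ioc (0:ℝ) 1, auxM (flip f) s = c)
    (h : ∀ᵐ z : ℝ × ℝ, g z.1 z.2 = f z.1 z.2 - auxM f z.1 - auxM (flip f) z.2 + c) :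
    ∀ᵐ x, ∫ t in (0:ℝ)..1, g x t = 0 := by
  rw [Measure.volume_eq_prod] at h
  filter_upwards [Measure.ae_ae_of_ae_prod h, aux_sec hF] with x hx hs
  rw [intervalIntegral.integral_of_le zero_le_one, integral_congr_ae (ae_restrict_of_ae hx)]
  have hm : IntegrableOn (auxM (flip f)) (Ioc (0:ℝ) 1) :=
    ((auxM_loc (aux_loc_flip hF)).integrableOn_isCompact isCompact_Icc).mono_set Ioc_subset_Icc_self
  have hk : ∀ r : ℝ, IntegrableOn (fun _ => r) (Ioc (0:ℝ) 1) := fun r => by simp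
  have e : ∫ t in Ioc (0:ℝ) 1, (f x t - auxM f x - auxM (flip f) t + c) =
      (∫ t in Ioc (0:ℝ) 1, f x t) - (∫ t in Ioc (0:ℝ) 1, auxM f x) -
      (∫ t in Ioc (0:ℝ) 1, auxM (flip f) t) + ∫ t in Ioc (0:ℝ) 1, c := by
    refine (integral_add ((hs.sub (hk _)).sub hm) (hk c)).trans ?_
    congr 1
    refine (integral_sub (hs.sub (hk _)) hm).trans ?_
    congr 1
    exact integral_sub hs (hk _)
  refine e.trans ?_
  rw [hc]
  simp [auxM]

lemma auxP_per1 {f : ℝ → ℝ → ℝ} (h1 : ∀ x y, f (x+1) y = f x y) (j k : ℕ) (x y : ℝ) :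
    auxP (Function.uncurry f) j k (x+1, y) = auxP (Function.uncurry f) j k (x, y) := by
  unfold auxP
  have := auxR_shift (Function.uncurry f) x (x+(1/2)^j) y (y+(1/2)^k) 1 0
  have e : (fun z : ℝ × ℝ => Function.uncurry f (z + (1,0))) = Function.uncurry f := by
    ext ⟨a, b⟩; simp [h1]
  rw [e] at this
  simp only [add_zero] at this
  simp only [add_right_comm x 1, this]

lemma auxP_per2 {f : ℝ → ℝ → ℝ} (h2 : ∀ x y, f x (y+1) = f x y) (j k : ℕ) (x y : ℝ) :
    auxP (Function.uncurry f) j k (x, y+1) = auxP (Function.uncurry f) j k (x, y) := by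
  rw [auxP_swap, auxP_swap f j k (x,y)]
  exact auxP_per1 (f := flip f) (fun a b => h2 b a) k j y x

/-- If `1 < p < ∞`, `f ∈ L^p([0,1]²)` and `I_p(f) < ∞`, then there exist
a continuous `g ∈ L^p_0([0,1]²)` and univariate functions `φ₁, φ₂` with
`f(x,y) = g(x,y) + φ₁(x) + φ₂(y)` a.e. -/
theorem statement1 (p : ℝ) (hp : 1 < p) (f : ℝ → ℝ → ℝ)
    (hf : MemLp2 p f) (hI : Ip p f < ⊤) :
    ∃ (g : ℝ → ℝ → ℝ) (φ₁ φ₂ : ℝ → ℝ),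
      Continuous (Function.uncurry g) ∧ MemLp20 p g ∧
      ∀ᵐ z : ℝ × ℝ ∂volume, f z.1 z.2 = g z.1 z.2 + φ₁ z.1 + φ₂ z.2 := by

  have hf' := hf
  obtain ⟨hm, ⟨p1, p2⟩, hfin⟩ := hf'
  have hF : LocallyIntegrable (Function.uncurry f) := aux_locint p hp f hm p1 p2 hfin
  have hF' := aux_loc_flip hF
  set F := Function.uncurry f with hFdef
  set u : ℕ × ℕ → ℝ := fun q => (4 * auxB p f q.1 q.2).toReal with hu
  have hsum : ∑' q : ℕ × ℕ, 4 * auxB p f q.1 q.2 ≠ ⊤ := by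
    rw [ENNReal.tsum_mul_left, ENNReal.tsum_prod]
    exact ENNReal.mul_ne_top (by simp) ((auxB_sum p hp f).trans_lt hI).ne
  have hus : Summable u := ENNReal.summable_toReal hsum
  have hbd : ∀ (q : ℕ × ℕ) (w : ℝ × ℝ), ‖auxA F q.1 q.2 w‖ ≤ u q := by
    intro q w
    have := auxA_bound p hp f hf hF q.1 q.2 w
    rw [← toReal_enorm]
    exact ENNReal.toReal_mono (ENNReal.ne_top_of_tsum_ne_top hsum q) this
  set G : ℝ × ℝ → ℝ := fun w => ∑' q : ℕ × ℕ, auxA F q.1 q.2 w with hG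
  have hGc : Continuous G := continuous_tsum (fun q => auxA_cont hF q.1 q.2) hus hbd
  set c : ℝ := ∫ s in Ioc (0:ℝ) 1, auxM f s with hc
  have hc' : ∫ s in Ioc (0:ℝ) 1, auxM (flip f) s = c := by
    rw [hc, ← auxP_zero_zero hF p1 p2 (0,0), auxP_swap,
      auxP_zero_zero hF' (fun x y => p2 y x) (fun x y => p1 y x)]
  have hlim : ∀ w, Tendsto (fun J => auxP F J J w - auxP F 0 J w - auxP F J 0 w + auxP F 0 0 w)
      atTop (nhds (G w)) := by
    intro w
    have hs : Summable (fun q : ℕ × ℕ => auxA F q.1 q.2 w) :=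
      Summable.of_norm_bounded hus (fun q => hbd q w)
    have ht : Tendsto (fun J : ℕ => Finset.range J ×ˢ Finset.range J) atTop atTop := by
      refine tendsto_atTop_finset_of_monotone (fun a b hab => ?_) (fun q => ?_)
      · exact Finset.product_subset_product (Finset.range_mono hab) (Finset.range_mono hab)
      · refine ⟨max q.1 q.2 + 1, ?_⟩
        simp only [Finset.mem_product, Finset.mem_range]
        constructor <;> omega
    refine (hs.hasSum.comp ht).congr fun J => ?_
    exact auxA_tele F J w
  have hae : ∀ᵐ z : ℝ × ℝ, G z = f z.1 z.2 - auxM f z.1 - auxM (flip f) z.2 + c := by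
    have l1 : ∀ᵐ z : ℝ × ℝ, Tendsto (fun J : ℕ =>
        (∫ t in Ioc z.1 (z.1 + (1/2)^J), auxM f t) / (1/2)^J) atTop (nhds (auxM f z.1)) :=
      Measure.quasiMeasurePreserving_fst.ae (aux_leb1 (auxM_loc hF))
    have l2 : ∀ᵐ z : ℝ × ℝ, Tendsto (fun J : ℕ =>
        (∫ t in Ioc z.2 (z.2 + (1/2)^J), auxM (flip f) t) / (1/2)^J) atTop
          (nhds (auxM (flip f) z.2)) :=
      Measure.quasiMeasurePreserving_snd.ae (aux_leb1 (auxM_loc hF'))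
    filter_upwards [aux_leb2 hF, l1, l2] with z h0 h1 h2
    refine tendsto_nhds_unique (hlim z) ?_
    have e1 : ∀ J, auxP F J 0 z = (∫ t in Ioc z.1 (z.1 + (1/2)^J), auxM f t) / (1/2)^J :=
      fun J => auxP_zero hF p2 J z
    have e2 : ∀ J, auxP F 0 J z = (∫ t in Ioc z.2 (z.2 + (1/2)^J), auxM (flip f) t) / (1/2)^J :=
      fun J => by
        rw [hFdef, auxP_swap]
        exact auxP_zero hF' (fun x y => p1 y x) J z.swap
    have e3 : auxP F 0 0 z = c := auxP_zero_zero hF p1 p2 z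
    have := ((h0.sub h2).sub h1).add_const c
    have hv : f z.1 z.2 - auxM f z.1 - auxM (flip f) z.2 + c =
        F z - auxM (flip f) z.2 - auxM f z.1 + c := by
      have : F z = f z.1 z.2 := rfl
      rw [this]; ring
    rw [hv]
    refine this.congr fun J => ?_
    rw [e3, e1, e2]
  refine ⟨fun x y => G (x, y), fun x => auxM f x, fun y => auxM (flip f) y - c, hGc, ⟨⟨hGc.measurable, ⟨?_, ?_⟩, ?_⟩, ?_, ?_⟩, ?_⟩
  · intro x y
    simp only [hG, auxA, hFdef, auxP_per1 p1]
  · intro x y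
    simp only [hG, auxA, hFdef, auxP_per2 p2]
  · have hGb : ∀ w, |G w| ≤ ∑' q, u q := fun w => tsum_of_norm_bounded hus.hasSum (fun q => hbd q w)
    unfold lpNorm2
    refine ENNReal.rpow_lt_top_of_nonneg (by positivity) (ne_of_lt ?_)
    calc _ ≤ ∫⁻ x in Set.Icc (0:ℝ) 1, ∫⁻ y in Set.Icc (0:ℝ) 1,
          ENNReal.ofReal ((∑' q, u q) ^ p) := by
          gcongr with x y
          exact hGb _
      _ < ⊤ := by simp
  · exact aux_mean (g := fun x y => G (x,y)) hF c hc' hae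
  · refine aux_mean (g := fun x y => G (y,x)) hF' c rfl ?_
    have := aux_swap_mp.quasiMeasurePreserving.ae hae
    filter_upwards [this] with z hz
    simp only [Prod.fst_swap, Prod.snd_swap] at hz
    have e : flip (flip f) = f := rfl
    rw [e]
    change G z.swap = f z.2 z.1 - _ - _ + c
    refine hz.trans ?_
    change _ - auxM f z.2 - auxM (flip f) z.1 + c = _ - auxM (flip f) z.1 - auxM f z.2 + c
    ring
  · filter_upwards [hae] with z hz
    have : G (z.1, z.2) = G z := rfl
    rw [this, hz]; ring
end

section
/- Let f ∈ L¹([0,1]²) and assume ω(f;u,v)₁ = O(uv), i.e. M := sup_{u,v>0} ω(f;u,v)₁/(uv) < ∞. Then there exist a function g ∈ H₁^{(2)} and univariate functions φ₁, φ₂ such that f(x,y) = g(x,y) + φ₁(x) + φ₂(y) for almost every (x,y) ∈ ℝ², and moreover v₁^{(2)}(g) = sup_{u,v>0} ω(f;u,v)₁/(uv). -/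
open MeasureTheory Filter Set
open scoped ENNReal

open Topology

lemma lint_per (F : ℝ → ℝ≥0∞) (hp : ∀ x, F (x+1) = F x) (a : ℝ) :
    ∫⁻ x in Ioc a (a+1), F x = ∫⁻ x in Icc (0:ℝ) 1, F x := by
  rw [← setLIntegral_congr (Ioc_ae_eq_Icc (μ := volume) (a := (0:ℝ)) (b := 1))]
  have h1 := isAddFundamentalDomain_Ioc (T := (1:ℝ)) one_pos a
  have h0 := isAddFundamentalDomain_Ioc (T := (1:ℝ)) one_pos 0
  rw [zero_add] at h0
  refine h1.setLIntegral_eq h0 F ?_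
  rintro ⟨g, hg⟩ x
  obtain ⟨n, rfl⟩ := AddSubgroup.mem_zmultiples_iff.1 hg
  have hP : Function.Periodic F 1 := hp
  change F (n • (1:ℝ) + x) = F x
  rw [add_comm]
  exact hP.zsmul n x

lemma lint_shift (F : ℝ → ℝ≥0∞) (hp : ∀ x, F (x+1) = F x) (a : ℝ) :
    ∫⁻ x in Icc (0:ℝ) 1, F (x + a) = ∫⁻ x in Icc (0:ℝ) 1, F x := by
  rw [← lint_per F hp a, ← setLIntegral_congr (Ioc_ae_eq_Icc (μ := volume) (a := (0:ℝ)) (b := 1))]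
  have := (measurePreserving_add_right (volume : Measure ℝ) a).setLIntegral_comp_preimage_emb
    (measurableEmbedding_addRight a) F (Ioc a (a+1))
  rw [← this]
  congr 2
  ext x; simp [add_comm]

lemma per_rep (a x : ℝ) : ∃ x' ∈ Ioc a (a+1), ∀ p : ℝ → ℝ, (∀ z, p (z+1) = p z) → p x = p x' := by
  obtain ⟨n, hn, -⟩ := existsUnique_add_zsmul_mem_Ioc (a := (1:ℝ)) one_pos x a
  refine ⟨_, hn, fun p hp => ?_⟩
  have hP : Function.Periodic p 1 := hp
  exact (hP.zsmul n x).symm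

/-- mixed difference -/
noncomputable def mdiff (f : ℝ → ℝ → ℝ) (s t x y : ℝ) : ℝ :=
  f (x + s) (y + t) - f (x + s) y - f x (y + t) + f x y

noncomputable def SS (f : ℝ → ℝ → ℝ) (s t : ℝ) : ℝ≥0∞ :=
  ∫⁻ x in Icc (0:ℝ) 1, ∫⁻ y in Icc (0:ℝ) 1, ENNReal.ofReal |mdiff f s t x y|

lemma mixed_eq (f : ℝ → ℝ → ℝ) (u v : ℝ) : mixedModulus 1 f u v =
    ⨆ (s : ℝ) (_ : s ∈ Set.Icc 0 u) (t : ℝ) (_ : t ∈ Set.Icc 0 v), SS f s t := by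
  simp [mixedModulus, lpNorm2, SS, mdiff]

lemma SS_le (f : ℝ → ℝ → ℝ) {u v s t : ℝ} (hs : s ∈ Icc 0 u) (ht : t ∈ Icc 0 v) :
    SS f s t ≤ mixedModulus 1 f u v := by
  rw [mixed_eq]
  exact le_iSup₂_of_le s hs (le_iSup₂_of_le t ht le_rfl)

lemma mdiff_meas {f : ℝ → ℝ → ℝ} (hf : Measurable (Function.uncurry f)) (s t : ℝ) :
    Measurable (fun z : ℝ × ℝ => mdiff f s t z.1 z.2) := by
  have h : ∀ s t : ℝ, Measurable (fun z : ℝ × ℝ => f (z.1 + s) (z.2 + t)) := fun s t =>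
    hf.comp (f := fun z : ℝ × ℝ => (z.1 + s, z.2 + t)) (by fun_prop)
  have h2 := h s 0
  have h3 := h 0 t
  have h4 := h 0 0
  simp only [add_zero] at h2 h3 h4
  exact (((h s t).sub h2).sub h3).add h4

lemma mdiff_per {f : ℝ → ℝ → ℝ} (hf : BiPeriodic f) (s t : ℝ) : BiPeriodic (mdiff f s t) := by
  constructor
  · intro x y
    have : x + 1 + s = x + s + 1 := by ring
    simp only [mdiff, this, hf.1]
  · intro x y
    have : y + 1 + t = y + t + 1 := by ring
    simp only [mdiff, this, hf.2]

lemma I_shift {F : ℝ → ℝ → ℝ} (hF : BiPeriodic F) (a b : ℝ) :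
    ∫⁻ x in Icc (0:ℝ) 1, ∫⁻ y in Icc (0:ℝ) 1, ENNReal.ofReal |F (x + a) (y + b)|
     = ∫⁻ x in Icc (0:ℝ) 1, ∫⁻ y in Icc (0:ℝ) 1, ENNReal.ofReal |F x y| := by
  have h1 : ∀ x, ∫⁻ y in Icc (0:ℝ) 1, ENNReal.ofReal |F (x + a) (y + b)|
      = ∫⁻ y in Icc (0:ℝ) 1, ENNReal.ofReal |F (x + a) y| := fun x =>
    lint_shift (fun y => ENNReal.ofReal |F (x + a) y|) (fun y => by simp only [hF.2]) b
  simp only [h1]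
  exact lint_shift (fun x => ∫⁻ y in Icc (0:ℝ) 1, ENNReal.ofReal |F x y|)
    (fun x => by simp only [hF.1]) a

lemma I_add {F G H : ℝ → ℝ → ℝ} 
    (mG : Measurable (Function.uncurry G))
    (h : ∀ x y, F x y = G x y + H x y) :
    ∫⁻ x in Icc (0:ℝ) 1, ∫⁻ y in Icc (0:ℝ) 1, ENNReal.ofReal |F x y| ≤
    (∫⁻ x in Icc (0:ℝ) 1, ∫⁻ y in Icc (0:ℝ) 1, ENNReal.ofReal |G x y|) +
    ∫⁻ x in Icc (0:ℝ) 1, ∫⁻ y in Icc (0:ℝ) 1, ENNReal.ofReal |H x y| := by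
  have mm : Measurable (Function.uncurry fun x y => ENNReal.ofReal |G x y|) :=
    ENNReal.measurable_ofReal.comp (by
      have := mG.norm
      exact this)
  have m1 : ∀ x, Measurable fun y => ENNReal.ofReal |G x y| := fun x =>
    mm.of_uncurry_left
  rw [← lintegral_add_left (Measurable.lintegral_prod_right mm)]
  refine lintegral_mono fun x => ?_
  rw [← lintegral_add_left (m1 x)]
  refine lintegral_mono fun y => ?_
  rw [← ENNReal.ofReal_add (abs_nonneg _) (abs_nonneg _), h]
  exact ENNReal.ofReal_le_ofReal (abs_add_le _ _)

lemma SS_add_left {f : ℝ → ℝ → ℝ} (hf : Measurable (Function.uncurry f)) (hp : BiPeriodic f)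
    (s s' t : ℝ) : SS f (s + s') t ≤ SS f s t + SS f s' t := by
  have h := I_shift (mdiff_per hp s t) s' 0
  unfold SS
  rw [← h]
  refine I_add ?_ ?_
  · exact (mdiff_meas hf s t).comp (f := fun z : ℝ × ℝ => (z.1 + s', z.2 + 0)) (by fun_prop)
  · intro x y
    have : x + (s + s') = x + s' + s := by ring
    simp only [mdiff, this, add_zero]
    ring

lemma SS_add_right {f : ℝ → ℝ → ℝ} (hf : Measurable (Function.uncurry f)) (hp : BiPeriodic f)
    (s t t' : ℝ) : SS f s (t + t') ≤ SS f s t + SS f s t' := by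
  have h := I_shift (mdiff_per hp s t) 0 t'
  unfold SS
  rw [← h]
  refine I_add ?_ ?_
  · exact (mdiff_meas hf s t).comp (f := fun z : ℝ × ℝ => (z.1 + 0, z.2 + t')) (by fun_prop)
  · intro x y
    have : y + (t + t') = y + t' + t := by ring
    simp only [mdiff, this, add_zero]
    ring

lemma SS_zero_left (f : ℝ → ℝ → ℝ) (t : ℝ) : SS f 0 t = 0 := by
  simp [SS, mdiff]

lemma SS_zero_right (f : ℝ → ℝ → ℝ) (t : ℝ) : SS f t 0 = 0 := by
  simp [SS, mdiff]

lemma SS_mul {f : ℝ → ℝ → ℝ} (hf : Measurable (Function.uncurry f)) (hp : BiPeriodic f)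
    (s t : ℝ) (a b : ℕ) : SS f (a * s) (b * t) ≤ a * (b * SS f s t) := by
  have h1 : ∀ b : ℕ, SS f s (b * t) ≤ b * SS f s t := by
    intro b
    induction b with
    | zero => simp [SS_zero_right]
    | succ n ih =>
      push_cast
      rw [add_mul, add_mul, one_mul, one_mul]
      exact (SS_add_right hf hp _ _ _).trans (by gcongr)
  induction a with
  | zero => simp [SS_zero_left]
  | succ n ih =>
    push_cast
    rw [add_mul, add_mul, one_mul, one_mul]
    refine (SS_add_left hf hp _ _ _).trans ?_
    gcongr
    exact h1 b

lemma sum_le_vp2 (g : ℝ → ℝ → ℝ) {m n : ℕ} {x y : ℕ → ℝ} (h1 : ∀ i < m, x i < x (i + 1))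
    (h2 : x m = x 0 + 1) (h3 : ∀ j < n, y j < y (j + 1)) (h4 : y n = y 0 + 1) :
    ENNReal.ofReal (∑ i ∈ Finset.range m, ∑ j ∈ Finset.range n,
      |g (x (i + 1)) (y (j + 1)) - g (x (i + 1)) (y j)
        - g (x i) (y (j + 1)) + g (x i) (y j)|) ≤ vp2 1 g := by
  simp only [vp2, Real.rpow_one, div_one]
  refine le_iSup_of_le m (le_iSup_of_le n (le_iSup_of_le x (le_iSup_of_le y ?_)))
  exact le_iSup_of_le h1 (le_iSup_of_le h2 (le_iSup_of_le h3 (le_iSup_of_le h4 le_rfl)))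

lemma vp2_le (g : ℝ → ℝ → ℝ) (C : ℝ≥0∞) (h : ∀ (m n : ℕ) (x y : ℕ → ℝ), (∀ i < m, x i < x (i + 1)) →
    x m = x 0 + 1 → (∀ j < n, y j < y (j + 1)) → y n = y 0 + 1 →
    ENNReal.ofReal (∑ i ∈ Finset.range m, ∑ j ∈ Finset.range n,
      |g (x (i + 1)) (y (j + 1)) - g (x (i + 1)) (y j)
        - g (x i) (y (j + 1)) + g (x i) (y j)|) ≤ C) : vp2 1 g ≤ C := by
  simp only [vp2, Real.rpow_one, div_one, iSup_le_iff]
  exact h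

set_option maxHeartbeats 1000000 in
lemma SS_unit {f g : ℝ → ℝ → ℝ} {φ₁ φ₂ : ℝ → ℝ} (hf : Measurable (Function.uncurry f))
    (hp : BiPeriodic f)
    (hae : ∀ᵐ z : ℝ × ℝ ∂volume, f z.1 z.2 = g z.1 z.2 + φ₁ z.1 + φ₂ z.2)
    (N : ℕ) (hN : 0 < N) : N * (N * SS f (1 / N) (1 / N)) ≤ vp2 1 g := by
  have hN' : (0:ℝ) < N := by exact_mod_cast hN
  set h : ℝ := 1 / N with hh
  have hhpos : 0 < h := by positivity
  have e1 : (N:ℝ≥0∞) * (N * SS f h h) = ∑ i ∈ Finset.range N, ∑ j ∈ Finset.range N,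
      ∫⁻ x in Icc (0:ℝ) 1, ∫⁻ y in Icc (0:ℝ) 1,
        ENNReal.ofReal |mdiff f h h (x + i * h) (y + j * h)| := by
    have : ∀ i j : ℕ, ∫⁻ x in Icc (0:ℝ) 1, ∫⁻ y in Icc (0:ℝ) 1,
        ENNReal.ofReal |mdiff f h h (x + i * h) (y + j * h)| = SS f h h := fun i j =>
      I_shift (mdiff_per hp h h) _ _
    simp [this]
  have mm : ∀ i j : ℕ, Measurable (fun z : ℝ × ℝ => ENNReal.ofReal |mdiff f h h (z.1 + i * h) (z.2 + j * h)|) := by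
    intro i j
    have := ((mdiff_meas hf h h).comp (f := fun z : ℝ × ℝ => (z.1 + i * h, z.2 + j * h)) (by fun_prop)).norm
    exact ENNReal.measurable_ofReal.comp this
  have m1 : ∀ i j : ℕ, ∀ x, Measurable (fun y => ENNReal.ofReal |mdiff f h h (x + i * h) (y + j * h)|) :=
    fun i j x => (mm i j).comp (measurable_prodMk_left)
  have m2 : ∀ i j : ℕ, Measurable (fun x => ∫⁻ y in Icc (0:ℝ) 1, ENNReal.ofReal |mdiff f h h (x + i * h) (y + j * h)|) :=
    fun i j => Measurable.lintegral_prod_right (mm i j)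
  have e2 : (N:ℝ≥0∞) * (N * SS f h h) = ∫⁻ x in Icc (0:ℝ) 1, ∫⁻ y in Icc (0:ℝ) 1,
      ∑ i ∈ Finset.range N, ∑ j ∈ Finset.range N, ENNReal.ofReal |mdiff f h h (x + i * h) (y + j * h)| := by
    rw [e1]
    have : ∀ x, ∫⁻ y in Icc (0:ℝ) 1, ∑ i ∈ Finset.range N, ∑ j ∈ Finset.range N,
        ENNReal.ofReal |mdiff f h h (x + i * h) (y + j * h)| =
        ∑ i ∈ Finset.range N, ∑ j ∈ Finset.range N, ∫⁻ y in Icc (0:ℝ) 1,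
        ENNReal.ofReal |mdiff f h h (x + i * h) (y + j * h)| := by
      intro x
      rw [lintegral_finsetSum _ (fun i _ => Finset.measurable_sum _ (fun j _ => m1 i j x))]
      exact Finset.sum_congr rfl fun i _ => lintegral_finsetSum _ (fun j _ => m1 i j x)
    simp only [this]
    rw [lintegral_finsetSum _ (fun i _ => Finset.measurable_sum _ (fun j _ => m2 i j))]
    exact Finset.sum_congr rfl fun i _ => (lintegral_finsetSum _ (fun j _ => m2 i j)).symm
  rw [e2]
  have hall : ∀ᵐ z : ℝ × ℝ ∂volume, ∀ i j : ℕ, f (z.1 + i * h) (z.2 + j * h) =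
      g (z.1 + i * h) (z.2 + j * h) + φ₁ (z.1 + i * h) + φ₂ (z.2 + j * h) := by
    rw [ae_all_iff]; intro i
    rw [ae_all_iff]; intro j
    exact (measurePreserving_add_right (volume : Measure (ℝ × ℝ)) ((i * h, j * h) : ℝ × ℝ)).quasiMeasurePreserving.ae hae
  have hall2 := Measure.ae_ae_of_ae_prod hall
  calc _ ≤ ∫⁻ x in Icc (0:ℝ) 1, ∫⁻ y in Icc (0:ℝ) 1, vp2 1 g := by
        refine lintegral_mono_ae (ae_restrict_of_ae ?_)
        filter_upwards [hall2] with x hx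
        refine lintegral_mono_ae (ae_restrict_of_ae ?_)
        filter_upwards [hx] with y hy
        have := sum_le_vp2 g (m := N) (n := N) (x := fun i => x + i * h) (y := fun j => y + j * h)
          (by intro i _; push_cast; linarith) (by simp [hh, hN'.ne'])
          (by intro i _; push_cast; linarith) (by simp [hh, hN'.ne'])
        refine le_trans (le_of_eq ?_) this
        rw [ENNReal.ofReal_sum_of_nonneg (fun _ _ => Finset.sum_nonneg fun _ _ => abs_nonneg _)]
        refine Finset.sum_congr rfl fun i _ => ?_
        rw [ENNReal.ofReal_sum_of_nonneg (fun _ _ => abs_nonneg _)]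
        refine Finset.sum_congr rfl fun j _ => ?_
        have a1 : x + i * h + h = x + ((i + 1 : ℕ):ℝ) * h := by push_cast; ring
        have a2 : y + j * h + h = y + ((j + 1 : ℕ):ℝ) * h := by push_cast; ring
        simp only [mdiff]
        rw [a1, a2, hy, hy, hy, hy]
        congr 2
        ring
    _ = vp2 1 g := by simp

lemma SS_bound {f g : ℝ → ℝ → ℝ} {φ₁ φ₂ : ℝ → ℝ} (hf : Measurable (Function.uncurry f))
    (hp : BiPeriodic f) (M : ℝ)
    (hM : ∀ u v : ℝ, 0 < u → 0 < v →
      mixedModulus 1 f u v ≤ ENNReal.ofReal (M * (u * v)))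
    (hae : ∀ᵐ z : ℝ × ℝ ∂volume, f z.1 z.2 = g z.1 z.2 + φ₁ z.1 + φ₂ z.2)
    {u v s t : ℝ} (hu : 0 < u) (hv : 0 < v) (hs : s ∈ Icc 0 u) (ht : t ∈ Icc 0 v) :
    SS f s t ≤ vp2 1 g * ENNReal.ofReal (u * v) := by
  have key : ∀ N : ℕ, SS f s t ≤ vp2 1 g * ENNReal.ofReal (u * v)
      + (ENNReal.ofReal (M * u * (1 / ((N:ℝ) + 1))) + ENNReal.ofReal (M * v * (1 / ((N:ℝ) + 1)))) := by
    intro N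
    have hNpos : (0:ℝ) < ((N + 1 : ℕ) : ℝ) := by positivity
    set K : ℕ := N + 1 with hK
    have hKN : ((N:ℝ) + 1) = K := by simp [hK]
    rw [hKN]
    set h : ℝ := 1 / K with hh
    have hpos : 0 < h := by positivity
    have dec : ∀ w : ℝ, 0 ≤ w → ∃ (a : ℕ) (r : ℝ), w = a * h + r ∧ r ∈ Icc 0 h := by
      intro w hw
      refine ⟨⌊w * K⌋₊, w - ⌊w * K⌋₊ * h, by ring, ?_, ?_⟩
      · have := Nat.floor_le (a := w * K) (by positivity)
        rw [hh, mul_one_div, sub_nonneg, div_le_iff₀ hNpos]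
        exact this
      · have := Nat.lt_floor_add_one (w * K)
        rw [hh, mul_one_div, sub_le_iff_le_add, ← add_div, le_div_iff₀ hNpos]
        linarith
    obtain ⟨a, r, hs', hr⟩ := dec s hs.1
    obtain ⟨b, r', ht', hr'⟩ := dec t ht.1
    have b1 : SS f r t ≤ ENNReal.ofReal (M * v * h) := by
      refine (SS_le f hr ht).trans ((hM h v hpos hv).trans (le_of_eq ?_))
      congr 1; ring
    have has : (a * h) ∈ Icc 0 u := ⟨by positivity, by linarith [hs.2, hr.1]⟩
    have hbt : (b * h) ≤ v := by linarith [ht.2, hr'.1]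
    have b2 : SS f (a * h) r' ≤ ENNReal.ofReal (M * u * h) := by
      refine (SS_le f has hr').trans ((hM u h hu hpos).trans (le_of_eq ?_))
      congr 1; ring
    have b3 : SS f (a * h) (b * h) ≤ vp2 1 g * ENNReal.ofReal (u * v) := by
      have h1 := SS_mul hf hp h h a b
      have h2 := SS_unit hf hp hae K (by simp [hK])
      refine h1.trans ?_
      have e : (a : ℝ≥0∞) * (b * SS f h h) = (K * (K * SS f h h)) * ENNReal.ofReal ((a * h) * (b * h)) := by
        rw [ENNReal.ofReal_mul has.1, ENNReal.ofReal_mul (by positivity), ENNReal.ofReal_mul (by positivity)]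
        simp only [ENNReal.ofReal_natCast]
        have : (K : ℝ≥0∞) * ENNReal.ofReal h = 1 := by
          rw [← ENNReal.ofReal_natCast, ← ENNReal.ofReal_mul (by positivity), hh, mul_one_div_cancel hNpos.ne']
          simp
        calc (a : ℝ≥0∞) * (b * SS f h h) = (a : ℝ≥0∞) * (b * SS f h h) * 1 * 1 := by simp
          _ = (a : ℝ≥0∞) * (b * SS f h h) * ((K : ℝ≥0∞) * ENNReal.ofReal h) * ((K : ℝ≥0∞) * ENNReal.ofReal h) := by
            rw [this]
          _ = _ := by ring
      rw [e]
      gcongr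
      exact has.2
    calc SS f s t ≤ SS f (a * h) t + SS f r t := by
          rw [hs']; exact SS_add_left hf hp _ _ _
      _ ≤ (SS f (a * h) (b * h) + SS f (a * h) r') + SS f r t := by
          gcongr
          rw [ht']; exact SS_add_right hf hp _ _ _
      _ ≤ _ := by
          rw [add_assoc]
          gcongr
  have lim : Tendsto (fun N : ℕ => vp2 1 g * ENNReal.ofReal (u * v)
      + (ENNReal.ofReal (M * u * (1 / ((N:ℝ) + 1))) + ENNReal.ofReal (M * v * (1 / ((N:ℝ) + 1))))) atTop
      (𝓝 (vp2 1 g * ENNReal.ofReal (u * v) + (ENNReal.ofReal (M * u * 0) + ENNReal.ofReal (M * v * 0)))) := by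
    refine tendsto_const_nhds.add (Tendsto.add ?_ ?_) <;>
    exact ENNReal.tendsto_ofReal (tendsto_one_div_add_atTop_nhds_zero_nat.const_mul _)
  have := ge_of_tendsto' lim key
  simpa using this

lemma locInt {f : ℝ → ℝ → ℝ} (hf : MemLp2 1 f) :
    LocallyIntegrable (Function.uncurry f) (volume : Measure (ℝ × ℝ)) := by
  rintro ⟨a, b⟩
  refine ⟨Ioc (a - 1/2) (a - 1/2 + 1) ×ˢ Ioc (b - 1/2) (b - 1/2 + 1), ?_, ?_⟩
  · exact prod_mem_nhds (Ioc_mem_nhds (by linarith) (by linarith)) (Ioc_mem_nhds (by linarith) (by linarith))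
  · refine ⟨hf.1.aestronglyMeasurable, ?_⟩
    have h3 := hf.2.2
    simp only [lpNorm2, Real.rpow_one, div_one, ENNReal.rpow_one] at h3
    rw [hasFiniteIntegral_iff_enorm, Measure.volume_eq_prod, ← Measure.prod_restrict,
      lintegral_prod _ (hf.1.enorm.aemeasurable)]
    refine lt_of_le_of_lt (le_of_eq ?_) h3
    have h1 : ∀ x, ∫⁻ y in Ioc (b - 1/2) (b - 1/2 + 1), ‖Function.uncurry f (x, y)‖ₑ
      = ∫⁻ y in Icc (0:ℝ) 1, ENNReal.ofReal |f x y| := fun x => by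
      rw [← lint_per (fun y => ENNReal.ofReal |f x y|) (fun y => by simp only [hf.2.1.2]) (b - 1/2)]
      simp [Real.enorm_eq_ofReal_abs]
    simp only [h1]
    exact lint_per (fun x => ∫⁻ y in Icc (0:ℝ) 1, ENNReal.ofReal |f x y|)
      (fun x => by simp only [hf.2.1.1]) _

lemma ae_sec {f : ℝ → ℝ → ℝ} (hl : LocallyIntegrable (Function.uncurry f) (volume : Measure (ℝ × ℝ))) :
    ∀ᵐ s : ℝ, ∀ c d, IntervalIntegrable (f s) volume c d := by
  have h : ∀ n : ℕ, ∀ᵐ s : ℝ, s ∈ Icc (-(n:ℝ)) n → IntegrableOn (f s) (Icc (-(n:ℝ)) n) := by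
    intro n
    have h1 := hl.integrableOn_isCompact ((isCompact_Icc (a := -(n:ℝ)) (b := n)).prod
      (isCompact_Icc (a := -(n:ℝ)) (b := n)))
    rw [IntegrableOn, Measure.volume_eq_prod, ← Measure.prod_restrict] at h1
    have h2 := h1.prod_right_ae
    rw [ae_restrict_iff' measurableSet_Icc] at h2
    exact h2
  filter_upwards [ae_all_iff.2 h] with s hs c d
  obtain ⟨n, hn⟩ := exists_nat_ge (max |s| (max |c| |d|))
  simp only [max_le_iff, abs_le] at hn
  have h3 := hs n ⟨hn.1.1, hn.1.2⟩
  refine IntegrableOn.intervalIntegrable (h3.mono_set ?_)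
  exact uIcc_subset_Icc ⟨hn.2.1.1, hn.2.1.2⟩ ⟨hn.2.2.1, hn.2.2.2⟩

lemma int_inner {f : ℝ → ℝ → ℝ} (hl : LocallyIntegrable (Function.uncurry f) (volume : Measure (ℝ × ℝ)))
    (c d a b : ℝ) : IntervalIntegrable (fun s => ∫ t in c..d, f s t) volume a b := by
  have h0 := hl.integrableOn_isCompact ((isCompact_uIcc (a := a) (b := b)).prod
      (isCompact_uIcc (a := c) (b := d)))
  have h1 : ∀ B ⊆ uIcc c d, IntervalIntegrable (fun s => ∫ t in B, f s t) volume a b := by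
    intro B hB
    rw [intervalIntegrable_iff]
    have h1 := h0.mono_set (Set.prod_mono uIoc_subset_uIcc hB)
    rw [IntegrableOn, Measure.volume_eq_prod, ← Measure.prod_restrict] at h1
    exact h1.integral_prod_left
  unfold intervalIntegral
  exact (h1 _ (Ioc_subset_Icc_self.trans Icc_subset_uIcc)).sub
    (h1 _ (Ioc_subset_Icc_self.trans Icc_subset_uIcc'))

lemma shift1 (φ : ℝ → ℝ) (hφ : ∀ a b, IntervalIntegrable φ volume a b) (h a b : ℝ) :
    (∫ s in b..b+h, φ s) - ∫ s in a..a+h, φ s = ∫ s in a..b, (φ (s + h) - φ s) := by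
  have h2 : IntervalIntegrable (fun s => φ (s + h)) volume a b := by
    have := (hφ (a + h) (b + h)).comp_add_right h
    simpa using this
  rw [intervalIntegral.integral_sub h2 (hφ a b), intervalIntegral.integral_comp_add_right,
    intervalIntegral.integral_interval_sub_interval_comm (hφ _ _) (hφ _ _) (hφ _ _),
    intervalIntegral.integral_symm a b, intervalIntegral.integral_symm (a+h) (b+h)]
  ring

/-- averages -/
noncomputable def AV (f : ℝ → ℝ → ℝ) (h x y : ℝ) : ℝ := ∫ s in x..x+h, ∫ t in y..y+h, f s t

lemma AV_diff {f : ℝ → ℝ → ℝ} (hl : LocallyIntegrable (Function.uncurry f) (volume : Measure (ℝ × ℝ)))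
    (h a b c d : ℝ) : AV f h b d - AV f h b c - AV f h a d + AV f h a c =
      ∫ s in a..b, ∫ t in c..d, mdiff f h h s t := by
  set K : ℝ → ℝ := fun s => ∫ t in c..d, (f s (t + h) - f s t) with hK
  have hs := ae_sec hl
  have hGK : ∀ᵐ s : ℝ, (∫ t in d..d+h, f s t) - (∫ t in c..c+h, f s t) = K s := by
    filter_upwards [hs] with s hs
    exact shift1 (f s) hs h c d
  have hKi : ∀ a b, IntervalIntegrable K volume a b := fun a b =>
    ((int_inner hl d (d+h) a b).sub (int_inner hl c (c+h) a b)).congr_ae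
      (ae_restrict_of_ae hGK)
  have e1 : ∀ x, AV f h x d - AV f h x c = ∫ s in x..x+h, K s := by
    intro x
    unfold AV
    rw [← intervalIntegral.integral_sub (int_inner hl _ _ _ _) (int_inner hl _ _ _ _)]
    refine intervalIntegral.integral_congr_ae ?_
    filter_upwards [hGK] with s hs _ using hs
  have e2 := shift1 K hKi h a b
  have : AV f h b d - AV f h b c - AV f h a d + AV f h a c =
     (AV f h b d - AV f h b c) - (AV f h a d - AV f h a c) := by ring
  rw [this, e1, e1, e2]
  refine intervalIntegral.integral_congr_ae ?_
  have hs2 := (measurePreserving_add_right (volume : Measure ℝ) h).quasiMeasurePreserving.ae hs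
  filter_upwards [hs, hs2] with s h1 h2 _
  have sh : ∀ s, (∀ c d, IntervalIntegrable (f s) volume c d) →
      IntervalIntegrable (fun t => f s (t + h) - f s t) volume c d := by
    intro s hs
    have := (hs (c + h) (d + h)).comp_add_right h
    exact (by simpa using this : IntervalIntegrable (fun t => f s (t + h)) volume c d).sub (hs c d)
  simp only [hK]
  rw [← intervalIntegral.integral_sub (sh _ h2) (sh _ h1)]
  refine intervalIntegral.integral_congr fun t _ => ?_
  simp only [mdiff]
  ring

lemma AV_abs {f : ℝ → ℝ → ℝ} (hl : LocallyIntegrable (Function.uncurry f) (volume : Measure (ℝ × ℝ)))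
    (h : ℝ) {a b c d : ℝ} (hab : a ≤ b) (hcd : c ≤ d) :
    ENNReal.ofReal |AV f h b d - AV f h b c - AV f h a d + AV f h a c| ≤
      ∫⁻ s in Ioc a b, ∫⁻ t in Ioc c d, ENNReal.ofReal |mdiff f h h s t| := by
  rw [AV_diff hl, intervalIntegral.integral_of_le hab, ← Real.enorm_eq_ofReal_abs]
  refine (enorm_integral_le_lintegral_enorm _).trans (lintegral_mono fun s => ?_)
  simp only [intervalIntegral.integral_of_le hcd, ← Real.enorm_eq_ofReal_abs]
  exact enorm_integral_le_lintegral_enorm _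

lemma sum_Ioc (F : ℝ → ℝ≥0∞) (m : ℕ) (x : ℕ → ℝ) (h1 : ∀ i < m, x i < x (i + 1)) :
    x 0 ≤ x m ∧ ∑ i ∈ Finset.range m, ∫⁻ s in Ioc (x i) (x (i+1)), F s = ∫⁻ s in Ioc (x 0) (x m), F s := by
  induction m with
  | zero => simp
  | succ n ih =>
    obtain ⟨i1, i2⟩ := ih (fun i hi => h1 i (by omega))
    have h := h1 n (by omega)
    refine ⟨i1.trans h.le, ?_⟩
    rw [Finset.sum_range_succ, i2, ← lintegral_union measurableSet_Ioc, Ioc_union_Ioc_eq_Ioc i1 h.le]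
    exact Ioc_disjoint_Ioc_of_le le_rfl

lemma AV_net {f : ℝ → ℝ → ℝ} (hf : MemLp2 1 f) (h : ℝ) {m n : ℕ} {x y : ℕ → ℝ} (h1 : ∀ i < m, x i < x (i + 1))
    (h2 : x m = x 0 + 1) (h3 : ∀ j < n, y j < y (j + 1)) (h4 : y n = y 0 + 1) :
    ENNReal.ofReal (∑ i ∈ Finset.range m, ∑ j ∈ Finset.range n,
      |AV f h (x (i + 1)) (y (j + 1)) - AV f h (x (i + 1)) (y j)
        - AV f h (x i) (y (j + 1)) + AV f h (x i) (y j)|) ≤ SS f h h := by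
  have hl := locInt hf
  rw [ENNReal.ofReal_sum_of_nonneg (fun _ _ => Finset.sum_nonneg fun _ _ => abs_nonneg _)]
  have mm : Measurable (fun z : ℝ × ℝ => ENNReal.ofReal |mdiff f h h z.1 z.2|) :=
    ENNReal.measurable_ofReal.comp (mdiff_meas hf.1 h h).norm
  have hP := mdiff_per hf.2.1 h h
  calc _ ≤ ∑ i ∈ Finset.range m, ∫⁻ s in Ioc (x i) (x (i+1)), ∫⁻ t in Icc (0:ℝ) 1, ENNReal.ofReal |mdiff f h h s t| := by
        refine Finset.sum_le_sum fun i hi => ?_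
        rw [ENNReal.ofReal_sum_of_nonneg (fun _ _ => abs_nonneg _)]
        calc _ ≤ ∑ j ∈ Finset.range n, ∫⁻ s in Ioc (x i) (x (i+1)), ∫⁻ t in Ioc (y j) (y (j+1)), ENNReal.ofReal |mdiff f h h s t| :=
              Finset.sum_le_sum fun j hj => AV_abs hl h (h1 i (Finset.mem_range.1 hi)).le (h3 j (Finset.mem_range.1 hj)).le
          _ = _ := by
              rw [← lintegral_finsetSum _ (fun j _ => Measurable.lintegral_prod_right mm)]
              refine lintegral_congr fun s => ?_
              rw [(sum_Ioc _ n y h3).2, h4]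
              exact lint_per _ (fun t => by simp only [hP.2]) _
    _ = SS f h h := by
        rw [(sum_Ioc _ m x h1).2, h2]
        exact lint_per _ (fun t => by simp only [hP.1]) _

lemma AV_tendsto {f : ℝ → ℝ → ℝ} (hl : LocallyIntegrable (Function.uncurry f) (volume : Measure (ℝ × ℝ))) :
    ∀ᵐ z : ℝ × ℝ, Tendsto (fun n : ℕ => ((1 / ((n:ℝ) + 1)) * (1 / ((n:ℝ) + 1)))⁻¹ *
      AV f (1 / ((n:ℝ) + 1)) z.1 z.2) atTop (𝓝 (f z.1 z.2)) := by
  filter_upwards [IsUnifLocDoublingMeasure.ae_tendsto_average (volume : Measure (ℝ × ℝ)) hl 1] with z hz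
  have hpos : ∀ n : ℕ, 0 < 1 / ((n:ℝ) + 1) := fun n => by positivity
  have := hz (ι := ℕ) (l := atTop)
    (fun n => (z.1 + 1 / ((n:ℝ) + 1) / 2, z.2 + 1 / ((n:ℝ) + 1) / 2)) (fun n => 1 / ((n:ℝ) + 1) / 2) ?_ ?_
  · refine this.congr fun n => ?_
    have hp := hpos n
    set h := 1 / ((n:ℝ) + 1)
    rw [← closedBall_prod_same, Real.closedBall_eq_Icc, Real.closedBall_eq_Icc]
    have a1 : z.1 + h / 2 - h / 2 = z.1 := by ring
    have a2 : z.2 + h / 2 - h / 2 = z.2 := by ring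
    have a3 : z.1 + h / 2 + h / 2 = z.1 + h := by ring
    have a4 : z.2 + h / 2 + h / 2 = z.2 + h := by ring
    rw [a1, a2, a3, a4, setAverage_eq, smul_eq_mul, Measure.volume_eq_prod, Measure.real,
      Measure.prod_prod, setIntegral_prod]
    · congr 1
      · simp [hp.le]
      · simp only [AV, intervalIntegral.integral_of_le (le_add_of_nonneg_right hp.le), integral_Icc_eq_integral_Ioc,
          Function.uncurry]
    · exact hl.integrableOn_isCompact (isCompact_Icc.prod isCompact_Icc)
  · rw [tendsto_nhdsWithin_iff]
    constructor
    · have := (tendsto_one_div_add_atTop_nhds_zero_nat (𝕜 := ℝ)).div_const 2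
      simpa using this
    · exact Eventually.of_forall fun n => by simp only [mem_Ioi]; linarith [hpos n]
  · refine Eventually.of_forall fun n => ?_
    have hp := hpos n
    rw [← closedBall_prod_same, Real.closedBall_eq_Icc, Real.closedBall_eq_Icc]
    exact ⟨⟨by linarith, by linarith⟩, ⟨by linarith, by linarith⟩⟩

lemma AV_per {f : ℝ → ℝ → ℝ} (hf : BiPeriodic f) (h : ℝ) : BiPeriodic (AV f h) := by
  constructor
  · intro x y
    unfold AV
    have := intervalIntegral.integral_comp_add_right (a := x) (b := x + h)
      (fun s => ∫ t in y..y+h, f s t) 1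
    simp only [hf.1] at this
    rw [this]; congr 1; ring
  · intro x y
    unfold AV
    congr 1
    ext s
    have := intervalIntegral.integral_comp_add_right (a := y) (b := y + h) (fun t => f s t) 1
    simp only [hf.2] at this
    rw [this]; congr 1; ring

lemma hardy_sections {g : ℝ → ℝ → ℝ} (hp : BiPeriodic g) (hv : vp2 1 g < ⊤) (x₀ : ℝ)
    (h0 : ∀ y, g x₀ y = 0) (x : ℝ) : vp 1 (fun y => g x y) < ⊤ := by
  refine lt_of_le_of_lt ?_ hv
  obtain ⟨x', hx', hr⟩ := per_rep x₀ x
  have hg : ∀ y, g x y = g x' y := fun y => hr (fun z => g z y) (fun z => hp.1 z y)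
  simp only [vp, Real.rpow_one, div_one, iSup_le_iff]
  intro n y h3 h4
  simp only [hg]
  rcases eq_or_lt_of_le hx'.2 with h | h
  · have : ∀ y, g x' y = 0 := fun y => by rw [h, hp.1, h0]
    simp [this]
  · refine le_trans (ENNReal.ofReal_le_ofReal ?_) (sum_le_vp2 g (m := 2) (n := n)
      (x := fun i => if i = 0 then x₀ else if i = 1 then x' else x₀ + 1) (y := y) ?_ ?_ h3 h4)
    · rw [Finset.sum_range_succ, Finset.sum_range_one]
      refine le_trans (le_of_eq ?_) (le_add_of_nonneg_right (Finset.sum_nonneg fun _ _ => abs_nonneg _))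
      simp [h0]
    · intro i hi
      interval_cases i
      · simpa using hx'.1
      · simpa using h
    · simp

lemma vp2_swap_le (g : ℝ → ℝ → ℝ) : vp2 1 (fun x y => g y x) ≤ vp2 1 g := by
  refine vp2_le _ _ fun m n x y h1 h2 h3 h4 => ?_
  refine le_trans (le_of_eq ?_) (sum_le_vp2 g h3 h4 h1 h2)
  rw [Finset.sum_comm]
  congr 1
  refine Finset.sum_congr rfl fun i _ => Finset.sum_congr rfl fun j _ => ?_
  congr 1
  ring

/-- If `f ∈ L¹([0,1]²)` and `ω(f;u,v)₁ = O(uv)`, then there exist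
`g ∈ H₁⁽²⁾` and univariate `φ₁, φ₂` such that `f(x,y) = g(x,y) + φ₁(x) + φ₂(y)` a.e.,
and `v₁⁽²⁾(g) = sup_{u,v>0} ω(f;u,v)₁ / (uv)`. -/
theorem statement2 (f : ℝ → ℝ → ℝ) (hf : MemLp2 1 f) (M : ℝ)
    (hM : ∀ u v : ℝ, 0 < u → 0 < v →
      mixedModulus 1 f u v ≤ ENNReal.ofReal (M * (u * v))) :
    ∃ (g : ℝ → ℝ → ℝ) (φ₁ φ₂ : ℝ → ℝ),
      BiPeriodic g ∧ MemHp2 1 g ∧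
      (∀ᵐ z : ℝ × ℝ ∂volume, f z.1 z.2 = g z.1 z.2 + φ₁ z.1 + φ₂ z.2) ∧
      vp2 1 g = ⨆ (u : ℝ) (_ : 0 < u) (v : ℝ) (_ : 0 < v),
        mixedModulus 1 f u v / ENNReal.ofReal (u * v) := by
  have hl := locInt hf
  set V : ℝ≥0∞ := ⨆ (u : ℝ) (_ : 0 < u) (v : ℝ) (_ : 0 < v),
        mixedModulus 1 f u v / ENNReal.ofReal (u * v) with hV
  have hVM : V ≤ ENNReal.ofReal M := by
    simp only [hV, iSup_le_iff]
    intro u hu v hv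
    refine ENNReal.div_le_of_le_mul ((hM u v hu hv).trans (le_of_eq ?_))
    rw [ENNReal.ofReal_mul' (by positivity)]
  have hVt : V < ⊤ := hVM.trans_lt ENNReal.ofReal_lt_top
  -- normalized averages
  obtain ⟨A, hA⟩ : ∃ A : ℕ → ℝ → ℝ → ℝ, A = fun (n : ℕ) x y => ((1 / ((n:ℝ) + 1)) * (1 / ((n:ℝ) + 1)))⁻¹ *
      AV f (1 / ((n:ℝ) + 1)) x y := ⟨_, rfl⟩
  have hAper : ∀ n, BiPeriodic (A n) := fun n => by
    constructor
    · intro x y; simp only [hA, (AV_per hf.2.1 _).1]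
    · intro x y; simp only [hA, (AV_per hf.2.1 _).2]
  have hAnet : ∀ n, vp2 1 (A n) ≤ V := by
    intro k
    have hpos : 0 < 1 / ((k:ℝ) + 1) := by positivity
    refine vp2_le _ _ fun m n x y h1 h2 h3 h4 => ?_
    have key := AV_net hf (1 / ((k:ℝ) + 1)) h1 h2 h3 h4
    simp only [hA]
    generalize 1 / ((k:ℝ) + 1) = h at *
    have hh : 0 < h * h := by positivity
    have e : ∀ a b c d : ℝ, |(h * h)⁻¹ * a - (h * h)⁻¹ * b - (h * h)⁻¹ * c + (h * h)⁻¹ * d|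
        = (h * h)⁻¹ * |a - b - c + d| := by
      intro a b c d
      have q := abs_mul (h * h)⁻¹ (a - b - c + d)
      rw [abs_of_pos (inv_pos.2 hh)] at q
      rw [← q]
      congr 1; ring
    simp only [e, ← Finset.mul_sum]
    rw [ENNReal.ofReal_mul (inv_pos.2 hh).le, ENNReal.ofReal_inv_of_pos hh, mul_comm, ← div_eq_mul_inv]
    refine (ENNReal.div_le_div_right (key.trans (SS_le f (u := h) (v := h) ⟨hpos.le, le_rfl⟩ ⟨hpos.le, le_rfl⟩)) _).trans ?_
    exact le_iSup₂_of_le h hpos (le_iSup₂_of_le h hpos le_rfl)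
  have hE : ∀ᵐ z : ℝ × ℝ, Tendsto (fun n => A n z.1 z.2) atTop (𝓝 (f z.1 z.2)) := by
    simp only [hA]; exact AV_tendsto hl
  have hE1 := Measure.ae_ae_of_ae_prod hE
  have hE2 : ∀ᵐ y : ℝ, ∀ᵐ x : ℝ, Tendsto (fun n => A n x y) atTop (𝓝 (f x y)) := by
    have := (Measure.measurePreserving_swap (μ := (volume : Measure ℝ)) (ν := (volume : Measure ℝ))).quasiMeasurePreserving.ae hE
    exact Measure.ae_ae_of_ae_prod this
  obtain ⟨y₀, hy₀⟩ := hE2.exists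
  obtain ⟨x₀, hx₀, hxy⟩ := (hE1.and hy₀).exists
  simp only at hx₀ hxy
  -- bounded
  obtain ⟨G, hG⟩ : ∃ G : ℕ → ℝ → ℝ → ℝ, G = fun n x y => A n x y - A n x₀ y - A n x y₀ + A n x₀ y₀ :=
    ⟨_, rfl⟩
  have hGper : ∀ n, BiPeriodic (G n) := fun n => by
    constructor
    · intro x y; simp only [hG, (hAper n).1]
    · intro x y; simp only [hG, (hAper n).2]
  have hGdiff : ∀ n a b c d, G n a c - G n a d - G n b c + G n b d =
      A n a c - A n a d - A n b c + A n b d := by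
    intro n a b c d; simp only [hG]; ring
  have hGnet : ∀ n, vp2 1 (G n) ≤ V := by
    intro k
    refine vp2_le _ _ fun m n x y h1 h2 h3 h4 => ?_
    simp only [hGdiff]
    exact (sum_le_vp2 (A k) h1 h2 h3 h4).trans (hAnet k)
  have hG0 : ∀ n y, G n x₀ y = 0 := by intro n y; simp only [hG]; ring
  have hG0' : ∀ n x, G n x y₀ = 0 := by intro n y; simp only [hG]; ring
  have hGb : ∀ n x y, |G n x y| ≤ V.toReal := by
    intro n x y
    obtain ⟨x', hx', hrx⟩ := per_rep x₀ x
    obtain ⟨y', hy', hry⟩ := per_rep y₀ y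
    have e : G n x y = G n x' y' :=
      (hrx (fun z => G n z y) (fun z => (hGper n).1 z y)).trans
        (hry (fun z => G n x' z) (fun z => (hGper n).2 x' z))
    rw [e]
    rcases eq_or_lt_of_le hx'.2 with h | h
    · rw [h, (hGper n).1, hG0]; simp
    rcases eq_or_lt_of_le hy'.2 with h' | h'
    · rw [h', (hGper n).2, hG0']; simp
    rw [← ENNReal.ofReal_le_iff_le_toReal hVt.ne]
    refine le_trans (ENNReal.ofReal_le_ofReal ?_) ((sum_le_vp2 (G n) (m := 2) (n := 2)
      (x := fun i => if i = 0 then x₀ else if i = 1 then x' else x₀ + 1)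
      (y := fun i => if i = 0 then y₀ else if i = 1 then y' else y₀ + 1) ?_ ?_ ?_ ?_).trans (hGnet n))
    · simp only [Finset.sum_range_succ, Finset.sum_range_zero]
      simp only [zero_add, if_true, one_ne_zero, if_false, hG0, hG0', sub_zero, add_zero]
      simp only [add_assoc]
      exact le_add_of_nonneg_right (by positivity)
    · intro i hi
      interval_cases i
      · simpa using hx'.1
      · simpa using h
    · simp
    · intro i hi
      interval_cases i
      · simpa using hy'.1
      · simpa using h'
    · simp
  have hex : ∀ x y, ∃ L, Tendsto (fun n => G n x y) (hyperfilter ℕ) (𝓝 L) := by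
    intro x y
    obtain ⟨L, -, hL⟩ := (isCompact_Icc (a := -V.toReal) (b := V.toReal)).ultrafilter_le_nhds
      ((hyperfilter ℕ).map (fun n => G n x y)) (by
        rw [le_principal_iff]
        exact Filter.mem_map.2 (Filter.univ_mem' fun n => abs_le.1 (hGb n x y)))
    exact ⟨L, hL⟩
  choose g hg using hex
  have hgper : BiPeriodic g := by
    constructor
    · intro x y
      refine tendsto_nhds_unique (hg (x+1) y) ?_
      simp only [(hGper _).1]; exact hg x y
    · intro x y
      refine tendsto_nhds_unique (hg x (y+1)) ?_
      simp only [(hGper _).2]; exact hg x y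
  have hgV : vp2 1 g ≤ V := by
    refine vp2_le _ _ fun m n x y h1 h2 h3 h4 => ?_
    refine le_of_tendsto' (x := (hyperfilter ℕ : Filter ℕ)) (ENNReal.tendsto_ofReal (tendsto_finsetSum _ fun i _ =>
      tendsto_finsetSum _ fun j _ => ((((hg _ _).sub (hg _ _)).sub (hg _ _)).add (hg _ _)).abs)) fun k => ?_
    exact (sum_le_vp2 (G k) h1 h2 h3 h4).trans (hGnet k)
  have hg0 : ∀ y, g x₀ y = 0 := fun y => by
    refine tendsto_nhds_unique (hg x₀ y) ?_
    simp only [hG0]; exact tendsto_const_nhds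
  have hg0' : ∀ x, g x y₀ = 0 := fun x => by
    refine tendsto_nhds_unique (hg x y₀) ?_
    simp only [hG0']; exact tendsto_const_nhds
  have hgt := hgV.trans_lt hVt
  have hae : ∀ᵐ z : ℝ × ℝ ∂volume, f z.1 z.2 = g z.1 z.2 + f z.1 y₀ + (f x₀ z.2 - f x₀ y₀) := by
    have q1 := (Measure.quasiMeasurePreserving_fst (μ := (volume : Measure ℝ)) (ν := (volume : Measure ℝ))).ae hy₀
    have q2 := (Measure.quasiMeasurePreserving_snd (μ := (volume : Measure ℝ)) (ν := (volume : Measure ℝ))).ae hx₀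
    filter_upwards [hE, q1, q2] with z z1 z2 z3
    have t := (((z1.sub z3).sub z2).add hxy).mono_left (Nat.hyperfilter_le_atTop)
    have t2 := hg z.1 z.2
    simp only [hG] at t2
    rw [tendsto_nhds_unique t2 t]
    ring
  refine ⟨g, fun x => f x y₀, fun y => f x₀ y - f x₀ y₀, hgper, ⟨hgt, ?_, ?_⟩, hae, le_antisymm hgV ?_⟩
  · exact hardy_sections hgper hgt x₀ hg0
  · exact hardy_sections (g := fun x y => g y x) ⟨fun x y => hgper.2 y x, fun x y => hgper.1 y x⟩
      ((vp2_swap_le g).trans_lt hgt) y₀ hg0'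
  · simp only [hV, iSup_le_iff]
    intro u hu v hv
    refine ENNReal.div_le_of_le_mul ?_
    rw [mixed_eq]
    simp only [iSup_le_iff]
    intro s hs t ht
    exact SS_bound (φ₁ := fun x => f x y₀) (φ₂ := fun y => f x₀ y - f x₀ y₀) hf.1 hf.2.1 M hM hae hu hv hs ht
end
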